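/- Let n = 20 and c ∈ ℝ. The quartic polynomial p(z) = 3125z⁴ − 83914629120000z³ + 429438995162964368031744z² + 1045471534388841527438982355353600z + 629847004905001626921946285352115240960000 has exactly two real roots β < γ, and the operator ((−Δ)⁵ + c|x|⁻¹⁰) with domain C₀^∞(ℝ²⁰∖{0}) is essentially self-adjoint in L²(ℝ²⁰; d²⁰x) if and only if c ∈ [0, β] ∪ [γ, ∞). -/

import Mathlib

open MeasureTheory

noncomputable section

/-- A densely defined operator `T` in a complex Hilbert space is *essentially self-adjoint*
if its adjoint `T*` is self-adjoint (equivalently, its closure is self-adjoint). -/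
def EssentiallySelfAdjoint {H : Type*} [NormedAddCommGroup H] [InnerProductSpace ℂ H]
    [CompleteSpace H] (T : H →ₗ.[ℂ] H) : Prop :=
  Dense (T.domain : Set H) ∧ IsSelfAdjoint T.adjoint

/-- The Laplacian of `f : ℝⁿ → ℂ`. -/
def laplacian {n : ℕ} (f : EuclideanSpace ℝ (Fin n) → ℂ) (x : EuclideanSpace ℝ (Fin n)) : ℂ :=
  ∑ i : Fin n, fderiv ℝ (fun y => fderiv ℝ f y (EuclideanSpace.single i (1:ℝ))) x
    (EuclideanSpace.single i (1:ℝ))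

/-- The graph of the operator given by the formal differential expression `L` with domain
`C₀^∞(ℝⁿ \ {0})`, as a subspace of `L²(ℝⁿ) × L²(ℝⁿ)`. -/
def graphOf (n : ℕ) (L : (EuclideanSpace ℝ (Fin n) → ℂ) → (EuclideanSpace ℝ (Fin n) → ℂ)) :
    Submodule ℂ (Lp ℂ 2 (volume : Measure (EuclideanSpace ℝ (Fin n))) ×
      Lp ℂ 2 (volume : Measure (EuclideanSpace ℝ (Fin n)))) :=
  Submodule.span ℂ {p | ∃ φ : EuclideanSpace ℝ (Fin n) → ℂ,
    ContDiff ℝ (⊤ : ℕ∞) φ ∧ HasCompactSupport φ ∧ (0 : EuclideanSpace ℝ (Fin n)) ∉ tsupport φ ∧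
    (p.1 : EuclideanSpace ℝ (Fin n) → ℂ) =ᵐ[volume] φ ∧
    (p.2 : EuclideanSpace ℝ (Fin n) → ℂ) =ᵐ[volume] L φ}

/-- The operator in `L²(ℝⁿ)` given by the formal differential expression `L` with domain
`C₀^∞(ℝⁿ \ {0})`. -/
def opOn (n : ℕ) (L : (EuclideanSpace ℝ (Fin n) → ℂ) → (EuclideanSpace ℝ (Fin n) → ℂ)) :
    Lp ℂ 2 (volume : Measure (EuclideanSpace ℝ (Fin n))) →ₗ.[ℂ]
      Lp ℂ 2 (volume : Measure (EuclideanSpace ℝ (Fin n))) :=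
  (graphOf n L).toLinearPMap

/-- The negative Laplacian `-Δ`. -/
def negLap {n : ℕ} (f : EuclideanSpace ℝ (Fin n) → ℂ) : EuclideanSpace ℝ (Fin n) → ℂ :=
  fun x => -laplacian f x

/-- The operator `(-Δ)⁵ + c|x|⁻¹⁰` with domain `C₀^∞(ℝ²⁰ \ {0})` in `L²(ℝ²⁰)`. -/
def T5op (c : ℝ) :
    Lp ℂ 2 (volume : Measure (EuclideanSpace ℝ (Fin 20))) →ₗ.[ℂ]
      Lp ℂ 2 (volume : Measure (EuclideanSpace ℝ (Fin 20))) :=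
  opOn 20 (fun φ x => negLap^[5] φ x + ((c * (‖x‖ ^ 10)⁻¹ : ℝ) : ℂ) * φ x)

/-- The quartic polynomial from Theorem 4.3. -/
def quartic (z : ℝ) : ℝ :=
  3125 * z ^ 4 - 83914629120000 * z ^ 3 + 429438995162964368031744 * z ^ 2 +
    1045471534388841527438982355353600 * z +
    629847004905001626921946285352115240960000

/-!
If `p` is homogeneous of degree `k`, then `(-Δ)ᵐ + c|x|⁻²ᵐ` acts on `G (log |x|) p(x)`, up to terms
with polynomials of lower degree and up to powers of `|x|`, by applying to `G` a polynomial in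
`d/dt`, `t = log |x|`. After conjugation with a power of `|x|` this polynomial is the symbol
`Q(w) = ∏ⱼ ((k + n/2 - m + 2j)² - w²) + c`. Essential self-adjointness in `L²(ℝⁿ)` depends on the
roots of the symbols in the strip `|Re w| < m`.

* Suppose that no symbol has a root there, and that `U` is orthogonal to the range of the operator
  shifted by `±i`. The component of `U` along `p` corresponds to `F ∈ L²(ℝ)` such that
  `Q(d/dt) y = ∓i e²ᵐᵗ y` weakly for `y = e⁻ᵐᵗ F`. After mollification `y` is square integrable with
  all its derivatives, by the position of the roots, and since `⟨Q(d/dt) y, y⟩` is real, `F = 0`.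
  By induction on the degree `U` is orthogonal to all `G (log |x|) p(x)`, which approximate all test
  functions.
* If `w` is a root for `k = 0` in the strip, of multiplicity `j + 1`, then the radial functions
  belonging to `e^{wt} tʲ` and `e^{-w̄t}`, cut off near infinity, are in the domain of the adjoint,
  and the adjoint is not symmetric on them.

For `n = 20` and `m = 5` the symbols with `k ≥ 1` have roots in the strip only if `c < 0`, in which
case the symbol with `k = 0` has one as well. For `k = 0` and `c > 0`, a root lies on the boundary
`|Re w| = 5` only if the quartic vanishes at `c`, so the existence of a root inside can change only
at `β` and `γ`. There is no root inside for small `c` and for large `c`, and there is one for some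
`c > 0`.
-/

open Filter Topology
open Polynomial (aeval)
open scoped InnerProductSpace ENNReal

section Criterion

variable {H : Type*} [NormedAddCommGroup H] [InnerProductSpace ℂ H]

lemma norm_sub_I_smul_sq {x y : H} (h : ⟪y, x⟫_ℂ = ⟪x, y⟫_ℂ) :
    ‖y - Complex.I • x‖ ^ 2 = ‖y‖ ^ 2 + ‖x‖ ^ 2 := by
  have him : (⟪y, x⟫_ℂ).im = 0 := by
    rw [← Complex.conj_eq_iff_im, inner_conj_symm, h]
  rw [norm_sub_sq (𝕜 := ℂ), inner_smul_right, norm_smul, Complex.norm_I, one_mul]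
  simp [him]

variable {T : H →ₗ.[ℂ] H}

lemma norm_le_norm_sub_I_smul (hs : T.IsFormalAdjoint T) (x : T.domain) :
    ‖(x : H)‖ ≤ ‖T x - Complex.I • (x : H)‖ := by
  have h := norm_sub_I_smul_sq (hs x x)
  exact le_of_sq_le_sq (by nlinarith [sq_nonneg ‖T x‖]) (norm_nonneg _)

variable [CompleteSpace H]

lemma exists_tendsto_apply_of_dense_range_sub_I_smul (hs : T.IsFormalAdjoint T)
    (hm : ∀ u : H, (∀ x : T.domain, ⟪u, T x - Complex.I • (x : H)⟫_ℂ = 0) → u = 0) (w : H) :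
    ∃ (z : ℕ → T.domain) (x : H), Tendsto (fun n => (z n : H)) atTop (𝓝 x) ∧
      Tendsto (fun n => T (z n)) atTop (𝓝 (w + Complex.I • x)) := by
  let A : T.domain →ₗ[ℂ] H := T.toFun - Complex.I • T.domain.subtype
  have hA (x : T.domain) : A x = T x - Complex.I • (x : H) := rfl
  have hdense : Dense (LinearMap.range A : Set H) := by
    rw [Submodule.dense_iff_topologicalClosure_eq_top,
      Submodule.topologicalClosure_eq_top_iff, Submodule.eq_bot_iff]
    intro u hu
    rw [Submodule.mem_orthogonal'] at hu
    exact hm u fun x => hu _ ⟨x, rfl⟩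
  obtain ⟨a, ha, hlim⟩ := mem_closure_iff_seq_limit.mp (hdense w)
  choose z hz using ha
  have hcauchy : CauchySeq fun n => (z n : H) := by
    refine Metric.cauchySeq_iff.2 fun ε hε => ?_
    obtain ⟨N, hN⟩ := Metric.cauchySeq_iff.1 hlim.cauchySeq ε hε
    refine ⟨N, fun i hi j hj => lt_of_le_of_lt ?_ (hN i hi j hj)⟩
    rw [dist_eq_norm, dist_eq_norm, ← hz i, ← hz j, ← map_sub, hA,
      ← AddSubgroupClass.coe_sub]
    exact norm_le_norm_sub_I_smul hs _
  obtain ⟨x, hx⟩ := cauchySeq_tendsto_of_complete hcauchy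
  refine ⟨z, x, hx, (hlim.add (hx.const_smul Complex.I)).congr fun n => ?_⟩
  rw [← hz n, hA, sub_add_cancel]

lemma exists_tendsto_adjoint (hd : Dense (T.domain : Set H)) (hs : T.IsFormalAdjoint T)
    (hp : ∀ u : H, (∀ x : T.domain, ⟪u, T x + Complex.I • (x : H)⟫_ℂ = 0) → u = 0)
    (hm : ∀ u : H, (∀ x : T.domain, ⟪u, T x - Complex.I • (x : H)⟫_ℂ = 0) → u = 0)
    (u : T.adjoint.domain) :
    ∃ z : ℕ → T.domain, Tendsto (fun n => (z n : H)) atTop (𝓝 (u : H)) ∧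
      Tendsto (fun n => T (z n)) atTop (𝓝 (T.adjoint u)) := by
  obtain ⟨z, x, hx, hT⟩ := exists_tendsto_apply_of_dense_range_sub_I_smul hs hm
    (T.adjoint u - Complex.I • (u : H))
  -- `u - x` lies in the kernel of `T* - i`, which is trivial by `hp`.
  have hxu : (u : H) - x = 0 := by
    refine hp _ fun v => ?_
    have hu : ⟪T.adjoint u, (v : H)⟫_ℂ = ⟪(u : H), T v⟫_ℂ := T.adjoint_isFormalAdjoint hd u v
    have hlim : ⟪T.adjoint u - Complex.I • (u : H) + Complex.I • x, (v : H)⟫_ℂ = ⟪x, T v⟫_ℂ :=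
      tendsto_nhds_unique (hT.inner tendsto_const_nhds)
        ((hx.inner tendsto_const_nhds).congr fun n => (hs (z n) v).symm)
    simp only [inner_sub_left, inner_add_left, inner_add_right, inner_smul_left, inner_smul_right,
      Complex.conj_I, hu] at hlim ⊢
    linear_combination hlim
  obtain rfl : (u : H) = x := sub_eq_zero.mp hxu
  exact ⟨z, hx, by simpa using hT⟩

theorem essentiallySelfAdjoint_of_forall_eq_zero (hd : Dense (T.domain : Set H))
    (hs : T.IsFormalAdjoint T)
    (hp : ∀ u : H, (∀ x : T.domain, ⟪u, T x + Complex.I • (x : H)⟫_ℂ = 0) → u = 0)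
    (hm : ∀ u : H, (∀ x : T.domain, ⟪u, T x - Complex.I • (x : H)⟫_ℂ = 0) → u = 0) :
    EssentiallySelfAdjoint T := by
  have hle : T ≤ T.adjoint := hs.le_adjoint hd
  have hd' : Dense (T.adjoint.domain : Set H) := hd.mono hle.1
  refine ⟨hd, LinearPMap.isSelfAdjoint_def.2 (le_antisymm ?_ ?_)⟩
  · refine LinearPMap.IsFormalAdjoint.le_adjoint hd fun x y => ?_
    have hyx := T.adjoint.adjoint_isFormalAdjoint hd' y ⟨x, hle.1 x.2⟩
    rw [hle.2 (x := x) (y := ⟨x, hle.1 x.2⟩) rfl, ← inner_conj_symm, ← hyx, inner_conj_symm]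
  · refine LinearPMap.IsFormalAdjoint.le_adjoint hd' fun u v => ?_
    obtain ⟨z, hz, hTz⟩ := exists_tendsto_adjoint hd hs hp hm u
    refine tendsto_nhds_unique (hTz.inner tendsto_const_nhds)
      ((hz.inner tendsto_const_nhds).congr fun n => ?_)
    rw [← inner_conj_symm, T.adjoint_isFormalAdjoint hd v (z n), inner_conj_symm]

theorem EssentiallySelfAdjoint.inner_eq (h : EssentiallySelfAdjoint T) {u u' v v' : H}
    (hu : ∀ x : T.domain, ⟪u', (x : H)⟫_ℂ = ⟪u, T x⟫_ℂ)
    (hv : ∀ x : T.domain, ⟪v', (x : H)⟫_ℂ = ⟪v, T x⟫_ℂ) : ⟪u', v⟫_ℂ = ⟪u, v'⟫_ℂ := by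
  have mu : u ∈ T.adjoint.domain := LinearPMap.mem_adjoint_domain_of_exists _ ⟨u', hu⟩
  have mv : v ∈ T.adjoint.domain := LinearPMap.mem_adjoint_domain_of_exists _ ⟨v', hv⟩
  have hf : T.adjoint.IsFormalAdjoint T.adjoint := by
    have := T.adjoint.adjoint_isFormalAdjoint (IsSelfAdjoint.dense_domain h.2)
    rwa [LinearPMap.isSelfAdjoint_def.mp h.2] at this
  have := hf ⟨u, mu⟩ ⟨v, mv⟩
  rwa [LinearPMap.adjoint_apply_eq h.1 _ hu, LinearPMap.adjoint_apply_eq h.1 _ hv] at this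

end Criterion

local notation "𝓔" n:max => EuclideanSpace ℝ (Fin n)

local notation "𝓛²" n:max => Lp ℂ 2 (volume : Measure (EuclideanSpace ℝ (Fin n)))

section TestFunctions

variable {n m : ℕ}

/-- Test functions on the punctured space: the class `C₀^∞(ℝⁿ \ {0})`, realised as functions on
all of `ℝⁿ` whose support is compact and avoids the origin. -/
structure IsTest (φ : 𝓔 n → ℂ) : Prop where
  smooth : ContDiff ℝ (⊤ : ℕ∞) φ
  compact : HasCompactSupport φ
  zero_notMem : (0 : 𝓔 n) ∉ tsupport φ

namespace IsTest

variable {φ ψ : 𝓔 n → ℂ}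

lemma mono (h : IsTest φ) (hs : ContDiff ℝ (⊤ : ℕ∞) ψ) (ht : tsupport ψ ⊆ tsupport φ) :
    IsTest ψ :=
  ⟨hs, h.compact.of_isClosed_subset (isClosed_tsupport _) ht, fun h0 => h.zero_notMem (ht h0)⟩

lemma zero : IsTest (0 : 𝓔 n → ℂ) :=
  ⟨contDiff_const, HasCompactSupport.zero, by simp [tsupport]⟩

lemma add (h : IsTest φ) (h' : IsTest ψ) : IsTest (φ + ψ) :=
  ⟨h.smooth.add h'.smooth, h.compact.add h'.compact, fun h0 =>
    (tsupport_add φ ψ h0).elim h.zero_notMem h'.zero_notMem⟩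

lemma mul_left (h : IsTest φ) {a : 𝓔 n → ℂ} (ha : ∀ x ≠ 0, ContDiffAt ℝ (⊤ : ℕ∞) a x) :
    IsTest (fun x => a x * φ x) := by
  refine h.mono (contDiff_iff_contDiffAt.2 fun x => ?_) tsupport_mul_subset_right
  rcases eq_or_ne x 0 with rfl | hx
  · refine (contDiffAt_const (c := (0 : ℂ))).congr_of_eventuallyEq ?_
    filter_upwards [notMem_tsupport_iff_eventuallyEq.1 h.zero_notMem] with y hy
    simp [hy]
  · exact (ha x hx).mul h.smooth.contDiffAt

lemma smul (h : IsTest φ) (a : ℂ) : IsTest (a • φ) :=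
  h.mul_left (a := fun _ => a) fun _ _ => contDiffAt_const

lemma conj (h : IsTest φ) : IsTest (fun x => starRingEnd ℂ (φ x)) :=
  h.mono (Complex.conjCLE.contDiff.comp h.smooth)
    (closure_mono fun x hx hx' => hx (by simp [hx']))

lemma mul (h : IsTest φ) (h' : IsTest ψ) : IsTest (fun x => φ x * ψ x) :=
  h'.mul_left fun _ _ => h.smooth.contDiffAt

lemma sum {ι : Type*} (s : Finset ι) {f : ι → 𝓔 n → ℂ} (h : ∀ i ∈ s, IsTest (f i)) :
    IsTest (∑ i ∈ s, f i) :=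
  Finset.sum_induction f IsTest (fun _ _ => add) zero h

lemma fderiv_apply (h : IsTest φ) (v : 𝓔 n) : IsTest (fun x => fderiv ℝ φ x v) :=
  h.mono ((h.smooth.fderiv_right (by simp)).clm_apply contDiff_const)
    (tsupport_fderiv_apply_subset ℝ v)

lemma laplacian (h : IsTest φ) : IsTest (laplacian φ) := by
  convert sum Finset.univ fun i _ => (h.fderiv_apply (EuclideanSpace.single i (1 : ℝ))).fderiv_apply
    (EuclideanSpace.single i (1 : ℝ)) using 1
  ext x
  simp [_root_.laplacian]

lemma negLap (h : IsTest φ) : IsTest (negLap φ) := by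
  convert h.laplacian.smul (-1) using 1
  ext x
  simp [_root_.negLap]

lemma iterate_negLap (h : IsTest φ) (m : ℕ) : IsTest (_root_.negLap^[m] φ) :=
  Function.Iterate.rec IsTest h (fun _ => negLap) m

lemma differentiable (h : IsTest φ) : Differentiable ℝ φ := h.smooth.differentiable (by simp)

lemma contDiffAt_two (h : IsTest φ) {x : 𝓔 n} : ContDiffAt ℝ 2 φ x :=
  (contDiff_infty.1 h.smooth 2).contDiffAt

lemma continuous (h : IsTest φ) : Continuous φ := h.smooth.continuous

lemma memLp (h : IsTest φ) (p : ℝ≥0∞) : MemLp φ p volume :=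
  h.continuous.memLp_of_hasCompactSupport h.compact

lemma integrable (h : IsTest φ) : Integrable φ := memLp_one_iff_integrable.1 (h.memLp 1)

lemma integrable_mul_left (h : IsTest φ) {U : 𝓔 n → ℂ} (hU : MemLp U 2) :
    Integrable fun x => U x * φ x :=
  MemLp.integrable_mul hU (h.memLp 2)

end IsTest

variable {φ ψ : 𝓔 n → ℂ}

lemma laplacian_eq_innerProductSpace {x : 𝓔 n} (h : ContDiffAt ℝ 2 φ x) :
    laplacian φ x = Laplacian.laplacian φ x := by
  have hd : DifferentiableAt ℝ (fderiv ℝ φ) x :=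
    (h.fderiv_right (m := 1) (by norm_num)).differentiableAt (by norm_num)
  rw [InnerProductSpace.laplacian_eq_iteratedFDeriv_orthonormalBasis φ
    (EuclideanSpace.basisFun (Fin n) ℝ), laplacian]
  refine Finset.sum_congr rfl fun i _ => ?_
  rw [iteratedFDeriv_two_apply, fderiv_clm_apply hd (differentiableAt_const _)]
  simp

lemma negLap_add (h : IsTest φ) (h' : IsTest ψ) : negLap (φ + ψ) = negLap φ + negLap ψ := by
  ext x
  simp only [negLap, Pi.add_apply, laplacian_eq_innerProductSpace (h.add h').contDiffAt_two,
    laplacian_eq_innerProductSpace h.contDiffAt_two,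
    laplacian_eq_innerProductSpace h'.contDiffAt_two,
    h.contDiffAt_two.laplacian_add h'.contDiffAt_two, neg_add]

lemma negLap_smul (h : IsTest φ) (a : ℂ) : negLap (a • φ) = a • negLap φ := by
  ext x
  simp only [negLap, Pi.smul_apply, laplacian_eq_innerProductSpace (h.smul a).contDiffAt_two,
    laplacian_eq_innerProductSpace h.contDiffAt_two,
    InnerProductSpace.laplacian_smul a h.contDiffAt_two, smul_neg]

lemma negLap_conj (h : IsTest φ) :
    negLap (fun x => starRingEnd ℂ (φ x)) = fun x => starRingEnd ℂ (negLap φ x) := by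
  ext x
  have := congrFun (InnerProductSpace.laplacian_CLE_comp_left (f := φ) (l := Complex.conjCLE)) x
  rw [negLap, negLap, laplacian_eq_innerProductSpace h.conj.contDiffAt_two,
    laplacian_eq_innerProductSpace h.contDiffAt_two, map_neg]
  exact congrArg Neg.neg this

lemma iterate_negLap_add (h : IsTest φ) (h' : IsTest ψ) (m : ℕ) :
    negLap^[m] (φ + ψ) = negLap^[m] φ + negLap^[m] ψ := by
  induction m generalizing φ ψ with
  | zero => rfl
  | succ m ih => rw [Function.iterate_succ_apply, negLap_add h h', ih h.negLap h'.negLap]; rfl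

lemma iterate_negLap_smul (h : IsTest φ) (a : ℂ) (m : ℕ) :
    negLap^[m] (a • φ) = a • negLap^[m] φ := by
  induction m generalizing φ with
  | zero => rfl
  | succ m ih => rw [Function.iterate_succ_apply, negLap_smul h, ih h.negLap]; rfl

lemma iterate_negLap_conj (h : IsTest φ) (m : ℕ) :
    negLap^[m] (fun x => starRingEnd ℂ (φ x)) = fun x => starRingEnd ℂ (negLap^[m] φ x) := by
  induction m generalizing φ with
  | zero => rfl
  | succ m ih => rw [Function.iterate_succ_apply, negLap_conj h, ih h.negLap]; rfl

lemma integral_mul_fderiv_apply (h : IsTest φ) (h' : IsTest ψ) (v : 𝓔 n) :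
    ∫ x, φ x * fderiv ℝ ψ x v = -∫ x, fderiv ℝ φ x v * ψ x :=
  integral_mul_fderiv_eq_neg_fderiv_mul_of_integrable
    ((h.fderiv_apply v).mul h').integrable (h.mul (h'.fderiv_apply v)).integrable
    (h.mul h').integrable (fun x _ => h.differentiable x) (fun x _ => h'.differentiable x)

lemma integral_negLap_mul (h : IsTest φ) (h' : IsTest ψ) :
    ∫ x, negLap φ x * ψ x = ∫ x, φ x * negLap ψ x := by
  simp only [negLap, laplacian, neg_mul, mul_neg, integral_neg, Finset.sum_mul, Finset.mul_sum]
  rw [integral_finsetSum _ fun i _ => (h.mul ((h'.fderiv_apply _).fderiv_apply _)).integrable,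
    integral_finsetSum _ fun i _ => (((h.fderiv_apply _).fderiv_apply _).mul h').integrable]
  refine congrArg Neg.neg (Finset.sum_congr rfl fun i _ => ?_)
  rw [integral_mul_fderiv_apply h (h'.fderiv_apply _),
    integral_mul_fderiv_apply (h.fderiv_apply _) h', neg_neg]

lemma integral_iterate_negLap_mul (h : IsTest φ) (h' : IsTest ψ) (m : ℕ) :
    ∫ x, negLap^[m] φ x * ψ x = ∫ x, φ x * negLap^[m] ψ x := by
  induction m generalizing φ ψ with
  | zero => rfl
  | succ m ih =>
    rw [Function.iterate_succ_apply, ih h.negLap h', integral_negLap_mul h (h'.iterate_negLap m),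
      Function.iterate_succ_apply']

/-- The formal differential expression `(-Δ)ᵐ + c|x|⁻²ᵐ`. At the origin the potential takes a junk
value, which is harmless since test functions vanish there. -/
def rellichExpr (m : ℕ) (c : ℝ) (φ : 𝓔 n → ℂ) : 𝓔 n → ℂ :=
  fun x => negLap^[m] φ x + ((c * (‖x‖ ^ (2 * m))⁻¹ : ℝ) : ℂ) * φ x

lemma IsTest.potential_mul (h : IsTest φ) (m : ℕ) (c : ℝ) :
    IsTest (fun x => ((c * (‖x‖ ^ (2 * m))⁻¹ : ℝ) : ℂ) * φ x) :=
  h.mul_left fun x hx => (Complex.ofRealCLM.contDiff (n := (⊤ : ℕ∞))).contDiffAt.comp x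
    (contDiffAt_const.mul (((contDiffAt_norm ℝ hx).pow _).inv (by simp [hx])))

lemma IsTest.rellichExpr (h : IsTest φ) (m : ℕ) (c : ℝ) : IsTest (rellichExpr m c φ) :=
  (h.iterate_negLap m).add (h.potential_mul m c)

lemma rellichExpr_add (h : IsTest φ) (h' : IsTest ψ) (c : ℝ) :
    rellichExpr m c (φ + ψ) = rellichExpr m c φ + rellichExpr m c ψ := by
  ext x
  simp only [rellichExpr, iterate_negLap_add h h', Pi.add_apply]
  ring

lemma rellichExpr_smul (h : IsTest φ) (c : ℝ) (a : ℂ) :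
    rellichExpr m c (a • φ) = a • rellichExpr m c φ := by
  ext x
  simp only [rellichExpr, iterate_negLap_smul h, Pi.smul_apply, smul_eq_mul]
  ring

lemma rellichExpr_zero (c : ℝ) : rellichExpr m c (0 : 𝓔 n → ℂ) = 0 := by
  simpa using rellichExpr_smul (m := m) (IsTest.zero (n := n)) c 0

lemma rellichExpr_conj (h : IsTest φ) (c : ℝ) :
    rellichExpr m c (fun x => starRingEnd ℂ (φ x)) =
      fun x => starRingEnd ℂ (rellichExpr m c φ x) := by
  ext x
  simp only [rellichExpr, iterate_negLap_conj h, map_add, map_mul, Complex.conj_ofReal]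

lemma integral_rellichExpr_mul (h : IsTest φ) (h' : IsTest ψ) (c : ℝ) :
    ∫ x, rellichExpr m c φ x * ψ x = ∫ x, φ x * rellichExpr m c ψ x := by
  simp only [rellichExpr, add_mul, mul_add]
  rw [integral_add ((h.iterate_negLap m).mul h').integrable
      ((h.potential_mul m c).mul h').integrable,
    integral_add (h.mul (h'.iterate_negLap m)).integrable
      (h.mul (h'.potential_mul m c)).integrable, integral_iterate_negLap_mul h h']
  congr 2
  ext x
  ring

lemma ae_eq_zero_of_forall_isTest [NeZero n] {f : 𝓔 n → ℂ} (hf : LocallyIntegrable f)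
    (h : ∀ φ, IsTest φ → ∫ x, f x * φ x = 0) : f =ᵐ[volume] 0 := by
  have hne : ∀ᵐ x : 𝓔 n, x ∈ ({0}ᶜ : Set (𝓔 n)) := by simp [ae_iff]
  have hopen : IsOpen ({0}ᶜ : Set (𝓔 n)) := isOpen_compl_singleton
  have hzero := hopen.ae_eq_zero_of_integral_contDiff_smul_eq_zero
    (μ := volume) (hf.locallyIntegrableOn _) fun g hg hc hs => by
      have ht : tsupport (fun x => (g x : ℂ)) ⊆ tsupport g :=
        closure_mono fun x hx hx' => hx (by simp [hx'])
      have hg' : IsTest (fun x => (g x : ℂ)) := ⟨Complex.ofRealCLM.contDiff.comp hg,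
        hc.of_isClosed_subset (isClosed_tsupport _) ht, fun h0 => hs (ht h0) rfl⟩
      simpa only [Complex.real_smul, mul_comm] using h _ hg'
  filter_upwards [hzero, hne] with x hx hx'
  exact hx hx'

end TestFunctions

section Operator

variable {n m : ℕ} {c : ℝ}

/-- The operator `(-Δ)ᵐ + c|x|⁻²ᵐ` with domain `C₀^∞(ℝⁿ \ {0})` in `L²(ℝⁿ)`; `T5op c` is the case
`n = 20`, `m = 5`. -/
def rellichOp (n m : ℕ) (c : ℝ) : 𝓛² n →ₗ.[ℂ] 𝓛² n :=
  opOn n (rellichExpr m c)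

lemma mem_graphOf_rellichExpr {p : 𝓛² n × 𝓛² n} :
    p ∈ graphOf n (rellichExpr m c) ↔ ∃ φ : 𝓔 n → ℂ, IsTest φ ∧ p.1 =ᵐ[volume] φ ∧
      p.2 =ᵐ[volume] rellichExpr m c φ := by
  refine ⟨fun hp => ?_, fun ⟨φ, hφ, h₁, h₂⟩ =>
    Submodule.subset_span ⟨φ, hφ.smooth, hφ.compact, hφ.zero_notMem, h₁, h₂⟩⟩
  induction hp using Submodule.span_induction with
  | mem p hp =>
    obtain ⟨φ, hs, hc, h0, h₁, h₂⟩ := hp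
    exact ⟨φ, ⟨hs, hc, h0⟩, h₁, h₂⟩
  | zero =>
    refine ⟨0, IsTest.zero, Lp.coeFn_zero _ _ _, ?_⟩
    rw [rellichExpr_zero]
    exact Lp.coeFn_zero _ _ _
  | add p q _ _ hp hq =>
    obtain ⟨φ, hφ, h₁, h₂⟩ := hp
    obtain ⟨ψ, hψ, k₁, k₂⟩ := hq
    refine ⟨φ + ψ, hφ.add hψ, (Lp.coeFn_add _ _).trans (h₁.add k₁), ?_⟩
    rw [rellichExpr_add hφ hψ]
    exact (Lp.coeFn_add _ _).trans (h₂.add k₂)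
  | smul a p _ hp =>
    obtain ⟨φ, hφ, h₁, h₂⟩ := hp
    refine ⟨a • φ, hφ.smul a, (Lp.coeFn_smul _ _).trans (h₁.const_smul a), ?_⟩
    rw [rellichExpr_smul hφ]
    exact (Lp.coeFn_smul _ _).trans (h₂.const_smul a)

lemma snd_eq_zero_of_mem_graphOf_rellichExpr :
    ∀ p ∈ graphOf n (rellichExpr m c), p.1 = 0 → p.2 = 0 := by
  intro p hp h0
  obtain ⟨φ, hφ, h₁, h₂⟩ := mem_graphOf_rellichExpr.1 hp
  obtain rfl : φ = 0 := by
    refine (Continuous.ae_eq_iff_eq volume hφ.continuous continuous_zero).1 (h₁.symm.trans ?_)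
    rw [h0]
    exact Lp.coeFn_zero _ _ _
  rw [rellichExpr_zero] at h₂
  exact Lp.eq_zero_iff_ae_eq_zero.2 h₂

lemma exists_isTest_ae_eq_rellichOp (x : (rellichOp n m c).domain) :
    ∃ φ : 𝓔 n → ℂ, IsTest φ ∧ (x : 𝓛² n) =ᵐ[volume] φ ∧
      rellichOp n m c x =ᵐ[volume] rellichExpr m c φ :=
  mem_graphOf_rellichExpr.1
    (Submodule.mem_graph_toLinearPMap snd_eq_zero_of_mem_graphOf_rellichExpr x)

lemma IsTest.exists_rellichOp_ae_eq {φ : 𝓔 n → ℂ} (h : IsTest φ) (m : ℕ) (c : ℝ) :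
    ∃ x : (rellichOp n m c).domain, (x : 𝓛² n) =ᵐ[volume] φ ∧
      rellichOp n m c x =ᵐ[volume] _root_.rellichExpr m c φ := by
  have hL := (h.rellichExpr m c).memLp 2
  have hmem : ((h.memLp 2).toLp φ, hL.toLp _) ∈ graphOf n (_root_.rellichExpr m c) :=
    mem_graphOf_rellichExpr.2 ⟨φ, h, (h.memLp 2).coeFn_toLp, hL.coeFn_toLp⟩
  rw [← Submodule.toLinearPMap_graph_eq _ snd_eq_zero_of_mem_graphOf_rellichExpr,
    LinearPMap.mem_graph_iff] at hmem
  obtain ⟨x, hx, hx'⟩ := hmem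
  refine ⟨x, hx ▸ (h.memLp 2).coeFn_toLp, ?_⟩
  exact (congrArg (fun v : 𝓛² n => (v : 𝓔 n → ℂ)) hx').eventuallyEq.trans hL.coeFn_toLp

lemma inner_eq_integral_conj_mul {α : Type*} [MeasurableSpace α] {μ : Measure α} {u v : Lp ℂ 2 μ}
    {f g : α → ℂ} (hf : u =ᵐ[μ] f) (hg : v =ᵐ[μ] g) :
    ⟪u, v⟫_ℂ = ∫ x, starRingEnd ℂ (f x) * g x ∂μ := by
  rw [L2.inner_def]
  refine integral_congr_ae ?_
  filter_upwards [hf, hg] with x h₁ h₂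
  rw [h₁, h₂, RCLike.inner_apply, mul_comm]

lemma eq_zero_of_conj_ae_eq_zero {α : Type*} [MeasurableSpace α] {μ : Measure α} {p : ℝ≥0∞}
    {u : Lp ℂ p μ} (h : (fun x => starRingEnd ℂ (u x)) =ᵐ[μ] 0) : u = 0 := by
  rw [Lp.eq_zero_iff_ae_eq_zero]
  filter_upwards [h] with x hx
  simpa using hx

lemma dense_domain_rellichOp [NeZero n] : Dense ((rellichOp n m c).domain : Set (𝓛² n)) := by
  rw [Submodule.dense_iff_topologicalClosure_eq_top, Submodule.topologicalClosure_eq_top_iff,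
    Submodule.eq_bot_iff]
  intro u hu
  rw [Submodule.mem_orthogonal'] at hu
  refine eq_zero_of_conj_ae_eq_zero (ae_eq_zero_of_forall_isTest
    (((Lp.memLp u).star).locallyIntegrable (by norm_num)) fun φ hφ => ?_)
  obtain ⟨x, hx, -⟩ := hφ.exists_rellichOp_ae_eq m c
  rw [← hu x x.2, inner_eq_integral_conj_mul (EventuallyEq.refl _ _) hx]

lemma isFormalAdjoint_rellichOp : (rellichOp n m c).IsFormalAdjoint (rellichOp n m c) := by
  intro x y
  obtain ⟨φ, hφ, h₁, h₂⟩ := exists_isTest_ae_eq_rellichOp x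
  obtain ⟨ψ, hψ, k₁, k₂⟩ := exists_isTest_ae_eq_rellichOp y
  rw [inner_eq_integral_conj_mul h₂ k₁, inner_eq_integral_conj_mul h₁ k₂,
    ← integral_rellichExpr_mul hφ.conj hψ c, rellichExpr_conj hφ]

theorem essentiallySelfAdjoint_rellichOp_of_forall_ae_eq_zero [NeZero n]
    (H : ∀ s : ℂ, s.re = 0 → s ≠ 0 → ∀ U : 𝓔 n → ℂ, MemLp U 2 →
      (∀ φ, IsTest φ → ∫ x, U x * (rellichExpr m c φ x + s * φ x) = 0) → U =ᵐ[volume] 0) :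
    EssentiallySelfAdjoint (rellichOp n m c) := by
  have key (s : ℂ) (hs : s.re = 0) (hs0 : s ≠ 0) (u : 𝓛² n)
      (hu : ∀ x : (rellichOp n m c).domain, ⟪u, rellichOp n m c x + s • (x : 𝓛² n)⟫_ℂ = 0) :
      u = 0 := by
    refine eq_zero_of_conj_ae_eq_zero (H s hs hs0 _ ((Lp.memLp u).star) fun φ hφ => ?_)
    obtain ⟨x, hx, hx'⟩ := hφ.exists_rellichOp_ae_eq m c
    rw [← hu x]
    refine (inner_eq_integral_conj_mul (EventuallyEq.refl _ _) ?_).symm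
    exact (Lp.coeFn_add _ _).trans (hx'.add ((Lp.coeFn_smul _ _).trans (hx.const_smul s)))
  refine essentiallySelfAdjoint_of_forall_eq_zero dense_domain_rellichOp isFormalAdjoint_rellichOp
    (key Complex.I (by simp) (by simp)) fun u hu => ?_
  refine key (-Complex.I) (by simp) (by simp) u fun x => ?_
  rw [← hu x, neg_smul, sub_eq_add_neg]

theorem EssentiallySelfAdjoint.integral_eq (h : EssentiallySelfAdjoint (rellichOp n m c))
    {u u' v v' : 𝓔 n → ℂ} (hu : MemLp u 2) (hu' : MemLp u' 2) (hv : MemLp v 2) (hv' : MemLp v' 2)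
    (h₁ : ∀ φ, IsTest φ → ∫ x, u x * rellichExpr m c φ x = ∫ x, u' x * φ x)
    (h₂ : ∀ φ, IsTest φ → ∫ x, v x * rellichExpr m c φ x = ∫ x, v' x * φ x) :
    ∫ x, u' x * starRingEnd ℂ (v x) = ∫ x, u x * starRingEnd ℂ (v' x) := by
  have key {w w' : 𝓔 n → ℂ} (hw : MemLp w 2) (hw' : MemLp w' 2)
      (hT : ∀ φ, IsTest φ → ∫ x, w x * rellichExpr m c φ x = ∫ x, w' x * φ x)
      (x : (rellichOp n m c).domain) :
      ⟪hw'.star.toLp, (x : 𝓛² n)⟫_ℂ = ⟪hw.star.toLp, rellichOp n m c x⟫_ℂ := by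
    obtain ⟨φ, hφ, k₁, k₂⟩ := exists_isTest_ae_eq_rellichOp x
    rw [inner_eq_integral_conj_mul hw'.star.coeFn_toLp k₁,
      inner_eq_integral_conj_mul hw.star.coeFn_toLp k₂]
    simpa using (hT φ hφ).symm
  have := h.inner_eq (key hu hu' h₁) (key hv hv' h₂)
  rw [inner_eq_integral_conj_mul hu'.star.coeFn_toLp hv.star.coeFn_toLp,
    inner_eq_integral_conj_mul hu.star.coeFn_toLp hv'.star.coeFn_toLp] at this
  simpa using this

end Operator

section SmoothFunctions

/-- The algebra of smooth functions `ℝ → ℂ`, on which the constant-coefficient differential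
operators below act. -/
def smoothFn : Subalgebra ℂ (ℝ → ℂ) where
  carrier := {f | ContDiff ℝ (⊤ : ℕ∞) f}
  mul_mem' hf hg := Set.mem_ofPred.2 ((Set.mem_ofPred.1 hf).mul (Set.mem_ofPred.1 hg))
  add_mem' hf hg := Set.mem_ofPred.2 ((Set.mem_ofPred.1 hf).add (Set.mem_ofPred.1 hg))
  algebraMap_mem' _ := Set.mem_ofPred.2 contDiff_const

namespace smoothFn

lemma mem_iff {f : ℝ → ℂ} : f ∈ smoothFn ↔ ContDiff ℝ (⊤ : ℕ∞) f := Set.mem_ofPred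

instance : CoeFun smoothFn fun _ => ℝ → ℂ := ⟨Subtype.val⟩

lemma contDiff (f : smoothFn) : ContDiff ℝ (⊤ : ℕ∞) f := mem_iff.1 f.2

lemma differentiable (f : smoothFn) : Differentiable ℝ f := (contDiff f).differentiable (by simp)

lemma continuous (f : smoothFn) : Continuous f := (contDiff f).continuous

/-- Differentiation on smooth functions. -/
def D : Module.End ℂ smoothFn where
  toFun f := ⟨deriv f, mem_iff.2 (contDiff_infty_iff_deriv.1 (contDiff f)).2⟩
  map_add' f g := Subtype.ext (funext fun t => deriv_add (differentiable f t) (differentiable g t))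
  map_smul' a f := Subtype.ext (funext fun t => deriv_const_smul a (differentiable f t))

/-- The exponential `t ↦ e^{at}`. -/
def expFn (a : ℂ) : smoothFn :=
  ⟨fun t => Complex.exp (a * t), mem_iff.2 (contDiff_const.mul Complex.ofRealCLM.contDiff).cexp⟩

variable {f g : smoothFn} {a b : ℂ} {t : ℝ} {P : Polynomial ℂ}

lemma D_apply : D f t = deriv f t := rfl

lemma expFn_apply : expFn a t = Complex.exp (a * t) := rfl

lemma hasDerivAt : HasDerivAt f (D f t) t := (differentiable f t).hasDerivAt

lemma D_mul : D (f * g) = D f * g + f * D g :=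
  Subtype.ext (funext fun t => deriv_mul (differentiable f t) (differentiable g t))

lemma D_expFn : D (expFn a) = a • expFn a := by
  ext t
  have h := ((Complex.ofRealCLM.hasDerivAt (x := t)).const_mul a).cexp
  simpa [D_apply, expFn, mul_comm] using h.deriv

lemma expFn_mul_expFn (a b : ℂ) : expFn a * expFn b = expFn (a + b) := by
  ext t
  simp [expFn_apply, add_mul, Complex.exp_add]

lemma expFn_mul_expFn_mul (a b : ℂ) (f : smoothFn) :
    expFn a * (expFn b * f) = expFn (a + b) * f := by
  rw [← mul_assoc, expFn_mul_expFn]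

lemma expFn_zero : expFn 0 = 1 := by
  ext t
  simp [expFn_apply]

lemma D_expFn_mul : D (expFn a * f) = expFn a * (D f + a • f) := by
  rw [D_mul, D_expFn, smul_mul_assoc, mul_add, mul_smul_comm, add_comm]

lemma aeval_X_mul (P : Polynomial ℂ) (f : smoothFn) :
    aeval D (Polynomial.X * P) f = D (aeval D P f) := by
  rw [map_mul, Polynomial.aeval_X, Module.End.mul_apply]

lemma aeval_expFn_mul (P : Polynomial ℂ) (a : ℂ) (f : smoothFn) :
    aeval D P (expFn a * f) =
      expFn a * aeval D (P.comp (Polynomial.X + Polynomial.C a)) f := by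
  induction P using Polynomial.induction_on with
  | C c => simp
  | add p q hp hq => simp only [map_add, LinearMap.add_apply, hp, hq, Polynomial.add_comp, mul_add]
  | monomial j c ih =>
    rw [pow_succ', mul_left_comm, aeval_X_mul, ih, D_expFn_mul, Polynomial.mul_comp .X,
      Polynomial.X_comp, add_mul, map_add, LinearMap.add_apply, aeval_X_mul,
      ← Polynomial.smul_eq_C_mul a, map_smul, LinearMap.smul_apply]

lemma aeval_congr (h : f =ᶠ[𝓝 t] g) : aeval D P f =ᶠ[𝓝 t] aeval D P g := by
  induction P using Polynomial.induction_on with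
  | C c =>
    filter_upwards [h] with s hs
    simp [hs]
  | add p q hp hq =>
    filter_upwards [hp, hq] with s h₁ h₂
    simp [h₁, h₂]
  | monomial j c ih =>
    rw [pow_succ', mul_left_comm, aeval_X_mul, aeval_X_mul]
    exact ih.deriv

lemma tsupport_aeval_subset : tsupport (aeval D P f) ⊆ tsupport f := by
  refine fun t ht => by_contra fun h => ?_
  have h₀ := aeval_congr (P := P) (g := 0) (notMem_tsupport_iff_eventuallyEq.1 h)
  rw [map_zero] at h₀
  exact notMem_tsupport_iff_eventuallyEq.2 h₀ ht

lemma hasCompactSupport_aeval (h : HasCompactSupport f) (P : Polynomial ℂ) :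
    HasCompactSupport (aeval D P f) :=
  h.of_isClosed_subset (isClosed_tsupport _) tsupport_aeval_subset

lemma hasCompactSupport_mul (h : HasCompactSupport g) (f : smoothFn) :
    HasCompactSupport (f * g : smoothFn) :=
  HasCompactSupport.mul_left h

end smoothFn

end SmoothFunctions

section RadialPolynomial

open smoothFn

variable {n : ℕ} {G H : smoothFn} {p q : MvPolynomial (Fin n) ℂ} {k : ℕ} {x : 𝓔 n}

/-- Evaluation of a complex polynomial at a point of `ℝⁿ`. -/
def evalPoly (p : MvPolynomial (Fin n) ℂ) (x : 𝓔 n) : ℂ :=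
  MvPolynomial.eval (fun i => (x i : ℂ)) p

lemma evalPoly_C (a : ℂ) : evalPoly (MvPolynomial.C a : MvPolynomial (Fin n) ℂ) = fun _ => a := by
  ext x
  simp [evalPoly]

lemma evalPoly_X (i : Fin n) : evalPoly (MvPolynomial.X i) x = x i := by simp [evalPoly]

lemma evalPoly_add (p q : MvPolynomial (Fin n) ℂ) :
    evalPoly (p + q) = evalPoly p + evalPoly q :=
  funext fun _ => map_add _ _ _

lemma evalPoly_mul (p q : MvPolynomial (Fin n) ℂ) :
    evalPoly (p * q) = evalPoly p * evalPoly q :=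
  funext fun _ => map_mul _ _ _

lemma evalPoly_sum {ι : Type*} (s : Finset ι) (p : ι → MvPolynomial (Fin n) ℂ) :
    evalPoly (∑ i ∈ s, p i) x = ∑ i ∈ s, evalPoly (p i) x :=
  map_sum _ _ _

lemma contDiff_evalPoly (p : MvPolynomial (Fin n) ℂ) : ContDiff ℝ (⊤ : ℕ∞) (evalPoly p) := by
  induction p using MvPolynomial.induction_on with
  | C a => exact evalPoly_C (n := n) a ▸ contDiff_const
  | add p q hp hq => exact evalPoly_add p q ▸ hp.add hq
  | mul_X p i hp =>
    rw [evalPoly_mul, show evalPoly (.X i) = fun x : 𝓔 n => (x i : ℂ) from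
      funext fun _ => evalPoly_X i]
    exact hp.mul (Complex.ofRealCLM.contDiff.comp
      (EuclideanSpace.proj (𝕜 := ℝ) i : 𝓔 n →L[ℝ] ℝ).contDiff)

lemma differentiable_evalPoly (p : MvPolynomial (Fin n) ℂ) : Differentiable ℝ (evalPoly p) :=
  (contDiff_evalPoly p).differentiable (by simp)

lemma fderiv_evalPoly_X (i j : Fin n) :
    fderiv ℝ (evalPoly (MvPolynomial.X j)) x (EuclideanSpace.single i 1) =
      evalPoly (MvPolynomial.pderiv i (MvPolynomial.X j)) x := by
  have h : evalPoly (MvPolynomial.X j) = (Complex.ofRealCLM.comp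
      (EuclideanSpace.proj (𝕜 := ℝ) j : 𝓔 n →L[ℝ] ℝ) : 𝓔 n → ℂ) := funext fun y => evalPoly_X j
  rw [h, ContinuousLinearMap.fderiv]
  rcases eq_or_ne i j with rfl | hij
  · simp [evalPoly]
  · simp [evalPoly, hij.symm]

lemma fderiv_evalPoly (p : MvPolynomial (Fin n) ℂ) (i : Fin n) :
    fderiv ℝ (evalPoly p) x (EuclideanSpace.single i 1) =
      evalPoly (MvPolynomial.pderiv i p) x := by
  induction p using MvPolynomial.induction_on with
  | C a => simp [evalPoly_C, evalPoly]
  | add p q hp hq =>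
    rw [evalPoly_add, fderiv_add (differentiable_evalPoly p x) (differentiable_evalPoly q x),
      add_apply, hp, hq, map_add, evalPoly_add, Pi.add_apply]
  | mul_X p j hp =>
    rw [evalPoly_mul, fderiv_mul (differentiable_evalPoly p x) (differentiable_evalPoly _ x),
      add_apply, smul_apply, smul_apply, hp, fderiv_evalPoly_X, MvPolynomial.pderiv_mul]
    simp [evalPoly]
    ring

lemma exists_norm_evalPoly_le (hp : p.IsHomogeneous k) :
    ∃ C : ℝ, ∀ x, ‖evalPoly p x‖ ≤ C * ‖x‖ ^ k := by
  refine ⟨∑ d ∈ p.support, ‖p.coeff d‖, fun x => ?_⟩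
  rw [evalPoly, MvPolynomial.eval_eq', Finset.sum_mul]
  refine norm_sum_le_of_le _ fun d hd => ?_
  have hk : ∑ i, d i = k := by
    rw [← hp (MvPolynomial.mem_support_iff.1 hd), Finsupp.weight_apply,
      Finsupp.sum_fintype _ _ (by simp)]
    simp
  rw [norm_mul, norm_prod, ← hk, ← Finset.prod_pow_eq_pow_sum]
  gcongr with i
  rw [norm_pow, Complex.norm_real]
  gcongr
  exact PiLp.norm_apply_le x i

/-- The function `x ↦ G (log |x|) p(x)`, extended by zero to the origin. -/
def radPoly (G : smoothFn) (p : MvPolynomial (Fin n) ℂ) (x : 𝓔 n) : ℂ :=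
  if x = 0 then 0 else G (Real.log ‖x‖) * evalPoly p x

lemma radPoly_zero (G : smoothFn) (p : MvPolynomial (Fin n) ℂ) : radPoly G p 0 = 0 := if_pos rfl

lemma radPoly_of_ne (hx : x ≠ 0) : radPoly G p x = G (Real.log ‖x‖) * evalPoly p x := if_neg hx

lemma radPoly_eventuallyEq (hx : x ≠ 0) :
    radPoly G p =ᶠ[𝓝 x] fun y => G (Real.log ‖y‖) * evalPoly p y := by
  filter_upwards [isOpen_ne.mem_nhds hx] with y hy
  exact radPoly_of_ne hy

lemma radPoly_zero_right (G : smoothFn) : radPoly G (0 : MvPolynomial (Fin n) ℂ) = 0 := by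
  ext x
  simp [radPoly, evalPoly]

lemma radPoly_add (G H : smoothFn) (p : MvPolynomial (Fin n) ℂ) :
    radPoly (G + H) p = radPoly G p + radPoly H p := by
  ext x
  rcases eq_or_ne x 0 with rfl | hx
  · simp [radPoly_zero]
  · simp [radPoly_of_ne hx, add_mul]

lemma radPoly_smul (a : ℂ) (G : smoothFn) (p : MvPolynomial (Fin n) ℂ) :
    radPoly (a • G) p = a • radPoly G p := by
  ext x
  rcases eq_or_ne x 0 with rfl | hx
  · simp [radPoly_zero]
  · simp [radPoly_of_ne hx, mul_assoc]

lemma measurable_radPoly (G : smoothFn) (p : MvPolynomial (Fin n) ℂ) :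
    Measurable (radPoly G p) := by
  have hG := (continuous G).measurable
  have hp := (contDiff_evalPoly p).continuous.measurable
  exact Measurable.ite (measurableSet_singleton 0) measurable_const (by fun_prop)

lemma contDiffAt_radPoly (hx : x ≠ 0) : ContDiffAt ℝ (⊤ : ℕ∞) (radPoly G p) x := by
  have hlog : ContDiffAt ℝ (⊤ : ℕ∞) (fun y : 𝓔 n => Real.log ‖y‖) x :=
    (contDiffAt_norm ℝ hx).log (by simpa using hx)
  exact (((contDiff G).contDiffAt.comp x hlog).mul
    (contDiff_evalPoly p).contDiffAt).congr_of_eventuallyEq (radPoly_eventuallyEq hx)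

lemma exists_tsupport_radPoly_subset (hG : HasCompactSupport G) (p : MvPolynomial (Fin n) ℂ) :
    ∃ R : ℝ, tsupport (radPoly G p) ⊆
      Metric.closedBall 0 (Real.exp R) \ Metric.ball 0 (Real.exp (-R)) := by
  obtain ⟨R, hR⟩ := hG.isCompact.isBounded.subset_closedBall 0
  refine ⟨R, closure_minimal (fun x hx => ?_)
    (Metric.isClosed_closedBall.sdiff Metric.isOpen_ball)⟩
  have hx₀ : x ≠ 0 := fun h => hx (if_pos h)
  rw [Function.mem_support, radPoly_of_ne hx₀] at hx
  have hlog := hR (subset_tsupport _ (left_ne_zero_of_mul hx))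
  rw [mem_closedBall_zero_iff, Real.norm_eq_abs, abs_le] at hlog
  have hpos : 0 < ‖x‖ := norm_pos_iff.2 hx₀
  rw [Set.mem_sdiff, mem_closedBall_zero_iff, mem_ball_zero_iff, not_lt]
  exact ⟨(Real.log_le_iff_le_exp hpos).1 hlog.2, (Real.le_log_iff_exp_le hpos).1 hlog.1⟩

lemma isTest_radPoly (hG : HasCompactSupport G) (p : MvPolynomial (Fin n) ℂ) :
    IsTest (radPoly G p) := by
  obtain ⟨R, hR⟩ := exists_tsupport_radPoly_subset hG p
  have h₀ : (0 : 𝓔 n) ∉ tsupport (radPoly G p) := fun h => (hR h).2 (by simp [Real.exp_pos])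
  refine ⟨contDiff_iff_contDiffAt.2 fun x => ?_, (isCompact_closedBall _ _).of_isClosed_subset
    (isClosed_tsupport _) (hR.trans Set.sdiff_subset), h₀⟩
  rcases eq_or_ne x 0 with rfl | hx
  · exact contDiffAt_const.congr_of_eventuallyEq (notMem_tsupport_iff_eventuallyEq.1 h₀)
  · exact contDiffAt_radPoly hx

lemma hasFDerivAt_log_norm (hx : x ≠ 0) :
    HasFDerivAt (fun y : 𝓔 n => Real.log ‖y‖) ((‖x‖ ^ 2)⁻¹ • innerSL ℝ x) x := by
  have h := ((hasStrictFDerivAt_norm_sq x).hasFDerivAt.log (by simpa using hx)).const_mul (1 / 2)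
  have hlog : (fun y : 𝓔 n => Real.log ‖y‖) = fun y => 1 / 2 * Real.log (‖y‖ ^ 2) := by
    ext y
    rw [Real.log_pow]
    push_cast
    ring
  rw [hlog]
  refine h.congr_fderiv ?_
  ext v
  simp
  ring

lemma exp_mul_log_norm (hx : x ≠ 0) (k : ℕ) :
    Complex.exp (k * (Real.log ‖x‖ : ℝ)) = (‖x‖ : ℂ) ^ k := by
  rw [Complex.exp_nat_mul, ← Complex.ofReal_exp, Real.exp_log (norm_pos_iff.2 hx)]

lemma exp_neg_mul_log_norm (hx : x ≠ 0) (k : ℕ) :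
    Complex.exp (-k * (Real.log ‖x‖ : ℝ)) = ((‖x‖ : ℂ) ^ k)⁻¹ := by
  rw [neg_mul, Complex.exp_neg, exp_mul_log_norm hx]

lemma fderiv_radPoly (hx : x ≠ 0) (i : Fin n) :
    fderiv ℝ (radPoly G p) x (EuclideanSpace.single i 1) =
      radPoly (expFn (-2) * D G) (MvPolynomial.X i * p) x +
        radPoly G (MvPolynomial.pderiv i p) x := by
  have h : HasFDerivAt (fun y => G (Real.log ‖y‖) * evalPoly p y) _ x :=
    (hasDerivAt.hasFDerivAt.comp x (hasFDerivAt_log_norm hx)).mul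
      (differentiable_evalPoly p x).hasFDerivAt
  have hexp := exp_neg_mul_log_norm hx 2
  rw [Nat.cast_ofNat] at hexp
  rw [(radPoly_eventuallyEq hx).fderiv_eq, h.fderiv, radPoly_of_ne hx, radPoly_of_ne hx]
  simp only [add_apply, smul_apply, fderiv_evalPoly, evalPoly_mul, Pi.mul_apply, evalPoly_X,
    MulMemClass.coe_mul, expFn_apply, hexp]
  simp [EuclideanSpace.inner_single_right]
  ring

end RadialPolynomial

section RadialLaplacian

open smoothFn

variable {n : ℕ} {G : smoothFn} {p : MvPolynomial (Fin n) ℂ} {k : ℕ} {x : 𝓔 n}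

/-- The Laplacian on polynomials. -/
def polyLap (p : MvPolynomial (Fin n) ℂ) : MvPolynomial (Fin n) ℂ :=
  ∑ i, MvPolynomial.pderiv i (MvPolynomial.pderiv i p)

lemma isHomogeneous_polyLap (hp : p.IsHomogeneous k) : (polyLap p).IsHomogeneous (k - 1 - 1) :=
  MvPolynomial.IsHomogeneous.sum _ _ _ fun _ _ => hp.pderiv.pderiv

lemma polyLap_eq_zero (hp : p.IsHomogeneous 0) : polyLap p = 0 := by
  rw [MvPolynomial.totalDegree_eq_zero_iff_eq_C.1 (Nat.le_zero.1 hp.totalDegree_le)]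
  simp [polyLap]

/-- The part of `-Δ` which acts on `G` alone in `-Δ (G (log |x|) p(x))`, where `p` is homogeneous
of degree `k`. -/
def negRadLap (n k : ℕ) (G : smoothFn) : smoothFn :=
  -(expFn (-2) * aeval D (Polynomial.X * (Polynomial.X + Polynomial.C (n - 2 + 2 * k : ℂ))) G)

lemma negRadLap_apply (t : ℝ) : negRadLap n k G t =
    -(Complex.exp (-2 * t) * (D (D G) t + (n - 2 + 2 * k) * D G t)) := by
  have h : aeval D (Polynomial.X * (Polynomial.X + Polynomial.C (n - 2 + 2 * k : ℂ))) G =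
      D (D G) + (n - 2 + 2 * k : ℂ) • D G := by
    rw [mul_add, mul_comm _ (Polynomial.C _), map_add, LinearMap.add_apply, aeval_X_mul,
      ← Polynomial.smul_eq_C_mul, map_smul]
    simp
  rw [negRadLap, h]
  rfl

lemma sum_evalPoly_X_mul_X_mul (hx : x ≠ 0) :
    ∑ i, evalPoly (MvPolynomial.X i * (MvPolynomial.X i * p)) x =
      Complex.exp (2 * (Real.log ‖x‖ : ℝ)) * evalPoly p x := by
  have h := exp_mul_log_norm hx 2
  rw [Nat.cast_ofNat] at h
  rw [h, ← Complex.ofReal_pow, EuclideanSpace.real_norm_sq_eq, Complex.ofReal_sum, Finset.sum_mul]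
  simp only [evalPoly_mul, Pi.mul_apply, evalPoly_X, Complex.ofReal_mul, sq, mul_assoc]

lemma sum_evalPoly_X_mul_pderiv (hp : p.IsHomogeneous k) :
    ∑ i, evalPoly (MvPolynomial.X i * MvPolynomial.pderiv i p) x = k * evalPoly p x := by
  rw [← evalPoly_sum, hp.sum_X_mul_pderiv]
  simp [evalPoly]

lemma sum_evalPoly_pderiv_X_mul (hp : p.IsHomogeneous k) :
    ∑ i, evalPoly (MvPolynomial.pderiv i (MvPolynomial.X i * p)) x = (n + k) * evalPoly p x := by
  have h (i : Fin n) : evalPoly (MvPolynomial.pderiv i (MvPolynomial.X i * p)) x =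
      evalPoly p x + evalPoly (MvPolynomial.X i * MvPolynomial.pderiv i p) x := by
    simp [evalPoly, add_comm]
  simp only [h, Finset.sum_add_distrib, sum_evalPoly_X_mul_pderiv hp]
  simp [add_mul]

lemma fderiv_fderiv_radPoly (hx : x ≠ 0) (i : Fin n) :
    fderiv ℝ (fun y => fderiv ℝ (radPoly G p) y (EuclideanSpace.single i 1)) x
        (EuclideanSpace.single i 1) =
      radPoly (expFn (-2) * D (expFn (-2) * D G)) (MvPolynomial.X i * (MvPolynomial.X i * p)) x +
        radPoly (expFn (-2) * D G) (MvPolynomial.pderiv i (MvPolynomial.X i * p)) x +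
      (radPoly (expFn (-2) * D G) (MvPolynomial.X i * MvPolynomial.pderiv i p) x +
        radPoly G (MvPolynomial.pderiv i (MvPolynomial.pderiv i p)) x) := by
  have h : (fun y => fderiv ℝ (radPoly G p) y (EuclideanSpace.single i 1)) =ᶠ[𝓝 x]
      radPoly (expFn (-2) * D G) (MvPolynomial.X i * p) +
        radPoly G (MvPolynomial.pderiv i p) := by
    filter_upwards [isOpen_ne.mem_nhds hx] with y hy
    exact fderiv_radPoly hy i
  rw [h.fderiv_eq, fderiv_add ((contDiffAt_radPoly hx).differentiableAt (by simp))
    ((contDiffAt_radPoly hx).differentiableAt (by simp)), add_apply, fderiv_radPoly hx,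
    fderiv_radPoly hx]

lemma negLap_radPoly_of_ne (hp : p.IsHomogeneous k) (hx : x ≠ 0) :
    negLap (radPoly G p) x = radPoly (negRadLap n k G) p x + radPoly (-G) (polyLap p) x := by
  have hexp : Complex.exp (2 * (Real.log ‖x‖ : ℝ)) * Complex.exp (-2 * (Real.log ‖x‖ : ℝ)) = 1 := by
    rw [← Complex.exp_add, ← add_mul, add_neg_cancel, zero_mul, Complex.exp_zero]
  have hlap := evalPoly_sum (x := x) Finset.univ
    fun i => MvPolynomial.pderiv i (MvPolynomial.pderiv i p)
  rw [← polyLap] at hlap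
  simp only [negLap, laplacian, fderiv_fderiv_radPoly hx, radPoly_of_ne hx,
    Finset.sum_add_distrib, ← Finset.mul_sum, sum_evalPoly_X_mul_X_mul hx,
    sum_evalPoly_X_mul_pderiv hp, sum_evalPoly_pderiv_X_mul hp, ← hlap, negRadLap_apply,
    D_expFn_mul]
  simp only [MulMemClass.coe_mul, AddMemClass.coe_add, NegMemClass.coe_neg, Pi.mul_apply,
    Pi.add_apply, Pi.neg_apply, Subalgebra.coe_smul, Pi.smul_apply, smul_eq_mul, expFn_apply]
  linear_combination (-Complex.exp (-2 * (Real.log ‖x‖ : ℝ)) * (D (D G) (Real.log ‖x‖) +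
    -2 * D G (Real.log ‖x‖))) * evalPoly p x * hexp

lemma negLap_radPoly (hp : p.IsHomogeneous k) (hG : HasCompactSupport G) :
    negLap (radPoly G p) = radPoly (negRadLap n k G) p + radPoly (-G) (polyLap p) := by
  ext x
  rcases eq_or_ne x 0 with rfl | hx
  · simp [radPoly_zero, image_eq_zero_of_notMem_tsupport (isTest_radPoly hG p).negLap.zero_notMem]
  · exact negLap_radPoly_of_ne hp hx

lemma hasCompactSupport_negRadLap (hG : HasCompactSupport G) :
    HasCompactSupport (negRadLap n k G) :=
  (hasCompactSupport_mul (hasCompactSupport_aeval hG _) _).neg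

end RadialLaplacian

section RadialReduction

open smoothFn

variable {n m k : ℕ} {c : ℝ} {G : smoothFn} {p : MvPolynomial (Fin n) ℂ} {U : 𝓔 n → ℂ}

/-- The symbol of `(-Δ)ᵐ` on homogeneous polynomials of degree `k`: conjugation by powers of `|x|`
turns this operator into `symbolProd n m k` evaluated at `d/dt`, `t = log |x|`. -/
def symbolProd (n m k : ℕ) : Polynomial ℂ :=
  ∏ j ∈ Finset.range m,
    (Polynomial.C ((k + n / 2 - m + 2 * j : ℂ) ^ 2) - Polynomial.X ^ 2)

/-- The symbol of `(-Δ)ᵐ + c|x|⁻²ᵐ` on homogeneous polynomials of degree `k`. -/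
def symbol (n m k : ℕ) (c : ℝ) : Polynomial ℂ := symbolProd n m k + Polynomial.C (c : ℂ)

lemma symbolProd_eq (n m k : ℕ) : symbolProd n m k =
    ∏ j ∈ Finset.range m, -((Polynomial.X + Polynomial.C (m - n / 2 - k - 2 * j : ℂ)) *
      (Polynomial.X + Polynomial.C (m - n / 2 - k - 2 * j + n - 2 + 2 * k : ℂ))) := by
  have hreflect : ∏ j ∈ Finset.range m,
      (Polynomial.X + Polynomial.C (m - n / 2 - k - 2 * j + n - 2 + 2 * k : ℂ)) =
        ∏ j ∈ Finset.range m, (Polynomial.X + Polynomial.C (k + n / 2 - m + 2 * j : ℂ)) := by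
    rw [← Finset.prod_range_reflect]
    refine Finset.prod_congr rfl fun j hj => ?_
    rw [Nat.sub_sub, Nat.cast_sub (by simpa [add_comm] using hj)]
    congr 2
    push_cast
    ring
  simp only [← neg_mul]
  rw [Finset.prod_mul_distrib, hreflect, ← Finset.prod_mul_distrib, symbolProd]
  refine Finset.prod_congr rfl fun j _ => ?_
  simp only [map_add, map_sub, map_mul, map_pow, map_natCast, map_ofNat]
  ring

lemma negRadLap_expFn_mul (a : ℂ) (G : smoothFn) :
    negRadLap n k (expFn a * G) = expFn (a - 2) * aeval D (-((Polynomial.X + Polynomial.C a) *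
      (Polynomial.X + Polynomial.C (a + n - 2 + 2 * k)))) G := by
  rw [negRadLap, aeval_expFn_mul, expFn_mul_expFn_mul, neg_add_eq_sub]
  simp only [map_neg, LinearMap.neg_apply, Polynomial.mul_comp, Polynomial.add_comp,
    Polynomial.X_comp, Polynomial.C_comp, add_assoc, ← Polynomial.C_add, add_sub_assoc]
  exact (mul_neg (expFn (a - 2)) _).symm

lemma iterate_negRadLap_expFn_mul (a : ℂ) (G : smoothFn) (m : ℕ) :
    (negRadLap n k)^[m] (expFn a * G) =
      expFn (a - 2 * m) * aeval D (∏ j ∈ Finset.range m,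
        -((Polynomial.X + Polynomial.C (a - 2 * j)) *
          (Polynomial.X + Polynomial.C (a - 2 * j + n - 2 + 2 * k)))) G := by
  induction m with
  | zero => simp
  | succ m ih =>
    rw [Function.iterate_succ_apply', ih, negRadLap_expFn_mul, ← Module.End.mul_apply, ← map_mul,
      mul_comm (-_), ← Finset.prod_range_succ]
    congr 2
    push_cast
    ring

lemma iterate_negRadLap_add (n m k : ℕ) (c : ℝ) (G : smoothFn) :
    (negRadLap n k)^[m] (expFn (m - n / 2 - k) * G) +
        (c : ℂ) • (expFn (-(2 * m : ℕ)) * (expFn (m - n / 2 - k) * G)) =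
      expFn (-m - n / 2 - k) * aeval D (symbol n m k c) G := by
  rw [iterate_negRadLap_expFn_mul, ← symbolProd_eq, expFn_mul_expFn_mul, symbol, map_add,
    LinearMap.add_apply, Polynomial.aeval_C, Module.algebraMap_end_apply, mul_add, mul_smul_comm]
  push_cast
  ring_nf

lemma potential_mul_radPoly (m : ℕ) (c : ℝ) (G : smoothFn) (p : MvPolynomial (Fin n) ℂ)
    (x : 𝓔 n) : ((c * (‖x‖ ^ (2 * m))⁻¹ : ℝ) : ℂ) * radPoly G p x =
      radPoly ((c : ℂ) • (expFn (-(2 * m : ℕ)) * G)) p x := by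
  rcases eq_or_ne x 0 with rfl | hx
  · simp [radPoly_zero]
  · simp only [radPoly_of_ne hx, Subalgebra.coe_smul, Pi.smul_apply, MulMemClass.coe_mul,
      Pi.mul_apply, smul_eq_mul, expFn_apply, exp_neg_mul_log_norm hx]
    push_cast
    ring

lemma hasCompactSupport_iterate_negRadLap (hG : HasCompactSupport G) (m : ℕ) :
    HasCompactSupport ((negRadLap n k)^[m] G) :=
  Function.Iterate.rec (fun H : smoothFn => HasCompactSupport H) hG
    (fun _ => hasCompactSupport_negRadLap) m

lemma iterate_negLap_radPoly_one (hG : HasCompactSupport G) (m : ℕ) :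
    negLap^[m] (radPoly G 1 : 𝓔 n → ℂ) = radPoly ((negRadLap n 0)^[m] G) 1 := by
  have hp : (1 : MvPolynomial (Fin n) ℂ).IsHomogeneous 0 := MvPolynomial.isHomogeneous_one _ _
  induction m generalizing G with
  | zero => rfl
  | succ m ih =>
    rw [Function.iterate_succ_apply, negLap_radPoly hp hG, polyLap_eq_zero hp, radPoly_zero_right,
      add_zero, ih (hasCompactSupport_negRadLap hG), Function.iterate_succ_apply]

lemma rellichExpr_radPoly_one (hG : HasCompactSupport G) (m : ℕ) (c : ℝ) :
    rellichExpr m c (radPoly (expFn (m - n / 2) * G) 1 : 𝓔 n → ℂ) =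
      radPoly (expFn (-m - n / 2) * aeval D (symbol n m 0 c) G) 1 := by
  have h := iterate_negRadLap_add n m 0 c G
  simp only [Nat.cast_zero, sub_zero] at h
  ext x
  rw [← h, radPoly_add, rellichExpr, iterate_negLap_radPoly_one (hasCompactSupport_mul hG _),
    potential_mul_radPoly, Pi.add_apply]

/-- `U` is orthogonal, in the bilinear pairing, to the test functions `G (log |x|) q(x)` with `q`
homogeneous of degree `k`. -/
def RadOrthogonal (U : 𝓔 n → ℂ) (k : ℕ) : Prop :=
  ∀ q : MvPolynomial (Fin n) ℂ, q.IsHomogeneous k → ∀ G : smoothFn, HasCompactSupport G →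
    ∫ x, U x * radPoly G q x = 0

lemma integral_mul_iterate_negLap_radPoly (hU : MemLp U 2) (h : ∀ j < k, RadOrthogonal U j)
    (hp : p.IsHomogeneous k) (hG : HasCompactSupport G) (m : ℕ) :
    ∫ x, U x * negLap^[m] (radPoly G p) x =
      ∫ x, U x * radPoly ((negRadLap n k)^[m] G) p x := by
  induction k using Nat.strong_induction_on generalizing p G m with
  | _ k ihk =>
  have hlower (H : smoothFn) (hH : HasCompactSupport H) (i : ℕ) :
      ∫ x, U x * negLap^[i] (radPoly H (polyLap p)) x = 0 := by
    rcases Nat.eq_zero_or_pos k with rfl | hk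
    · have h₀ := iterate_negLap_smul (IsTest.zero (n := n)) 0 i
      simp only [zero_smul] at h₀
      simp [polyLap_eq_zero hp, radPoly_zero_right, h₀]
    · have hk' : k - 1 - 1 < k := by omega
      rw [ihk _ hk' (fun j hj => h j (hj.trans hk')) (isHomogeneous_polyLap hp) hH]
      exact h _ hk' _ (isHomogeneous_polyLap hp) _ (hasCompactSupport_iterate_negRadLap hH i)
  induction m generalizing G with
  | zero => rfl
  | succ m ih =>
    have h₁ := isTest_radPoly (hasCompactSupport_negRadLap (n := n) (k := k) hG) p
    have h₂ := isTest_radPoly (G := -G) hG.neg (polyLap p)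
    simp only [Function.iterate_succ_apply, negLap_radPoly hp hG, iterate_negLap_add h₁ h₂,
      Pi.add_apply, mul_add]
    rw [integral_add ((h₁.iterate_negLap m).integrable_mul_left hU)
      ((h₂.iterate_negLap m).integrable_mul_left hU), ih (hasCompactSupport_negRadLap hG),
      hlower (-G) hG.neg, add_zero]

lemma integral_mul_rellichExpr_radPoly (hU : MemLp U 2) (h : ∀ j < k, RadOrthogonal U j)
    (hp : p.IsHomogeneous k) (hG : HasCompactSupport G) (m : ℕ) (c : ℝ) :
    ∫ x, U x * rellichExpr m c (radPoly (expFn (m - n / 2 - k) * G) p) x =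
      ∫ x, U x * radPoly (expFn (-m - n / 2 - k) * aeval D (symbol n m k c) G) p x := by
  have hH := hasCompactSupport_mul hG (expFn (m - n / 2 - k))
  have hlap := (isTest_radPoly hH p).iterate_negLap m
  have hred := isTest_radPoly (hasCompactSupport_iterate_negRadLap (n := n) (k := k) hH m) p
  have hpot := (isTest_radPoly (hasCompactSupport_mul hH (expFn (-(2 * m : ℕ)))) p).smul c
  rw [← radPoly_smul] at hpot
  rw [← iterate_negRadLap_add n m k c G, radPoly_add]
  simp only [rellichExpr, potential_mul_radPoly, Pi.add_apply, mul_add]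
  rw [integral_add (hlap.integrable_mul_left hU) (hpot.integrable_mul_left hU),
    integral_add (hred.integrable_mul_left hU) (hpot.integrable_mul_left hU),
    integral_mul_iterate_negLap_radPoly hU h hp hH]

lemma integral_mul_radPoly_symbol_eq_zero {s : ℂ} (hU : MemLp U 2)
    (hT : ∀ φ, IsTest φ → ∫ x, U x * (rellichExpr m c φ x + s * φ x) = 0)
    (h : ∀ j < k, RadOrthogonal U j) (hp : p.IsHomogeneous k) (hG : HasCompactSupport G) :
    ∫ x, U x * radPoly (expFn (-m - n / 2 - k) *
      (aeval D (symbol n m k c) G + s • (expFn (2 * m) * G))) p x = 0 := by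
  have hφ := isTest_radPoly (hasCompactSupport_mul hG (expFn (m - n / 2 - k))) p
  have hexp : expFn (-m - n / 2 - k) * (s • (expFn (2 * m) * G)) =
      s • (expFn (m - n / 2 - k) * G) := by
    rw [mul_smul_comm, expFn_mul_expFn_mul]
    ring_nf
  have hsym := isTest_radPoly (hasCompactSupport_mul
    (hasCompactSupport_aeval hG (symbol n m k c)) (expFn (-m - n / 2 - k))) p
  have h₀ := hT _ hφ
  have hs := (hφ.smul s).integrable_mul_left hU
  simp only [Pi.smul_apply, smul_eq_mul] at hs
  simp only [mul_add] at h₀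
  rw [integral_add ((hφ.rellichExpr m c).integrable_mul_left hU) hs,
    integral_mul_rellichExpr_radPoly hU h hp hG] at h₀
  rw [mul_add, hexp, radPoly_add, radPoly_smul, ← h₀]
  simp only [Pi.add_apply, Pi.smul_apply, smul_eq_mul, mul_add]
  exact integral_add (hsym.integrable_mul_left hU) hs

end RadialReduction

section RadialMeasure

variable {n : ℕ}

lemma lintegral_Ioi_eq_lintegral_exp {g : ℝ → ℝ≥0∞} :
    ∫⁻ r in Set.Ioi (0 : ℝ), g r = ∫⁻ t, ENNReal.ofReal (Real.exp t) * g (Real.exp t) := by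
  have := lintegral_image_eq_lintegral_abs_deriv_mul MeasurableSet.univ
    (fun t _ => (Real.hasDerivAt_exp t).hasDerivWithinAt) Real.exp_injective.injOn g
  rw [Set.image_univ, Real.range_exp] at this
  simpa [abs_of_pos (Real.exp_pos _)] using this

lemma lintegral_fun_norm_eq [NeZero n] {g : ℝ → ℝ≥0∞} (hg : Measurable g) :
    ∫⁻ x : 𝓔 n, g ‖x‖ = (volume : Measure (𝓔 n)).toSphere Set.univ *
      ∫⁻ r in Set.Ioi (0 : ℝ), ENNReal.ofReal (r ^ (n - 1)) * g r := by
  calc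
    _ = ∫⁻ x : ({(0)}ᶜ : Set (𝓔 n)), g ‖x.1‖ ∂((volume : Measure (𝓔 n)).comap (↑)) := by
      rw [lintegral_subtype_comap (measurableSet_singleton _).compl fun x => g ‖x‖,
        restrict_compl_singleton]
    _ = ∫⁻ x, g x.2 ∂(volume : Measure (𝓔 n)).toSphere.prod (.volumeIoiPow (n - 1)) := by
      simpa using (Measure.measurePreserving_homeomorphUnitSphereProd
        (volume : Measure (𝓔 n))).lintegral_comp_emb
        (Homeomorph.measurableEmbedding _) (g ∘ Subtype.val ∘ Prod.snd)
    _ = (volume : Measure (𝓔 n)).toSphere Set.univ *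
        ∫⁻ x : Set.Ioi (0 : ℝ), g x ∂.volumeIoiPow (n - 1) := by
      rw [lintegral_prod _ (by fun_prop)]
      dsimp only
      rw [lintegral_const, mul_comm]
    _ = _ := by
      rw [Measure.volumeIoiPow, lintegral_withDensity_eq_lintegral_mul _ (by fun_prop)
        (by fun_prop)]
      congr 1
      exact lintegral_subtype_comap measurableSet_Ioi
        fun r => ENNReal.ofReal (r ^ (n - 1)) * g r

variable (n) in
/-- The surface area of the unit sphere in `ℝⁿ`. -/
def sphereArea : ℝ≥0∞ := (volume : Measure (𝓔 n)).toSphere Set.univ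

lemma sphereArea_ne_top : sphereArea n ≠ ⊤ := measure_ne_top _ _

lemma sphereArea_ne_zero [NeZero n] : sphereArea n ≠ 0 := by
  rw [sphereArea, Measure.measure_univ_ne_zero]
  exact Measure.toSphere_ne_zero _

lemma toReal_sphereArea_ne_zero [NeZero n] : (sphereArea n).toReal ≠ 0 :=
  ENNReal.toReal_ne_zero.2 ⟨sphereArea_ne_zero, sphereArea_ne_top⟩

variable (n) in
/-- The multiple of the measure `|x|⁻ⁿ dx` which `log |x|` maps to Lebesgue measure. -/
def logMeasure : Measure (𝓔 n) :=
  (sphereArea n)⁻¹ • volume.withDensity fun x => ENNReal.ofReal ((‖x‖ ^ n)⁻¹)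

lemma exp_mul_indicator_exp [NeZero n] (s : Set ℝ) (t : ℝ) :
    ENNReal.ofReal (Real.exp t) * (ENNReal.ofReal (Real.exp t ^ (n - 1)) *
      (Real.log ⁻¹' s).indicator (fun r => ENNReal.ofReal ((r ^ n)⁻¹)) (Real.exp t)) =
        s.indicator 1 t := by
  by_cases ht : t ∈ s
  · rw [Set.indicator_of_mem (by simpa using ht), Set.indicator_of_mem ht, Pi.one_apply,
      ← ENNReal.ofReal_mul (by positivity), ← ENNReal.ofReal_mul (by positivity), ← mul_assoc,
      ← pow_succ', Nat.sub_add_cancel (NeZero.one_le), mul_inv_cancel₀ (by positivity),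
      ENNReal.ofReal_one]
  · rw [Set.indicator_of_notMem (by simpa using ht), Set.indicator_of_notMem ht, mul_zero,
      mul_zero]

lemma measurePreserving_log_norm [NeZero n] :
    MeasurePreserving (fun x : 𝓔 n => Real.log ‖x‖) (logMeasure n) volume := by
  have hm : Measurable fun x : 𝓔 n => Real.log ‖x‖ := by fun_prop
  refine ⟨hm, Measure.ext fun s hs => ?_⟩
  have hind : Measurable ((Real.log ⁻¹' s).indicator fun r => ENNReal.ofReal ((r ^ n)⁻¹)) :=
    Measurable.indicator (by fun_prop) (Real.measurable_log hs)
  calc _ = (sphereArea n)⁻¹ * ∫⁻ x : 𝓔 n,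
        (Real.log ⁻¹' s).indicator (fun r => ENNReal.ofReal ((r ^ n)⁻¹)) ‖x‖ := by
        rw [Measure.map_apply hm hs, logMeasure, Measure.smul_apply, withDensity_apply _ (hm hs),
          ← lintegral_indicator (hm hs), smul_eq_mul]
        rfl
    _ = (sphereArea n)⁻¹ * sphereArea n * volume s := by
        rw [lintegral_fun_norm_eq hind, lintegral_Ioi_eq_lintegral_exp,
          lintegral_congr (exp_mul_indicator_exp s), lintegral_indicator_one hs, sphereArea,
          mul_assoc]
    _ = volume s := by
        rw [ENNReal.inv_mul_cancel sphereArea_ne_zero sphereArea_ne_top, one_mul]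

end RadialMeasure

section RadialComponent

open smoothFn

variable {n k : ℕ} {p : MvPolynomial (Fin n) ℂ} {U : 𝓔 n → ℂ} {x : 𝓔 n}

lemma logMeasure_absolutelyContinuous : logMeasure n ≪ (volume : Measure (𝓔 n)) :=
  Measure.smul_absolutelyContinuous.trans (withDensity_absolutelyContinuous _ _)

lemma integral_logMeasure (h : 𝓔 n → ℂ) :
    ∫ x, h x ∂logMeasure n = (sphereArea n).toReal⁻¹ • ∫ x, (‖x‖ ^ n)⁻¹ • h x := by
  rw [logMeasure, integral_smul_measure, integral_withDensity_eq_integral_toReal_smul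
    (by fun_prop) (by simp), ENNReal.toReal_inv]
  congr 1
  refine integral_congr_ae (.of_forall fun x => ?_)
  dsimp only
  rw [ENNReal.toReal_ofReal (by positivity)]

lemma integrable_logMeasure [NeZero n] {h : 𝓔 n → ℝ} :
    Integrable h (logMeasure n) ↔ Integrable fun x => (‖x‖ ^ n)⁻¹ * h x := by
  rw [logMeasure, integrable_smul_measure (ENNReal.inv_ne_zero.2 sphereArea_ne_top)
    (ENNReal.inv_ne_top.2 sphereArea_ne_zero), integrable_withDensity_iff_integrable_smul'
    (by fun_prop) (by simp)]
  refine integrable_congr (.of_forall fun x => ?_)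
  dsimp only
  rw [ENNReal.toReal_ofReal (by positivity), smul_eq_mul]

lemma norm_sq_exp_mul_log_norm (hx : x ≠ 0) :
    ‖Complex.exp ((n / 2 - k : ℂ) * (Real.log ‖x‖ : ℝ))‖ ^ 2 * (‖x‖ ^ k) ^ 2 = ‖x‖ ^ n := by
  have h : Complex.exp ((n / 2 - k : ℂ) * (Real.log ‖x‖ : ℝ)) ^ 2 * ((‖x‖ : ℂ) ^ k) ^ 2 =
      (‖x‖ : ℂ) ^ n := by
    rw [← exp_mul_log_norm hx k, ← exp_mul_log_norm hx n, ← Complex.exp_nat_mul,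
      ← Complex.exp_nat_mul, ← Complex.exp_add]
    congr 1
    push_cast
    ring
  simpa only [norm_mul, norm_pow, Complex.norm_real, norm_norm] using congrArg norm h

lemma exists_norm_radPoly_expFn_sq_le (hp : p.IsHomogeneous k) :
    ∃ C, ∀ x : 𝓔 n, ‖radPoly (expFn (n / 2 - k)) p x‖ ^ 2 ≤ C * ‖x‖ ^ n := by
  obtain ⟨C, h⟩ := exists_norm_evalPoly_le hp
  refine ⟨C ^ 2, fun x => ?_⟩
  rcases eq_or_ne x 0 with rfl | hx
  · rw [radPoly_zero, norm_zero, zero_pow two_ne_zero]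
    positivity
  · rw [radPoly_of_ne hx, expFn_apply, norm_mul, mul_pow]
    calc _ ≤ ‖Complex.exp ((n / 2 - k : ℂ) * (Real.log ‖x‖ : ℝ))‖ ^ 2 * (C * ‖x‖ ^ k) ^ 2 := by
          gcongr
          exact h x
      _ = _ := by
          rw [← norm_sq_exp_mul_log_norm (k := k) hx]
          ring

lemma memLp_mul_radPoly [NeZero n] (hU : MemLp U 2) (hp : p.IsHomogeneous k) :
    MemLp (fun x => U x * radPoly (expFn (n / 2 - k)) p x) 2 (logMeasure n) := by
  have hm : AEStronglyMeasurable (fun x => U x * radPoly (expFn (n / 2 - k)) p x) volume :=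
    hU.1.mul (measurable_radPoly _ _).aestronglyMeasurable
  rw [memLp_two_iff_integrable_sq_norm (hm.mono_ac logMeasure_absolutelyContinuous),
    integrable_logMeasure]
  obtain ⟨C, h⟩ := exists_norm_radPoly_expFn_sq_le hp
  have hi := ((memLp_two_iff_integrable_sq_norm hU.1).1 hU).const_mul C
  have hw : Measurable fun x : 𝓔 n => (‖x‖ ^ n)⁻¹ := by fun_prop
  have h₀ : ∀ᵐ x : 𝓔 n, x ≠ 0 := by simp [ae_iff]
  refine hi.mono' (hw.aestronglyMeasurable.mul (hm.norm.pow 2)) ?_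
  filter_upwards [h₀] with x hx
  rw [Real.norm_of_nonneg (by positivity), norm_mul, mul_pow]
  calc _ ≤ (‖x‖ ^ n)⁻¹ * (‖U x‖ ^ 2 * (C * ‖x‖ ^ n)) := by
        gcongr
        exact h x
    _ = _ := by field_simp

lemma exists_memLp_integral_mul_comp_eq {α β : Type*} {_ : MeasurableSpace α}
    {_ : MeasurableSpace β} {μ : Measure α} {ν : Measure β} {f : α → β}
    (hf : MeasurePreserving f μ ν) {W : α → ℂ} (hW : MemLp W 2 μ) :
    ∃ R : β → ℂ, MemLp R 2 ν ∧ ∀ g : β → ℂ, MemLp g 2 ν →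
      ∫ x, W x * g (f x) ∂μ = ∫ y, R y * g y ∂ν := by
  let J : Lp ℂ 2 ν →L[ℂ] Lp ℂ 2 μ :=
    (Lp.compMeasurePreservingₗᵢ ℂ _ hf).toContinuousLinearMap
  refine ⟨J.adjoint hW.toLp, Lp.memLp _, fun g hg => ?_⟩
  have hg' : MemLp (fun y => starRingEnd ℂ (g y)) 2 ν := hg.star
  have h : ⟪J hg'.toLp, hW.toLp⟫_ℂ = ⟪hg'.toLp, J.adjoint hW.toLp⟫_ℂ :=
    (J.adjoint_inner_right _ _).symm
  rw [L2.inner_def, L2.inner_def] at h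
  convert h using 1
  · refine integral_congr_ae ?_
    filter_upwards [hW.coeFn_toLp, Lp.coeFn_compMeasurePreserving hg'.toLp hf,
      hf.quasiMeasurePreserving.ae_eq_comp hg'.coeFn_toLp] with x h₁ h₂ h₃
    have hJ : (J hg'.toLp : α → ℂ) x = starRingEnd ℂ (g (f x)) := h₂.trans h₃
    rw [hJ, h₁]
    simp
  · refine integral_congr_ae ?_
    filter_upwards [hg'.coeFn_toLp] with y hy
    rw [hy]
    simp

lemma exists_radial_component [NeZero n] (hU : MemLp U 2) (hp : p.IsHomogeneous k) :
    ∃ F : ℝ → ℂ, MemLp F 2 ∧ ∀ G : smoothFn, HasCompactSupport G →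
      ∫ x, U x * radPoly (expFn (-(n / 2) - k) * G) p x = ∫ t, F t * G t := by
  obtain ⟨R, hR, h⟩ :=
    exists_memLp_integral_mul_comp_eq measurePreserving_log_norm (memLp_mul_radPoly hU hp)
  refine ⟨fun t => (sphereArea n).toReal * R t, hR.const_mul _, fun G hG => ?_⟩
  simp only [mul_assoc]
  rw [integral_const_mul, ← h G ((continuous G).memLp_of_hasCompactSupport hG),
    integral_logMeasure, Complex.real_smul, ← mul_assoc, ← Complex.ofReal_mul,
    mul_inv_cancel₀ toReal_sphereArea_ne_zero, Complex.ofReal_one, one_mul]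
  have h₀ : ∀ᵐ x : 𝓔 n, x ≠ 0 := by simp [ae_iff]
  refine integral_congr_ae ?_
  filter_upwards [h₀] with x hx
  have hx' : (‖x‖ : ℂ) ≠ 0 := by simpa using hx
  have hexp : Complex.exp ((n / 2 - k : ℂ) * (Real.log ‖x‖ : ℝ)) =
      Complex.exp ((-(n / 2) - k : ℂ) * (Real.log ‖x‖ : ℝ)) * (‖x‖ : ℂ) ^ n := by
    rw [← exp_mul_log_norm hx n, ← Complex.exp_add]
    ring_nf
  simp only [radPoly_of_ne hx, expFn_apply, MulMemClass.coe_mul, Pi.mul_apply, hexp,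
    Complex.real_smul]
  push_cast
  field_simp

end RadialComponent

section Mollification

open smoothFn

variable {f : ℝ → ℂ} {κ κ' : smoothFn}

/-- The convolution of a test function on the line with a locally integrable function. -/
def mollify (hκ : HasCompactSupport κ) (hf : LocallyIntegrable f) : smoothFn :=
  ⟨convolution κ f (ContinuousLinearMap.mul ℝ ℂ) volume,
    mem_iff.2 (hκ.contDiff_convolution_left _ (contDiff κ) hf)⟩

lemma mollify_apply (hκ : HasCompactSupport κ) (hf : LocallyIntegrable f) (t : ℝ) :
    mollify hκ hf t = ∫ r, κ (t - r) * f r := by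
  change convolution κ f (ContinuousLinearMap.mul ℝ ℂ) volume t = _
  rw [convolution_eq_swap]
  rfl

lemma integrable_mul_of_hasCompactSupport (hκ : HasCompactSupport κ) (hf : LocallyIntegrable f)
    (t : ℝ) : Integrable fun r => κ (t - r) * f r :=
  (hκ.convolutionExists_left (ContinuousLinearMap.mul ℝ ℂ) (continuous κ) hf t).integrable_swap

lemma mollify_add {κ₁ κ₂ : smoothFn} (h : κ = κ₁ + κ₂) (hκ : HasCompactSupport κ)
    (h₁ : HasCompactSupport κ₁) (h₂ : HasCompactSupport κ₂) (hf : LocallyIntegrable f) :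
    mollify hκ hf = mollify h₁ hf + mollify h₂ hf := by
  subst h
  ext t
  simp only [mollify_apply, Subalgebra.coe_add, Pi.add_apply, add_mul]
  exact integral_add (integrable_mul_of_hasCompactSupport h₁ hf t)
    (integrable_mul_of_hasCompactSupport h₂ hf t)

lemma mollify_smul {a : ℂ} (h : κ' = a • κ) (hκ' : HasCompactSupport κ')
    (hκ : HasCompactSupport κ) (hf : LocallyIntegrable f) :
    mollify hκ' hf = a • mollify hκ hf := by
  subst h
  ext t
  simp only [mollify_apply, Subalgebra.coe_smul, Pi.smul_apply, smul_eq_mul, mul_assoc]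
  rw [integral_const_mul]

lemma D_mollify (h : κ' = D κ) (hκ' : HasCompactSupport κ') (hκ : HasCompactSupport κ)
    (hf : LocallyIntegrable f) : D (mollify hκ hf) = mollify hκ' hf := by
  subst h
  ext t
  exact (hκ.hasDerivAt_convolution_left _ ((contDiff κ).of_le (by simp)) hf t).deriv

lemma aeval_mollify (P : Polynomial ℂ) (hκ : HasCompactSupport κ) (hf : LocallyIntegrable f) :
    aeval D P (mollify hκ hf) = mollify (hasCompactSupport_aeval hκ P) hf := by
  have hP := fun Q => hasCompactSupport_aeval hκ Q
  induction P using Polynomial.induction_on with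
  | C c =>
    rw [mollify_smul (a := c) (by simp) (hP _) hκ hf]
    simp
  | add p q hp hq =>
    rw [mollify_add (by simp) (hP (p + q)) (hP p) (hP q) hf, ← hp, ← hq, map_add,
      LinearMap.add_apply]
  | monomial j c ih =>
    have e : Polynomial.C c * Polynomial.X ^ (j + 1) =
        Polynomial.X * (Polynomial.C c * Polynomial.X ^ j) := by ring
    rw [← D_mollify (by rw [e, aeval_X_mul]) (hP _) (hP (Polynomial.C c * Polynomial.X ^ j)) hf,
      ← ih, e, aeval_X_mul]

lemma locallyIntegrable_expFn_mul (hf : LocallyIntegrable f) (a : ℂ) :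
    LocallyIntegrable ((expFn a : ℝ → ℂ) * f) := by
  rw [← locallyIntegrableOn_univ] at hf ⊢
  exact hf.continuousOn_mul (continuous (expFn a)).continuousOn isOpen_univ.isLocallyClosed

lemma mollify_expFn_mul {a b : ℂ} (hab : a + b = 0) (hκ : HasCompactSupport κ)
    (hf : LocallyIntegrable f) :
    mollify hκ (locallyIntegrable_expFn_mul hf a) =
      expFn a * mollify (hasCompactSupport_mul hκ (expFn b)) hf := by
  ext t
  simp only [mollify_apply, Subalgebra.coe_mul, Pi.mul_apply, expFn_apply]
  rw [← integral_const_mul]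
  refine integral_congr_ae (.of_forall fun r => ?_)
  simp only
  rw [show a * (r : ℂ) = a * t + b * ((t - r : ℝ) : ℂ) by
    rw [eq_neg_of_add_eq_zero_right hab]; push_cast; ring, Complex.exp_add]
  ring

lemma sq_lintegral_mul_le {α : Type*} [MeasurableSpace α] {μ : Measure α} {f g : α → ℝ≥0∞}
    (hf : AEMeasurable f μ) (hg : AEMeasurable g μ) :
    (∫⁻ t, f t * g t ∂μ) ^ 2 ≤ (∫⁻ t, f t ^ 2 ∂μ) * ∫⁻ t, g t ^ 2 ∂μ := by
  have h := ENNReal.lintegral_mul_le_Lp_mul_Lq μ (p := 2) (q := 2)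
    (Real.holderConjugate_iff.2 (by norm_num)) hf hg
  calc _ ≤ ((∫⁻ t, f t ^ (2 : ℝ) ∂μ) ^ (1 / 2 : ℝ) *
        (∫⁻ t, g t ^ (2 : ℝ) ∂μ) ^ (1 / 2 : ℝ)) ^ 2 := pow_le_pow_left₀ zero_le h 2
    _ = _ := by
        rw [mul_pow, ← ENNReal.rpow_natCast, ← ENNReal.rpow_natCast, ← ENNReal.rpow_mul,
          ← ENNReal.rpow_mul]
        norm_num

-- Cauchy–Schwarz with respect to the measure `|κ(t - r)| dr`.
lemma enorm_mollify_sq_le (hκ : HasCompactSupport κ) (hf : LocallyIntegrable f) (t : ℝ) :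
    ‖mollify hκ hf t‖ₑ ^ 2 ≤ (∫⁻ r, ‖κ r‖ₑ) * ∫⁻ r, ‖κ (t - r)‖ₑ * ‖f r‖ₑ ^ 2 := by
  have hw : Measurable fun r => ‖κ (t - r)‖ₑ :=
    ((continuous κ).comp (by fun_prop : Continuous fun r => t - r)).measurable.enorm
  have hf' : AEMeasurable fun r => ‖f r‖ₑ := hf.aestronglyMeasurable.enorm
  set μ := volume.withDensity fun r => ‖κ (t - r)‖ₑ
  have hμ : μ ≪ volume := withDensity_absolutelyContinuous _ _
  have h := sq_lintegral_mul_le (μ := μ) (aemeasurable_const (b := 1)) (hf'.mono_ac hμ)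
  simp only [one_mul, one_pow] at h
  rw [lintegral_withDensity_eq_lintegral_mul₀ hw.aemeasurable hf',
    lintegral_withDensity_eq_lintegral_mul₀ hw.aemeasurable (hf'.pow_const 2),
    lintegral_withDensity_eq_lintegral_mul₀ hw.aemeasurable aemeasurable_const] at h
  simp only [Pi.mul_apply, mul_one] at h
  rw [lintegral_sub_left_eq_self (fun r => ‖κ r‖ₑ) t] at h
  refine (pow_le_pow_left₀ zero_le ?_ 2).trans h
  rw [mollify_apply]
  refine (enorm_integral_le_lintegral_enorm _).trans_eq ?_
  simp_rw [enorm_mul]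

lemma lintegral_enorm_mollify_sq_le (hκ : HasCompactSupport κ) (hf : LocallyIntegrable f) :
    ∫⁻ t, ‖mollify hκ hf t‖ₑ ^ 2 ≤ (∫⁻ t, ‖κ t‖ₑ) ^ 2 * ∫⁻ t, ‖f t‖ₑ ^ 2 := by
  have hκm : Measurable κ := (continuous κ).measurable
  have hf' : AEMeasurable fun t => ‖f t‖ₑ ^ 2 := hf.aestronglyMeasurable.enorm.pow_const 2
  have hm : AEMeasurable fun z : ℝ × ℝ => ‖κ (z.1 - z.2)‖ₑ * ‖f z.2‖ₑ ^ 2 :=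
    (by fun_prop : Measurable fun z : ℝ × ℝ => ‖κ (z.1 - z.2)‖ₑ).aemeasurable.mul hf'.comp_snd
  calc _ ≤ ∫⁻ t, (∫⁻ t, ‖κ t‖ₑ) * ∫⁻ r, ‖κ (t - r)‖ₑ * ‖f r‖ₑ ^ 2 :=
        lintegral_mono (enorm_mollify_sq_le hκ hf)
    _ = (∫⁻ t, ‖κ t‖ₑ) * ∫⁻ r, ∫⁻ t, ‖κ (t - r)‖ₑ * ‖f r‖ₑ ^ 2 := by
        rw [lintegral_const_mul'' _ hm.lintegral_prod_right', lintegral_lintegral_swap hm]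
    _ = (∫⁻ t, ‖κ t‖ₑ) * ∫⁻ r, (∫⁻ t, ‖κ t‖ₑ) * ‖f r‖ₑ ^ 2 := by
        congr 1
        refine lintegral_congr fun r => ?_
        rw [lintegral_mul_const _ (by fun_prop), lintegral_sub_right_eq_self (fun t => ‖κ t‖ₑ) r]
    _ = _ := by rw [lintegral_const_mul'' _ hf', sq, mul_assoc]

lemma memLp_two_iff_lintegral_lt_top {f : ℝ → ℂ} (hf : AEStronglyMeasurable f) :
    MemLp f 2 ↔ ∫⁻ t, ‖f t‖ₑ ^ 2 < ⊤ := by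
  rw [MemLp, eLpNorm_lt_top_iff_lintegral_rpow_enorm_lt_top (by norm_num) (by norm_num)]
  simp [hf]

lemma memLp_mollify (hκ : HasCompactSupport κ) (hf : LocallyIntegrable f) (hf2 : MemLp f 2) :
    MemLp (mollify hκ hf) 2 := by
  refine (memLp_two_iff_lintegral_lt_top (continuous _).aestronglyMeasurable).2
    ((lintegral_enorm_mollify_sq_le hκ hf).trans_lt (ENNReal.mul_lt_top (ENNReal.pow_lt_top ?_)
      ((memLp_two_iff_lintegral_lt_top hf2.1).1 hf2)))
  exact ((continuous κ).integrable_of_hasCompactSupport hκ).2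

end Mollification

section Sobolev

open smoothFn
open scoped ComplexConjugate

variable {f g : smoothFn} {P : Polynomial ℂ}

/-- The smooth functions on the line which are square integrable together with all their
derivatives. -/
def MemSobolev (f : smoothFn) : Prop := ∀ P : Polynomial ℂ, MemLp (aeval D P f) 2

lemma aeval_mul_apply (P Q : Polynomial ℂ) (f : smoothFn) :
    aeval D (P * Q) f = aeval D P (aeval D Q f) := by
  rw [map_mul, Module.End.mul_apply]

namespace MemSobolev

lemma memLp (hf : MemSobolev f) : MemLp f 2 := by
  simpa using hf 1

protected lemma aeval (hf : MemSobolev f) (P : Polynomial ℂ) : MemSobolev (aeval D P f) :=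
  fun R => aeval_mul_apply R P f ▸ hf (R * P)

protected lemma D (hf : MemSobolev f) : MemSobolev (D f) := by
  simpa using hf.aeval Polynomial.X

lemma smul (hf : MemSobolev f) (a : ℂ) : MemSobolev (a • f) := fun P => by
  rw [map_smul]
  exact (hf P).const_smul a

lemma integrable_mul_conj (hf : MemSobolev f) (hg : MemSobolev g) :
    Integrable fun t => f t * conj (g t) :=
  hf.memLp.integrable_mul hg.memLp.star

lemma integral_D_mul_conj (hf : MemSobolev f) (hg : MemSobolev g) :
    ∫ t, smoothFn.D f t * conj (g t) = -∫ t, f t * conj (smoothFn.D g t) := by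
  rw [eq_comm, neg_eq_iff_eq_neg]
  exact integral_mul_deriv_eq_deriv_mul_of_integrable (fun t _ => hasDerivAt)
    (fun t _ => (hasDerivAt (f := g) (t := t)).star) (hf.integrable_mul_conj hg.D)
    (hf.D.integrable_mul_conj hg) (hf.integrable_mul_conj hg)

lemma integral_aeval_mul_conj (hf : MemSobolev f) (hg : MemSobolev g) (P : Polynomial ℂ) :
    ∫ t, aeval D P f t * conj (g t) =
      ∫ t, f t * conj (aeval D ((P.map (starRingEnd ℂ)).comp (-Polynomial.X)) g t) := by
  induction P using Polynomial.induction_on generalizing f with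
  | C c =>
    refine integral_congr_ae (.of_forall fun t => ?_)
    simp [mul_left_comm, mul_assoc]
  | add p q hp hq =>
    simp only [Polynomial.map_add, Polynomial.add_comp, map_add, LinearMap.add_apply,
      Subalgebra.coe_add, Pi.add_apply, add_mul, mul_add]
    rw [integral_add ((hf.aeval p).integrable_mul_conj hg) ((hf.aeval q).integrable_mul_conj hg),
      integral_add (hf.integrable_mul_conj (hg.aeval _)) (hf.integrable_mul_conj (hg.aeval _)),
      hp hf, hq hf]
  | monomial j c ih =>
    have e (R : Polynomial ℂ) : ((R * Polynomial.X).map (starRingEnd ℂ)).comp (-Polynomial.X) =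
        -(Polynomial.X * (R.map (starRingEnd ℂ)).comp (-Polynomial.X)) := by
      simp [mul_comm]
    rw [pow_succ, ← mul_assoc, e, aeval_mul_apply, Polynomial.aeval_X, ih hf.D,
      hf.integral_D_mul_conj (hg.aeval _), ← integral_neg, map_neg, LinearMap.neg_apply,
      aeval_X_mul]
    simp

-- `|f|²` and its derivative are integrable.
lemma tendsto_atBot (hf : MemSobolev f) : Tendsto f atBot (𝓝 0) := by
  have h : Tendsto (fun t => f t * conj (f t)) atBot (𝓝 0) :=
    tendsto_zero_of_hasDerivAt_of_integrableOn_Iic (a := 0)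
      (fun t _ => (hasDerivAt (f := f) (t := t)).mul (hasDerivAt (f := f) (t := t)).star)
      ((hf.D.integrable_mul_conj hf).add (hf.integrable_mul_conj hf.D)).integrableOn
      (hf.integrable_mul_conj hf).integrableOn
  refine tendsto_zero_iff_norm_tendsto_zero.2 ?_
  have h2 : Tendsto (fun t => ‖f t‖ ^ 2) atBot (𝓝 0) := by
    simpa [Complex.mul_conj, Complex.normSq_eq_norm_sq] using h.norm
  simpa using h2.sqrt

end MemSobolev

lemma memSobolev_mollify {κ : smoothFn} {F : ℝ → ℂ} (hκ : HasCompactSupport κ)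
    (hF : LocallyIntegrable F) (hF2 : MemLp F 2) : MemSobolev (mollify hκ hF) := fun P => by
  rw [aeval_mollify]
  exact memLp_mollify _ hF hF2

end Sobolev

section ExponentialGrowth

open smoothFn Asymptotics

variable {u y : smoothFn} {b m δ : ℝ} {w : ℂ} {Q : Polynomial ℂ}

lemma norm_expFn (a : ℂ) (t : ℝ) : ‖expFn a t‖ = Real.exp (a.re * t) := by
  rw [expFn_apply, Complex.norm_exp, Complex.re_mul_ofReal]

lemma isBigO_expFn (a : ℂ) (l : Filter ℝ) : expFn a =O[l] fun t => Real.exp (a.re * t) :=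
  isBigO_of_le l fun t => by rw [norm_expFn, Real.norm_of_nonneg (Real.exp_nonneg _)]

lemma norm_sub_le_of_norm_D_le {C s t : ℝ} (hb : b ≠ 0) (hst : s ≤ t)
    (h : ∀ r ≤ t, ‖D u r‖ ≤ C * Real.exp (b * r)) :
    ‖u t - u s‖ ≤ C / b * (Real.exp (b * t) - Real.exp (b * s)) := by
  refine image_norm_le_of_norm_deriv_right_le_deriv_boundary (f := fun r => u r - u s)
    (f' := D u) (a := s) (b := t) (B := fun r => C / b * (Real.exp (b * r) - Real.exp (b * s)))
    (B' := fun r => C * Real.exp (b * r)) ((continuous u).sub continuous_const).continuousOn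
    (fun r _ => (hasDerivAt.sub_const _).hasDerivWithinAt) (by simp) (fun r => ?_)
    (fun r hr => h r hr.2.le) ⟨hst, le_rfl⟩
  refine ((((hasDerivAt_id r).const_mul b).exp.sub_const _).const_mul (C / b)).congr_deriv ?_
  simp only [id, mul_one]
  field_simp

lemma exists_norm_D_le_exp (h : D u =O[atBot] fun t => Real.exp (b * t)) :
    ∃ C T : ℝ, ∀ t ≤ T, ‖D u t‖ ≤ C * Real.exp (b * t) := by
  obtain ⟨C, hC⟩ := h.bound
  obtain ⟨T, hT⟩ := eventually_atBot.1 hC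
  exact ⟨C, T, fun t ht => by simpa only [Real.norm_eq_abs, Real.abs_exp] using hT t ht⟩

lemma isBigO_exp_of_isBigO_D_of_neg (hb : b < 0)
    (h : D u =O[atBot] fun t => Real.exp (b * t)) : u =O[atBot] fun t => Real.exp (b * t) := by
  obtain ⟨C, T, hC⟩ := exists_norm_D_le_exp h
  have hC0 : 0 ≤ C :=
    nonneg_of_mul_nonneg_left ((norm_nonneg _).trans (hC T le_rfl)) (Real.exp_pos _)
  have hsub : (fun t => u T - u t) =O[atBot] fun t => Real.exp (b * t) := by
    refine IsBigO.of_bound (C / -b) ?_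
    filter_upwards [eventually_le_atBot T] with t ht
    rw [Real.norm_of_nonneg (Real.exp_nonneg _)]
    calc _ ≤ C / b * (Real.exp (b * T) - Real.exp (b * t)) :=
          norm_sub_le_of_norm_D_le hb.ne ht hC
      _ = C / -b * Real.exp (b * t) - C / -b * Real.exp (b * T) := by
          rw [div_neg]
          ring
      _ ≤ _ := sub_le_self _ (mul_nonneg (div_nonneg hC0 (neg_nonneg.2 hb.le)) (Real.exp_nonneg _))
  have hconst : (fun _ => u T) =O[atBot] fun t => Real.exp (b * t) :=
    (isLittleO_const_left.2 (.inr (tendsto_norm_atTop_atTop.comp (Real.tendsto_exp_atTop.comp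
      (tendsto_id.const_mul_atBot_of_neg hb))))).isBigO
  simpa using hconst.sub hsub

lemma isBigO_exp_of_isBigO_D_of_pos (hb : 0 < b)
    (h : D u =O[atBot] fun t => Real.exp (b * t)) (h0 : Tendsto u atBot (𝓝 0)) :
    u =O[atBot] fun t => Real.exp (b * t) := by
  obtain ⟨C, T, hC⟩ := exists_norm_D_le_exp h
  refine IsBigO.of_bound (C / b) ?_
  filter_upwards [eventually_le_atBot T] with t ht
  rw [Real.norm_of_nonneg (Real.exp_nonneg _)]
  have hexp : Tendsto (fun s => Real.exp (b * s)) atBot (𝓝 0) :=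
    Real.tendsto_exp_atBot.comp (tendsto_id.const_mul_atBot hb)
  have hl : Tendsto (fun s => ‖u t - u s‖) atBot (𝓝 ‖u t‖) := by
    simpa using (tendsto_const_nhds.sub h0).norm
  have hr : Tendsto (fun s => C / b * (Real.exp (b * t) - Real.exp (b * s))) atBot
      (𝓝 (C / b * Real.exp (b * t))) := by
    simpa using (hexp.const_sub (Real.exp (b * t))).const_mul (C / b)
  refine le_of_tendsto_of_tendsto hl hr ?_
  filter_upwards [eventually_le_atBot t] with s hs
  exact norm_sub_le_of_norm_D_le hb.ne' hs fun r hr => hC r (hr.trans ht)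

lemma isBigO_exp_of_isBigO_D_sub_smul (hδ : |δ| < m) (hw : m ≤ |w.re|)
    (hy : Tendsto (expFn m * y : smoothFn) atBot (𝓝 0))
    (hz : (D y - w • y : smoothFn) =O[atBot] fun t => Real.exp (δ * t)) :
    y =O[atBot] fun t => Real.exp (δ * t) := by
  set u := expFn (-w) * y
  have hexp (a b : ℝ) : (fun t => Real.exp (a * t) * Real.exp (b * t)) =
      fun t => Real.exp ((a + b) * t) := by
    simp_rw [← Real.exp_add, add_mul]
  have hDu : D u =O[atBot] fun t => Real.exp ((δ - w.re) * t) := by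
    have h := (isBigO_expFn (-w) atBot).mul hz
    rw [hexp, Complex.neg_re, neg_add_eq_sub] at h
    rwa [D_expFn_mul, neg_smul, ← sub_eq_add_neg]
  have hu : u =O[atBot] fun t => Real.exp ((δ - w.re) * t) := by
    rcases le_abs'.1 hw with hw | hw
    · refine isBigO_exp_of_isBigO_D_of_pos (by linarith [neg_lt_of_abs_lt hδ]) hDu ?_
      have hbdd : expFn (-w - m) =O[atBot] fun _ => (1 : ℝ) := by
        refine IsBigO.of_bound 1 ?_
        filter_upwards [eventually_le_atBot 0] with t ht
        rw [norm_expFn, norm_one, mul_one, Real.exp_le_one_iff]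
        refine mul_nonpos_of_nonneg_of_nonpos ?_ ht
        simp only [Complex.sub_re, Complex.neg_re, Complex.ofReal_re]
        linarith
      have h := hbdd.mul_isLittleO ((isLittleO_one_iff ℝ).2 hy)
      simp only [mul_one] at h
      have e : u = expFn (-w - m) * (expFn m * y) := by
        rw [expFn_mul_expFn_mul, sub_add_cancel]
      exact e ▸ (isLittleO_one_iff ℝ).1 h
    · exact isBigO_exp_of_isBigO_D_of_neg (by linarith [lt_of_abs_lt hδ]) hDu
  have h := (isBigO_expFn w atBot).mul hu
  rw [hexp, add_sub_cancel] at h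
  have e : y = expFn w * u := by
    rw [expFn_mul_expFn_mul, add_neg_cancel, expFn_zero, one_mul]
  exact e ▸ h

lemma isBigO_exp_of_isBigO_aeval (hδ : |δ| < m) (hQ0 : Q ≠ 0)
    (hQ : ∀ w, Q.IsRoot w → m ≤ |w.re|)
    (hy : ∀ P : Polynomial ℂ, Tendsto (expFn m * aeval D P y : smoothFn) atBot (𝓝 0))
    (hz : ∀ P : Polynomial ℂ, aeval D P (aeval D Q y) =O[atBot] fun t => Real.exp (δ * t))
    (P : Polynomial ℂ) : aeval D P y =O[atBot] fun t => Real.exp (δ * t) := by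
  induction hn : Q.natDegree generalizing Q P with
  | zero =>
    obtain ⟨b, rfl⟩ := Polynomial.natDegree_eq_zero.1 hn
    have hb : b ≠ 0 := by simpa using hQ0
    have h := hz (Polynomial.C b⁻¹ * P)
    rwa [← aeval_mul_apply, mul_right_comm, ← Polynomial.C_mul, inv_mul_cancel₀ hb,
      Polynomial.C_1, one_mul] at h
  | succ d ih =>
    obtain ⟨w, hw⟩ := IsAlgClosed.exists_root Q (by
      rw [Polynomial.degree_eq_natDegree hQ0, hn]
      exact_mod_cast Nat.succ_ne_zero d)
    obtain ⟨R, rfl⟩ := Polynomial.dvd_iff_isRoot.2 hw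
    have hR0 := right_ne_zero_of_mul hQ0
    refine ih hR0 (fun v hv => hQ v (hv.dvd (Dvd.intro_left _ rfl))) (fun P => ?_) P ?_
    · refine isBigO_exp_of_isBigO_D_sub_smul hδ (hQ w hw) ?_ ?_
      · rw [← aeval_mul_apply]
        exact hy _
      · convert hz P using 3
        rw [← aeval_mul_apply, ← aeval_mul_apply, mul_left_comm, aeval_mul_apply]
        simp
    · rw [Polynomial.natDegree_mul (Polynomial.X_sub_C_ne_zero w) hR0,
        Polynomial.natDegree_X_sub_C] at hn
      omega

end ExponentialGrowth

section WeightedRegularity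

open smoothFn Asymptotics
open scoped ComplexConjugate

variable {A B : smoothFn} {m : ℝ} {Q : Polynomial ℂ}

lemma isBigO_exp_half_of_memSobolev (hm : 0 < m) (hB : MemSobolev B) :
    (expFn m * B : smoothFn) =O[atBot] fun t => Real.exp (m / 2 * t) := by
  have hexp : (fun t => Real.exp (m * t)) =O[atBot] fun t => Real.exp (m / 2 * t) := by
    refine IsBigO.of_bound 1 ?_
    filter_upwards [eventually_le_atBot 0] with t ht
    rw [one_mul, Real.norm_of_nonneg (Real.exp_nonneg _), Real.norm_of_nonneg (Real.exp_nonneg _),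
      Real.exp_le_exp]
    nlinarith
  have h := ((isBigO_expFn m atBot).trans hexp).mul
    ((isLittleO_one_iff ℝ).2 hB.tendsto_atBot).isBigO
  simp only [mul_one] at h
  exact h

lemma memLp_of_isBigO {f : smoothFn} {g : ℝ → ℂ} {δ : ℝ} (hδ : 0 < δ)
    (h : f =O[atBot] fun t => Real.exp (δ * t)) (hg : MemLp g 2) (h' : f =O[atTop] g) :
    MemLp f 2 := by
  have hf := (continuous f).aestronglyMeasurable (μ := volume)
  rw [memLp_two_iff_integrable_sq_norm hf]
  have hint : IntegrableOn (fun t => Real.exp (δ * t) ^ 2) (Set.Iic 0) := by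
    simp_rw [← Real.exp_nat_mul, ← mul_assoc]
    exact integrableOn_exp_mul_Iic (by positivity) 0
  exact ((continuous f).norm.pow 2).locallyIntegrable.integrable_of_isBigO_atBot_atTop
    (h.norm_left.pow 2) ⟨_, Iic_mem_atBot 0, hint⟩ (h'.norm_norm.pow 2)
    (((memLp_two_iff_integrable_sq_norm hg.1).1 hg).integrableAtFilter _)

lemma memSobolev_expFn_mul (hm : 0 < m) (hQ : ∀ w, Q.IsRoot w → m ≤ |w.re|)
    (hA : MemSobolev A) (hB : MemSobolev B)
    (h : aeval D Q (expFn (-m) * A) = expFn m * B) : MemSobolev (expFn (-m) * A) := by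
  have hQ0 : Q ≠ 0 := by
    rintro rfl
    simpa using hm.trans_le (hQ 0 (by simp))
  refine fun P => memLp_of_isBigO (half_pos hm)
    (isBigO_exp_of_isBigO_aeval (m := m) (by rw [abs_of_pos (half_pos hm)]; linarith) hQ0 hQ
      (fun R => ?_) (fun R => ?_) P)
    (hA (P.comp (Polynomial.X + Polynomial.C (-m : ℂ)))) ?_
  · rw [aeval_expFn_mul, expFn_mul_expFn_mul, add_neg_cancel, expFn_zero, one_mul]
    exact (hA.aeval _).tendsto_atBot
  · rw [h, aeval_expFn_mul]
    exact isBigO_exp_half_of_memSobolev hm (hB.aeval _)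
  · rw [aeval_expFn_mul]
    refine IsBigO.of_bound 1 ?_
    filter_upwards [eventually_ge_atTop 0] with t ht
    rw [Subalgebra.coe_mul, Pi.mul_apply, norm_mul, norm_expFn]
    refine mul_le_mul_of_nonneg_right (Real.exp_le_one_iff.2 ?_) (norm_nonneg _)
    simpa using mul_nonneg hm.le ht

-- `⟨Q(d/dt) y, y⟩` is real for `y = e⁻ᵐᵗ A`, while `s` is imaginary.
lemma re_integral_mul_conj_eq_zero {s : ℂ} (hm : 0 < m) (hQ : ∀ w, Q.IsRoot w → m ≤ |w.re|)
    (hQs : (Q.map (starRingEnd ℂ)).comp (-Polynomial.X) = Q) (hs : s.re = 0) (hs0 : s ≠ 0)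
    (hA : MemSobolev A) (hB : MemSobolev B)
    (h : aeval D Q (expFn (-m) * A) = -s • (expFn m * B)) :
    (∫ t, B t * conj (A t)).re = 0 := by
  rw [← mul_smul_comm] at h
  have hy := memSobolev_expFn_mul hm hQ hA (hB.smul (-s)) h
  have hcancel (t : ℝ) : expFn m t * conj (expFn (-m) t) = 1 := by
    rw [expFn_apply, expFn_apply, ← Complex.exp_conj, ← Complex.exp_add]
    simp
  have hpair := hy.integral_aeval_mul_conj hy Q
  rw [hQs, h] at hpair
  have hl (t : ℝ) : (expFn m * -s • B) t * conj ((expFn (-m) * A) t) = -s * (B t * conj (A t)) := by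
    simp only [Subalgebra.coe_mul, Subalgebra.coe_smul, Pi.mul_apply, Pi.smul_apply, smul_eq_mul,
      map_mul]
    linear_combination (-s * B t * conj (A t)) * hcancel t
  have hr (t : ℝ) : (expFn (-m) * A) t * conj ((expFn m * -s • B) t) =
      conj (-s * (B t * conj (A t))) := by
    rw [← hl, map_mul, Complex.conj_conj, mul_comm]
  simp only [hl, hr] at hpair
  rw [integral_conj, integral_const_mul, eq_comm, Complex.conj_eq_iff_im] at hpair
  have him : s.im ≠ 0 := fun h0 => hs0 (Complex.ext hs h0)
  simpa [hs, him] using hpair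

end WeightedRegularity

section Reflection

open smoothFn

variable {F : ℝ → ℂ} {κ : smoothFn}

/-- The map sending `κ` to the function `r ↦ κ (t - r)`. -/
def reflect (t : ℝ) : smoothFn →ₗ[ℂ] smoothFn where
  toFun κ := ⟨fun r => κ (t - r), mem_iff.2 ((contDiff κ).comp (contDiff_const.sub contDiff_id))⟩
  map_add' _ _ := rfl
  map_smul' _ _ := rfl

lemma reflect_apply (t : ℝ) (κ : smoothFn) (r : ℝ) : reflect t κ r = κ (t - r) := rfl

lemma hasCompactSupport_reflect (hκ : HasCompactSupport κ) (t : ℝ) :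
    HasCompactSupport (reflect t κ) :=
  hκ.comp_homeomorph (Homeomorph.subLeft t)

lemma D_reflect (t : ℝ) (κ : smoothFn) : D (reflect t κ) = -reflect t (D κ) := by
  ext r
  have h := (hasDerivAt (f := κ) (t := t - r)).scomp r ((hasDerivAt_id r).const_sub t)
  refine h.deriv.trans ?_
  simp [reflect_apply]

lemma aeval_reflect (P : Polynomial ℂ) (t : ℝ) (κ : smoothFn) :
    aeval D P (reflect t κ) = reflect t (aeval D (P.comp (-Polynomial.X)) κ) := by
  induction P using Polynomial.induction_on with
  | C c => simp
  | add p q hp hq =>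
    rw [map_add, LinearMap.add_apply, hp, hq, Polynomial.add_comp, map_add, LinearMap.add_apply,
      map_add]
  | monomial j c ih =>
    rw [pow_succ, ← mul_assoc, mul_comm, aeval_X_mul, ih, D_reflect,
      Polynomial.mul_comp Polynomial.X, Polynomial.X_comp, neg_mul, map_neg, LinearMap.neg_apply,
      aeval_X_mul, map_neg]

lemma aeval_mollify_eq_of_forall_integral_eq_zero {m s : ℂ} {Q : Polynomial ℂ}
    (hF : LocallyIntegrable F) (hQ : Q.comp (-Polynomial.X) = Q)
    (hT : ∀ G : smoothFn, HasCompactSupport G →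
      ∫ t, F t * (expFn (-m) * (aeval D Q G + s • (expFn (2 * m) * G))) t = 0)
    (hκ : HasCompactSupport κ) :
    aeval D Q (mollify hκ (locallyIntegrable_expFn_mul hF (-m))) =
      -s • mollify hκ (locallyIntegrable_expFn_mul hF m) := by
  rw [aeval_mollify]
  ext t
  have h := hT _ (hasCompactSupport_reflect hκ t)
  rw [aeval_reflect, hQ, mul_add, mul_smul_comm, expFn_mul_expFn_mul,
    show -m + 2 * m = m by ring] at h
  have hpt (r : ℝ) : F r * (expFn (-m) * reflect t (aeval D Q κ) +
      s • (expFn m * reflect t κ)) r =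
      aeval D Q κ (t - r) * ((expFn (-m) : ℝ → ℂ) * F) r +
        s * (κ (t - r) * ((expFn m : ℝ → ℂ) * F) r) := by
    simp only [Subalgebra.coe_add, Subalgebra.coe_mul, Subalgebra.coe_smul, Pi.add_apply,
      Pi.mul_apply, Pi.smul_apply, smul_eq_mul, reflect_apply]
    ring
  simp only [hpt] at h
  rw [integral_add (integrable_mul_of_hasCompactSupport (hasCompactSupport_aeval hκ Q)
      (locallyIntegrable_expFn_mul hF (-m)) t)
    ((integrable_mul_of_hasCompactSupport hκ (locallyIntegrable_expFn_mul hF m) t).const_mul s),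
    integral_const_mul,
    ← mollify_apply (hasCompactSupport_aeval hκ Q) (locallyIntegrable_expFn_mul hF (-m)),
    ← mollify_apply hκ (locallyIntegrable_expFn_mul hF m)] at h
  rw [Subalgebra.coe_smul, Pi.smul_apply, smul_eq_mul, neg_mul]
  exact eq_neg_of_add_eq_zero_left h

end Reflection

section ApproximateIdentity

open smoothFn
open scoped ComplexConjugate

variable {F : ℝ → ℂ} {κ : smoothFn}

lemma lintegral_enorm_sq_eq_ofReal {f : ℝ → ℂ} (hf : MemLp f 2) :
    ∫⁻ t, ‖f t‖ₑ ^ 2 = ENNReal.ofReal (∫ t, ‖f t‖ ^ 2) := by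
  rw [ofReal_integral_eq_lintegral_ofReal ((memLp_two_iff_integrable_sq_norm hf.1).1 hf)
    (.of_forall fun _ => sq_nonneg _)]
  refine lintegral_congr fun t => ?_
  rw [ENNReal.ofReal_pow (norm_nonneg _), ofReal_norm]

lemma lintegral_enorm_sq_le_of_re_integral_eq_zero {A B : ℝ → ℂ} (hA : MemLp A 2) (hB : MemLp B 2)
    (h : (∫ t, B t * conj (A t)).re = 0) :
    ∫⁻ t, ‖A t‖ₑ ^ 2 ≤ ∫⁻ t, ‖(A - B) t‖ₑ ^ 2 := by
  rw [lintegral_enorm_sq_eq_ofReal hA, lintegral_enorm_sq_eq_ofReal (hA.sub hB)]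
  refine ENNReal.ofReal_le_ofReal ?_
  have hi : Integrable fun t => B t * conj (A t) := hB.integrable_mul hA.star
  have hi' : Integrable fun t => (B t * conj (A t)).re := hi.re
  have hre : ∫ t, (B t * conj (A t)).re = 0 := (integral_re hi).trans h
  have hsq := (memLp_two_iff_integrable_sq_norm hA.1).1 hA
  have hsub := (memLp_two_iff_integrable_sq_norm (hA.sub hB).1).1 (hA.sub hB)
  calc _ ≤ ∫ t, (‖(A - B) t‖ ^ 2 + 2 * (B t * conj (A t)).re) := by
        refine integral_mono hsq (hsub.add (hi'.const_mul 2)) fun t => ?_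
        simp only [Pi.sub_apply, Complex.sq_norm, Complex.normSq_apply, Complex.sub_re,
          Complex.sub_im, Complex.mul_re, Complex.conj_re, Complex.conj_im]
        nlinarith [sq_nonneg (B t).re, sq_nonneg (B t).im]
    _ = _ := by
      rw [integral_add hsub (hi'.const_mul 2), integral_const_mul, hre, mul_zero, add_zero]

/-- The normalized bump function `φ` as a mollification kernel. -/
def bumpKernel (φ : ContDiffBump (0 : ℝ)) : smoothFn :=
  ⟨fun t => (φ.normed volume t : ℂ),
    mem_iff.2 (Complex.ofRealCLM.contDiff.comp φ.contDiff_normed)⟩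

lemma bumpKernel_apply (φ : ContDiffBump (0 : ℝ)) (t : ℝ) :
    bumpKernel φ t = (φ.normed volume t : ℂ) := rfl

lemma hasCompactSupport_bumpKernel (φ : ContDiffBump (0 : ℝ)) :
    HasCompactSupport (bumpKernel φ) :=
  φ.hasCompactSupport_normed.comp_left Complex.ofReal_zero

lemma ae_tendsto_mollify_bumpKernel {φ : ℕ → ContDiffBump (0 : ℝ)} {K : ℝ}
    (hφ : Tendsto (fun i => (φ i).rOut) atTop (𝓝 0)) (hK : ∀ i, (φ i).rOut ≤ K * (φ i).rIn)
    (hF : LocallyIntegrable F) :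
    ∀ᵐ t, Tendsto (fun i => mollify (hasCompactSupport_bumpKernel (φ i)) hF t) atTop
      (𝓝 (F t)) := by
  filter_upwards [ContDiffBump.ae_convolution_tendsto_right_of_locallyIntegrable (μ := volume)
    hφ (.of_forall hK) hF] with t ht
  refine ht.congr fun i => ?_
  rw [convolution_eq_swap, mollify_apply]
  rfl

lemma tendsto_lintegral_enorm_mul_bumpKernel {φ : ℕ → ContDiffBump (0 : ℝ)}
    (hφ : Tendsto (fun i => (φ i).rOut) atTop (𝓝 0)) {h : smoothFn} (h0 : h 0 = 0) :
    Tendsto (fun i => ∫⁻ t, ‖(h * bumpKernel (φ i)) t‖ₑ) atTop (𝓝 0) := by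
  have hcont : Continuous fun t => ‖h (-t)‖ := ((continuous h).comp continuous_neg).norm
  have hconv := ContDiffBump.convolution_tendsto_right_of_continuous (μ := volume) hφ hcont 0
  rw [neg_zero, h0, norm_zero] at hconv
  refine ENNReal.ofReal_zero ▸ (ENNReal.tendsto_ofReal hconv).congr fun i => ?_
  rw [← ofReal_integral_norm_eq_lintegral_enorm ((continuous _).integrable_of_hasCompactSupport
    (hasCompactSupport_mul (hasCompactSupport_bumpKernel (φ i)) h))]
  congr 1
  refine integral_congr_ae (.of_forall fun t => ?_)
  simp only [zero_sub, neg_neg, ContinuousLinearMap.lsmul_apply, smul_eq_mul,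
    Subalgebra.coe_mul, Pi.mul_apply, norm_mul, bumpKernel_apply, Complex.norm_real,
    Real.norm_of_nonneg ((φ i).nonneg_normed t)]
  exact mul_comm _ _

end ApproximateIdentity

section Uniqueness

open smoothFn

variable {F : ℝ → ℂ} {κ : smoothFn} {m : ℝ} {s : ℂ} {Q : Polynomial ℂ}

lemma lintegral_enorm_mollify_sq_le_of_weak_solution (hm : 0 < m)
    (hQ : ∀ w, Q.IsRoot w → m ≤ |w.re|) (hQr : Q.comp (-Polynomial.X) = Q)
    (hQs : (Q.map (starRingEnd ℂ)).comp (-Polynomial.X) = Q) (hs : s.re = 0) (hs0 : s ≠ 0)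
    (hF : MemLp F 2) (hFl : LocallyIntegrable F)
    (hT : ∀ G : smoothFn, HasCompactSupport G →
      ∫ t, F t * (expFn (-m) * (aeval D Q G + s • (expFn (2 * m) * G))) t = 0)
    (hκ : HasCompactSupport κ) :
    ∫⁻ t, ‖mollify (hasCompactSupport_mul hκ (expFn m)) hFl t‖ₑ ^ 2 ≤
      (∫⁻ t, ‖((expFn m - expFn (-m)) * κ) t‖ₑ) ^ 2 * ∫⁻ t, ‖F t‖ₑ ^ 2 := by
  have hp := hasCompactSupport_mul hκ (expFn m)
  have hn := hasCompactSupport_mul hκ (expFn (-m))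
  have hd := hasCompactSupport_mul hκ (expFn m - expFn (-m))
  have hsub : mollify hd hFl = mollify hp hFl - mollify hn hFl :=
    eq_sub_of_add_eq (mollify_add (by rw [sub_mul, sub_add_cancel]) hp hd hn hFl).symm
  have heq := aeval_mollify_eq_of_forall_integral_eq_zero hFl hQr hT hκ
  rw [mollify_expFn_mul (neg_add_cancel (m : ℂ)) hκ hFl,
    mollify_expFn_mul (add_neg_cancel (m : ℂ)) hκ hFl] at heq
  calc _ ≤ ∫⁻ t, ‖mollify hd hFl t‖ₑ ^ 2 := by
        rw [hsub]
        exact lintegral_enorm_sq_le_of_re_integral_eq_zero (memLp_mollify hp hFl hF)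
          (memLp_mollify hn hFl hF) (re_integral_mul_conj_eq_zero hm hQ hQs hs hs0
            (memSobolev_mollify hp hFl hF) (memSobolev_mollify hn hFl hF) heq)
    _ ≤ _ := lintegral_enorm_mollify_sq_le hd hFl

lemma ae_tendsto_mollify_expFn_mul_bumpKernel {φ : ℕ → ContDiffBump (0 : ℝ)} {K : ℝ}
    (hφ : Tendsto (fun i => (φ i).rOut) atTop (𝓝 0)) (hK : ∀ i, (φ i).rOut ≤ K * (φ i).rIn)
    (hF : LocallyIntegrable F) (a : ℂ) :
    ∀ᵐ t, Tendsto (fun i => mollify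
      (hasCompactSupport_mul (hasCompactSupport_bumpKernel (φ i)) (expFn a)) hF t) atTop
      (𝓝 (F t)) := by
  have hinv (t : ℝ) : expFn a t * expFn (-a) t = 1 := by
    rw [expFn_apply, expFn_apply, ← Complex.exp_add, neg_mul, add_neg_cancel, Complex.exp_zero]
  filter_upwards [ae_tendsto_mollify_bumpKernel hφ hK (locallyIntegrable_expFn_mul hF (-a))]
    with t ht
  have h := ht.const_mul (expFn a t)
  rw [Pi.mul_apply, ← mul_assoc, hinv, one_mul] at h
  refine h.congr fun i => ?_
  rw [mollify_expFn_mul (neg_add_cancel a) (hasCompactSupport_bumpKernel (φ i)) hF,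
    Subalgebra.coe_mul, Pi.mul_apply, ← mul_assoc, hinv, one_mul]

lemma ae_eq_zero_of_weak_solution (hm : 0 < m)
    (hQ : ∀ w, Q.IsRoot w → m ≤ |w.re|) (hQr : Q.comp (-Polynomial.X) = Q)
    (hQs : (Q.map (starRingEnd ℂ)).comp (-Polynomial.X) = Q) (hs : s.re = 0) (hs0 : s ≠ 0)
    (hF : MemLp F 2)
    (hT : ∀ G : smoothFn, HasCompactSupport G →
      ∫ t, F t * (expFn (-m) * (aeval D Q G + s • (expFn (2 * m) * G))) t = 0) :
    F =ᵐ[volume] 0 := by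
  have hFl : LocallyIntegrable F := hF.locallyIntegrable (by norm_num)
  let φ (i : ℕ) : ContDiffBump (0 : ℝ) :=
    ⟨1 / (i + 1) / 2, 1 / (i + 1), by positivity, half_lt_self (by positivity)⟩
  have hφ : Tendsto (fun i => (φ i).rOut) atTop (𝓝 0) := tendsto_one_div_add_atTop_nhds_zero_nat
  have hae := ae_tendsto_mollify_expFn_mul_bumpKernel (K := 2) hφ
    (fun i => (mul_div_cancel₀ _ two_ne_zero).ge) hFl m
  have hcpt (i : ℕ) := hasCompactSupport_bumpKernel (φ i)
  have hlim : Tendsto (fun i => (∫⁻ t, ‖((expFn m - expFn (-m)) * bumpKernel (φ i)) t‖ₑ) ^ 2 *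
      ∫⁻ t, ‖F t‖ₑ ^ 2) atTop (𝓝 0) := by
    have h := tendsto_lintegral_enorm_mul_bumpKernel hφ (h := expFn m - expFn (-m))
      (by simp [expFn_apply])
    simpa using ENNReal.Tendsto.mul_const (ENNReal.Tendsto.pow (n := 2) h)
      (.inr ((memLp_two_iff_lintegral_lt_top hF.1).1 hF).ne)
  have hfatou : ∫⁻ t, ‖F t‖ₑ ^ 2 ≤ 0 := calc
    _ = ∫⁻ t, liminf (fun i =>
          ‖mollify (hasCompactSupport_mul (hcpt i) (expFn m)) hFl t‖ₑ ^ 2) atTop := by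
        refine lintegral_congr_ae ?_
        filter_upwards [hae] with t ht
        exact (ENNReal.Tendsto.pow ht.enorm).liminf_eq.symm
    _ ≤ liminf (fun i => ∫⁻ t,
          ‖mollify (hasCompactSupport_mul (hcpt i) (expFn m)) hFl t‖ₑ ^ 2) atTop :=
        lintegral_liminf_le fun i => (continuous _).measurable.enorm.pow_const 2
    _ ≤ _ := liminf_le_liminf (.of_forall fun i =>
        lintegral_enorm_mollify_sq_le_of_weak_solution hm hQ hQr hQs hs hs0 hF hFl hT (hcpt i))
    _ = 0 := hlim.liminf_eq
  filter_upwards [(lintegral_eq_zero_iff' (hF.1.enorm.pow_const 2)).1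
    (nonpos_iff_eq_zero.1 hfatou)] with t ht
  simpa using ht

end Uniqueness

section PolynomialApproximation

open scoped ComplexConjugate

variable {n : ℕ} {K : Set (𝓔 n)}

/-- The coordinate functions of `ℝⁿ`, restricted to `K`. -/
def coordOn (K : Set (𝓔 n)) (i : Fin n) : C(K, ℂ) :=
  ⟨fun x => ((x : 𝓔 n) i : ℂ), by fun_prop⟩

lemma aeval_coordOn_apply (p : MvPolynomial (Fin n) ℂ) (x : K) :
    MvPolynomial.aeval (coordOn K) p x = evalPoly p x := by
  rw [evalPoly]
  induction p using MvPolynomial.induction_on with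
  | C a => simp
  | add p q hp hq => simp [hp, hq]
  | mul_X p i hp =>
    rw [map_mul, map_mul, MvPolynomial.aeval_X, MvPolynomial.eval_X, ContinuousMap.mul_apply, hp]
    rfl

/-- The star algebra of complex polynomial functions on `K`. -/
def polyStarSubalgebra (K : Set (𝓔 n)) : StarSubalgebra ℂ C(K, ℂ) where
  toSubalgebra := (MvPolynomial.aeval (coordOn K)).range
  star_mem' := by
    rintro _ ⟨p, rfl⟩
    refine ⟨MvPolynomial.map (starRingEnd ℂ) p, ?_⟩
    ext x
    change MvPolynomial.aeval (coordOn K) _ x = conj (MvPolynomial.aeval (coordOn K) p x)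
    rw [aeval_coordOn_apply, aeval_coordOn_apply, evalPoly, evalPoly, MvPolynomial.map_eval]
    congr 2
    ext i
    simp

lemma separatesPoints_polyStarSubalgebra : (polyStarSubalgebra K).SeparatesPoints := by
  intro x y hxy
  obtain ⟨i, hi⟩ : ∃ i, (x : 𝓔 n) i ≠ (y : 𝓔 n) i := by
    by_contra! h
    exact hxy (Subtype.ext (PiLp.ext h))
  exact ⟨coordOn K i, ⟨coordOn K i, ⟨MvPolynomial.X i, MvPolynomial.aeval_X _ _⟩, rfl⟩,
    fun h => hi (Complex.ofReal_injective h)⟩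

lemma exists_evalPoly_near (hK : IsCompact K) {φ : 𝓔 n → ℂ} (hφ : Continuous φ) {ε : ℝ}
    (hε : 0 < ε) : ∃ p, ∀ x ∈ K, ‖φ x - evalPoly p x‖ ≤ ε := by
  have : CompactSpace K := isCompact_iff_compactSpace.1 hK
  let f : C(K, ℂ) := ⟨fun x => φ x, by fun_prop⟩
  have hf : f ∈ (polyStarSubalgebra K).topologicalClosure := by
    rw [ContinuousMap.starSubalgebra_topologicalClosure_eq_top_of_separatesPoints _
      separatesPoints_polyStarSubalgebra]
    exact StarSubalgebra.mem_top
  obtain ⟨_, ⟨p, rfl⟩, hp⟩ := Metric.mem_closure_iff.1 hf ε hε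
  refine ⟨p, fun x hx => ?_⟩
  rw [← aeval_coordOn_apply p ⟨x, hx⟩, ← dist_eq_norm]
  exact ((ContinuousMap.dist_lt_iff hε).1 hp ⟨x, hx⟩).le

end PolynomialApproximation

section Completeness

open smoothFn

variable {n m : ℕ} {c : ℝ} {s : ℂ} {U : 𝓔 n → ℂ} {φ : 𝓔 n → ℂ} {G : smoothFn}

lemma map_symbol_comp_neg_X (n m k : ℕ) (c : ℝ) :
    ((symbol n m k c).map (starRingEnd ℂ)).comp (-Polynomial.X) = symbol n m k c := by
  simp [symbol, symbolProd, Polynomial.prod_comp, Polynomial.map_prod, Complex.conj_ofNat]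

lemma symbol_comp_neg_X (n m k : ℕ) (c : ℝ) :
    (symbol n m k c).comp (-Polynomial.X) = symbol n m k c := by
  simp [symbol, symbolProd, Polynomial.prod_comp]

lemma integral_mul_symbol_eq_zero {k : ℕ} {p : MvPolynomial (Fin n) ℂ} {F : ℝ → ℂ}
    (hU : MemLp U 2) (hT : ∀ φ, IsTest φ → ∫ x, U x * (rellichExpr m c φ x + s * φ x) = 0)
    (h : ∀ j < k, RadOrthogonal U j) (hp : p.IsHomogeneous k)
    (hF : ∀ G : smoothFn, HasCompactSupport G →
      ∫ x, U x * radPoly (expFn (-(n / 2) - k) * G) p x = ∫ t, F t * G t)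
    (hG : HasCompactSupport G) :
    ∫ t, F t * (expFn (-m) * (aeval D (symbol n m k c) G + s • (expFn (2 * m) * G))) t = 0 := by
  have hexp : HasCompactSupport (s • (expFn (2 * m) * G) : smoothFn) := by
    rw [← smul_mul_assoc]
    exact hasCompactSupport_mul hG (s • expFn (2 * m))
  have hcpt : HasCompactSupport
      (aeval D (symbol n m k c) G + s • (expFn (2 * m) * G) : smoothFn) :=
    HasCompactSupport.add (hasCompactSupport_aeval hG (symbol n m k c)) hexp
  have hF' := hF (expFn (-m) * (aeval D (symbol n m k c) G + s • (expFn (2 * m) * G)))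
    (hasCompactSupport_mul hcpt (expFn (-m)))
  rw [expFn_mul_expFn_mul, show (-(n / 2) - k + -m : ℂ) = -m - n / 2 - k by ring] at hF'
  exact hF'.symm.trans (integral_mul_radPoly_symbol_eq_zero hU hT h hp hG)

lemma radOrthogonal_of_forall_isRoot [NeZero n] (hm : 0 < m)
    (hr : ∀ k w, (symbol n m k c).IsRoot w → (m : ℝ) ≤ |w.re|) (hs : s.re = 0) (hs0 : s ≠ 0)
    (hU : MemLp U 2)
    (hT : ∀ φ, IsTest φ → ∫ x, U x * (rellichExpr m c φ x + s * φ x) = 0) (k : ℕ) :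
    RadOrthogonal U k := by
  induction k using Nat.strong_induction_on with
  | _ k ih =>
  intro p hp G hG
  obtain ⟨F, hF, hFU⟩ := exists_radial_component hU hp
  have hF0 : F =ᵐ[volume] 0 := by
    refine ae_eq_zero_of_weak_solution (Nat.cast_pos.2 hm) (hr k) (symbol_comp_neg_X n m k c)
      (map_symbol_comp_neg_X n m k c) hs hs0 hF fun G hG => ?_
    rw [Complex.ofReal_natCast]
    exact integral_mul_symbol_eq_zero hU hT ih hp hFU hG
  have h := hFU (expFn (n / 2 + k) * G) (hasCompactSupport_mul hG (expFn (n / 2 + k)))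
  rw [expFn_mul_expFn_mul, show (-(n / 2) - k + (n / 2 + k) : ℂ) = 0 by ring, expFn_zero,
    one_mul] at h
  refine h.trans (integral_eq_zero_of_ae ?_)
  filter_upwards [hF0] with t ht
  rw [ht, Pi.zero_apply, zero_mul]

lemma radPoly_eq_mul_evalPoly (G : smoothFn) (p : MvPolynomial (Fin n) ℂ) (x : 𝓔 n) :
    radPoly G p x = radPoly G 1 x * evalPoly p x := by
  by_cases hx : x = 0
  · simp [radPoly, hx]
  · simp [radPoly_of_ne hx, evalPoly]

lemma integral_mul_radPoly_eq_zero (hU : MemLp U 2) (h : ∀ k, RadOrthogonal U k)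
    (hG : HasCompactSupport G) (p : MvPolynomial (Fin n) ℂ) : ∫ x, U x * radPoly G p x = 0 := by
  have hsum (x : 𝓔 n) : U x * radPoly G p x = ∑ i ∈ Finset.range (p.totalDegree + 1),
      U x * radPoly G (MvPolynomial.homogeneousComponent i p) x := by
    rw [← Finset.mul_sum, radPoly_eq_mul_evalPoly,
      Finset.sum_congr rfl fun i _ => radPoly_eq_mul_evalPoly G _ x, ← Finset.mul_sum,
      ← evalPoly_sum, MvPolynomial.sum_homogeneousComponent]
  simp only [hsum]
  rw [integral_finsetSum _ fun i _ => (isTest_radPoly hG _).integrable_mul_left hU]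
  exact Finset.sum_eq_zero fun i _ =>
    h i _ (MvPolynomial.homogeneousComponent_isHomogeneous i p) G hG

lemma IsTest.ne_zero (hφ : IsTest φ) {x : 𝓔 n} (hx : x ∈ tsupport φ) : x ≠ 0 :=
  fun h => hφ.zero_notMem (h ▸ hx)

lemma exists_hasCompactSupport_eventuallyEq_one {K : Set (𝓔 n)} (hK : IsCompact K)
    (h0 : ∀ x ∈ K, x ≠ 0) : ∃ G : smoothFn,
    HasCompactSupport G ∧ ∀ x ∈ K, G =ᶠ[𝓝 (Real.log ‖x‖)] 1 := by
  have hc : ContinuousOn (fun x : 𝓔 n => Real.log ‖x‖) K :=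
    continuous_norm.continuousOn.log fun x hx => norm_ne_zero_iff.2 (h0 x hx)
  obtain ⟨R, hR⟩ := hK.exists_bound_of_continuousOn hc
  let b : ContDiffBump (0 : ℝ) := ⟨|R| + 1, |R| + 2, by positivity, by linarith⟩
  refine ⟨⟨fun t => (b t : ℂ), mem_iff.2 (Complex.ofRealCLM.contDiff.comp b.contDiff)⟩,
    b.hasCompactSupport.comp_left Complex.ofReal_zero, fun x hx => ?_⟩
  have hmem : Real.log ‖x‖ ∈ Metric.ball 0 b.rIn :=
    mem_ball_zero_iff.2 ((hR x hx).trans_lt ((le_abs_self R).trans_lt (lt_add_one _)))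
  filter_upwards [b.eventuallyEq_one_of_mem_ball hmem] with t ht
  simp [ht]

lemma radPoly_one_of_ne {x : 𝓔 n} (hx : x ≠ 0) (G : smoothFn) :
    radPoly G 1 x = G (Real.log ‖x‖) := by
  simp [radPoly_of_ne hx, evalPoly]

lemma norm_integral_mul_le (hU : MemLp U 2) (h : ∀ k, RadOrthogonal U k) (hφ : IsTest φ)
    (hG : HasCompactSupport G) (hGφ : ∀ x ∈ tsupport φ, radPoly G 1 x = 1) {ε : ℝ} (hε : 0 < ε) :
    ‖∫ x, U x * φ x‖ ≤ ε * ∫ x, ‖U x * radPoly G 1 x‖ := by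
  set θ := radPoly G (1 : MvPolynomial (Fin n) ℂ)
  have hθ : IsTest θ := isTest_radPoly hG 1
  obtain ⟨p, hp⟩ := exists_evalPoly_near hθ.compact.isCompact hφ.continuous hε
  have hφθ (x : 𝓔 n) : φ x = θ x * φ x := by
    by_cases hx : x ∈ tsupport φ
    · rw [hGφ x hx, one_mul]
    · rw [image_eq_zero_of_notMem_tsupport hx, mul_zero]
  have hsub : ∫ x, U x * φ x = ∫ x, U x * θ x * (φ x - evalPoly p x) := by
    rw [← sub_zero (∫ x, U x * φ x), ← integral_mul_radPoly_eq_zero hU h hG p,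
      ← integral_sub (hφ.integrable_mul_left hU) ((isTest_radPoly hG p).integrable_mul_left hU)]
    refine integral_congr_ae (.of_forall fun x => ?_)
    simp only [radPoly_eq_mul_evalPoly G p]
    linear_combination U x * hφθ x
  rw [hsub, ← integral_const_mul]
  refine norm_integral_le_of_norm_le ((hθ.integrable_mul_left hU).norm.const_mul ε)
    (.of_forall fun x => ?_)
  rw [norm_mul, mul_comm]
  by_cases hx : x ∈ tsupport θ
  · gcongr
    exact hp x hx
  · simp [image_eq_zero_of_notMem_tsupport hx]

lemma ae_eq_zero_of_forall_radOrthogonal [NeZero n] (hU : MemLp U 2)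
    (h : ∀ k, RadOrthogonal U k) : U =ᵐ[volume] 0 := by
  refine ae_eq_zero_of_forall_isTest (hU.locallyIntegrable (by norm_num)) fun φ hφ => ?_
  obtain ⟨G, hG, hGφ⟩ :=
    exists_hasCompactSupport_eventuallyEq_one hφ.compact.isCompact fun _ => hφ.ne_zero
  have hGφ' (x : 𝓔 n) (hx : x ∈ tsupport φ) : radPoly G 1 x = 1 :=
    (radPoly_one_of_ne (hφ.ne_zero hx) G).trans (hGφ x hx).eq_of_nhds
  have hlim : Tendsto (fun ε : ℝ => ε * ∫ x, ‖U x * radPoly G 1 x‖) (𝓝[>] 0) (𝓝 0) := by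
    simpa using (tendsto_id.mul_const (∫ x, ‖U x * radPoly G 1 x‖)).mono_left
      (nhdsWithin_le_nhds (a := (0 : ℝ)) (s := Set.Ioi 0))
  refine norm_le_zero_iff.1 (ge_of_tendsto hlim ?_)
  filter_upwards [self_mem_nhdsWithin] with ε hε using norm_integral_mul_le hU h hφ hG hGφ' hε

theorem essentiallySelfAdjoint_rellichOp_of_forall_isRoot [NeZero n] (hm : 0 < m)
    (hr : ∀ k w, (symbol n m k c).IsRoot w → (m : ℝ) ≤ |w.re|) :
    EssentiallySelfAdjoint (rellichOp n m c) :=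
  essentiallySelfAdjoint_rellichOp_of_forall_ae_eq_zero fun _ hs hs0 _ hU hT =>
    ae_eq_zero_of_forall_radOrthogonal hU (radOrthogonal_of_forall_isRoot hm hr hs hs0 hU hT)

end Completeness

section RadialSolutions

open smoothFn
open scoped ComplexConjugate

variable {n m : ℕ} {c : ℝ} {x : 𝓔 n} {φ : 𝓔 n → ℂ} {f g : smoothFn}

lemma radPoly_mul_conj_radPoly (hx : x ≠ 0) (f g : smoothFn) :
    radPoly (expFn (-(n / 2)) * f) 1 x * conj (radPoly (expFn (-(n / 2)) * g) 1 x) =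
      (‖x‖ ^ n)⁻¹ • (f (Real.log ‖x‖) * conj (g (Real.log ‖x‖))) := by
  have hexp : Complex.exp (-(n / 2) * (Real.log ‖x‖ : ℝ)) *
      conj (Complex.exp (-(n / 2) * (Real.log ‖x‖ : ℝ))) = ((‖x‖ : ℂ) ^ n)⁻¹ := by
    rw [← exp_neg_mul_log_norm hx, ← Complex.exp_conj, ← Complex.exp_add]
    simp only [map_mul, map_neg, map_div₀, Complex.conj_natCast, Complex.conj_ofNat,
      Complex.conj_ofReal]
    ring_nf
  rw [radPoly_one_of_ne hx, radPoly_one_of_ne hx, Complex.real_smul, Complex.ofReal_inv,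
    Complex.ofReal_pow, ← hexp]
  simp only [MulMemClass.coe_mul, Pi.mul_apply, expFn_apply, map_mul]
  ring

lemma memLp_radPoly [NeZero n] (hf : MemLp f 2) :
    MemLp (radPoly (n := n) (expFn (-(n / 2)) * f) 1) 2 := by
  have h := hf.comp_measurePreserving (measurePreserving_log_norm (n := n))
  rw [memLp_two_iff_integrable_sq_norm h.1, integrable_logMeasure] at h
  rw [memLp_two_iff_integrable_sq_norm (measurable_radPoly _ _).aestronglyMeasurable]
  refine h.congr ?_
  filter_upwards [Measure.ae_ne volume (0 : 𝓔 n)] with x hx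
  apply Complex.ofReal_injective
  push_cast
  rw [← Complex.mul_conj', ← Complex.mul_conj', radPoly_mul_conj_radPoly hx, Complex.real_smul]
  simp

lemma integral_radPoly_mul_conj [NeZero n] (f g : smoothFn) :
    ∫ x : 𝓔 n, radPoly (expFn (-(n / 2)) * f) 1 x *
        conj (radPoly (expFn (-(n / 2)) * g) 1 x) =
      (sphereArea n).toReal * ∫ t, f t * conj (g t) := by
  have hc : Continuous fun t => f t * conj (g t) :=
    (continuous f).mul (Complex.continuous_conj.comp (continuous g))
  rw [← (measurePreserving_log_norm (n := n)).map_eq,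
    integral_map measurePreserving_log_norm.aemeasurable hc.aestronglyMeasurable,
    integral_logMeasure, Complex.real_smul, ← mul_assoc, Complex.ofReal_inv,
    mul_inv_cancel₀ (Complex.ofReal_ne_zero.2 toReal_sphereArea_ne_zero), one_mul]
  refine integral_congr_ae ?_
  filter_upwards [Measure.ae_ne volume (0 : 𝓔 n)] with x hx using
    radPoly_mul_conj_radPoly hx f g

lemma radPoly_expFn_mul_congr (h : f =ᶠ[𝓝 (Real.log ‖x‖)] g) (hx : x ≠ 0) (a : ℂ) :
    radPoly (expFn a * f) 1 x = radPoly (expFn a * g) 1 x := by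
  rw [radPoly_one_of_ne hx, radPoly_one_of_ne hx, MulMemClass.coe_mul, MulMemClass.coe_mul,
    Pi.mul_apply, Pi.mul_apply, h.eq_of_nhds]

lemma integral_mul_congr_of_tsupport {u v : 𝓔 n → ℂ} (h : ∀ x ∈ tsupport φ, u x = v x) :
    ∫ x, u x * φ x = ∫ x, v x * φ x := by
  refine integral_congr_ae (.of_forall fun x => ?_)
  by_cases hx : x ∈ tsupport φ
  · simp only [h x hx]
  · simp only [image_eq_zero_of_notMem_tsupport hx, mul_zero]

lemma integral_radPoly_mul_rellichExpr (f : smoothFn) (c : ℝ) (hφ : IsTest φ) :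
    ∫ x, radPoly (expFn (m - n / 2) * f) 1 x * rellichExpr m c φ x =
      ∫ x, radPoly (expFn (-m - n / 2) * aeval D (symbol n m 0 c) f) 1 x * φ x := by
  have hψ := hφ.rellichExpr m c
  obtain ⟨G, hG, hG1⟩ := exists_hasCompactSupport_eventuallyEq_one
    (hφ.compact.isCompact.union hψ.compact.isCompact) fun _ hx => hx.elim hφ.ne_zero hψ.ne_zero
  have hGf (x : 𝓔 n) (hx : x ∈ tsupport φ ∪ tsupport (rellichExpr m c φ)) :
      f =ᶠ[𝓝 (Real.log ‖x‖)] (f * G : smoothFn) := by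
    filter_upwards [hG1 x hx] with t ht
    simp [ht]
  have key := integral_rellichExpr_mul (m := m) (isTest_radPoly (hasCompactSupport_mul
    (hasCompactSupport_mul hG f) (expFn (m - n / 2))) (1 : MvPolynomial (Fin n) ℂ)) hφ c
  rw [rellichExpr_radPoly_one (hasCompactSupport_mul hG f)] at key
  rw [integral_mul_congr_of_tsupport fun x hx =>
      radPoly_expFn_mul_congr (hGf x (.inr hx)) (hψ.ne_zero hx) (m - n / 2), ← key,
    integral_mul_congr_of_tsupport fun x hx => radPoly_expFn_mul_congr
      (aeval_congr (P := symbol n m 0 c) (hGf x (.inl hx))) (hφ.ne_zero hx) (-m - n / 2)]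

lemma integral_expFn_mul_mul_conj {a b : ℝ} (h : a + b = 0) (f g : smoothFn) :
    ∫ t, (expFn a * f) t * conj ((expFn b * g) t) = ∫ t, f t * conj (g t) := by
  refine integral_congr_ae (.of_forall fun t => ?_)
  have hexp : Complex.exp (a * t) * Complex.exp (b * t) = 1 := by
    rw [← Complex.exp_add, ← add_mul, ← Complex.ofReal_add, h, Complex.ofReal_zero, zero_mul,
      Complex.exp_zero]
  simp only [MulMemClass.coe_mul, Pi.mul_apply, expFn_apply, map_mul, ← Complex.exp_conj,
    Complex.conj_ofReal]
  linear_combination (f t * conj (g t)) * hexp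

lemma EssentiallySelfAdjoint.integral_symbol_mul_conj [NeZero n]
    (h : EssentiallySelfAdjoint (rellichOp n m c))
    (hf : MemLp (expFn m * f : smoothFn) 2)
    (hf' : MemLp (expFn (-m) * aeval D (symbol n m 0 c) f : smoothFn) 2)
    (hg : MemLp (expFn m * g : smoothFn) 2)
    (hg' : MemLp (expFn (-m) * aeval D (symbol n m 0 c) g : smoothFn) 2) :
    ∫ t, aeval D (symbol n m 0 c) f t * conj (g t) =
      ∫ t, f t * conj (aeval D (symbol n m 0 c) g t) := by
  have hpos (f : smoothFn) : expFn (-(n / 2)) * (expFn m * f) = expFn (m - n / 2) * f := by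
    rw [expFn_mul_expFn_mul, neg_add_eq_sub]
  have hneg (f : smoothFn) : expFn (-(n / 2)) * (expFn (-m) * f) = expFn (-m - n / 2) * f := by
    rw [expFn_mul_expFn_mul, neg_add_eq_sub]
  have key := h.integral_eq (memLp_radPoly hf) (memLp_radPoly hf') (memLp_radPoly hg)
    (memLp_radPoly hg')
    (fun φ hφ => by rw [hpos, hneg]; exact integral_radPoly_mul_rellichExpr f c hφ)
    (fun φ hφ => by rw [hpos, hneg]; exact integral_radPoly_mul_rellichExpr g c hφ)
  rw [integral_radPoly_mul_conj, integral_radPoly_mul_conj] at key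
  have key := mul_left_cancel₀ (Complex.ofReal_ne_zero.2 toReal_sphereArea_ne_zero) key
  rw [← Complex.ofReal_natCast, ← Complex.ofReal_neg,
    integral_expFn_mul_mul_conj (neg_add_cancel _), integral_expFn_mul_mul_conj (add_neg_cancel _)]
    at key
  exact key

end RadialSolutions

section Defect

open smoothFn
open scoped ComplexConjugate

variable {n m j : ℕ} {c a : ℝ} {w z : ℂ} {f g : smoothFn} {P R : Polynomial ℂ}

namespace smoothFn

/-- A smooth cutoff which is `1` on `(-∞, a - 1]` and `0` on `[a, ∞)`. -/
def cut (a : ℝ) : smoothFn :=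
  ⟨fun t => (Real.smoothTransition (a - t) : ℂ), mem_iff.2
    (Complex.ofRealCLM.contDiff.comp (Real.smoothTransition.contDiff.comp
      (contDiff_const.sub contDiff_id)))⟩

/-- The identity function as a smooth function `ℝ → ℂ`. -/
def idFn : smoothFn := ⟨fun t => (t : ℂ), mem_iff.2 Complex.ofRealCLM.contDiff⟩

variable {t : ℝ}

lemma cut_eq_one (h : t ≤ a - 1) : cut a t = 1 := by
  simp [cut, Real.smoothTransition.one_of_one_le (show 1 ≤ a - t by linarith)]

lemma cut_eq_zero (h : a ≤ t) : cut a t = 0 := by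
  simp [cut, Real.smoothTransition.zero_of_nonpos (show a - t ≤ 0 by linarith)]

lemma aeval_cut_mul_of_lt (P : Polynomial ℂ) (h : t < a - 1) (f : smoothFn) :
    aeval D P (cut a * f) t = aeval D P f t := by
  refine (aeval_congr (f := cut a * f) (g := f) ?_).eq_of_nhds
  filter_upwards [eventually_lt_nhds h] with r hr
  simp [cut_eq_one hr.le]

lemma aeval_cut_mul_of_gt (P : Polynomial ℂ) (h : a < t) (f : smoothFn) :
    aeval D P (cut a * f) t = 0 := by
  have h0 : (cut a * f : smoothFn) =ᶠ[𝓝 t] (0 : smoothFn) := by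
    filter_upwards [eventually_gt_nhds h] with r hr
    simp [cut_eq_zero hr.le]
  rw [(aeval_congr (P := P) h0).eq_of_nhds, map_zero]
  rfl

lemma hasCompactSupport_aeval_cut_mul (h : aeval D P f = 0) (a : ℝ) :
    HasCompactSupport (aeval D P (cut a * f)) := by
  refine HasCompactSupport.intro (isCompact_Icc (a := a - 1) (b := a)) fun t ht => ?_
  rw [Set.mem_Icc, not_and_or, not_le, not_le] at ht
  rcases ht with ht | ht
  · rw [aeval_cut_mul_of_lt P ht, h]
    rfl
  · exact aeval_cut_mul_of_gt P ht f

lemma integral_D_eq_neg (hD : HasCompactSupport (D f)) (hz : Tendsto f atBot (𝓝 z))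
    (h0 : Tendsto f atTop (𝓝 0)) : ∫ t, D f t = -z := by
  rw [integral_of_hasDerivAt_of_tendsto (fun _ => hasDerivAt)
    ((continuous _).integrable_of_hasCompactSupport hD) hz h0, zero_sub]

lemma D_one : D 1 = 0 := by simpa [expFn_zero] using D_expFn (a := 0)

lemma aeval_D_one (P : Polynomial ℂ) : aeval D P 1 = P.eval 0 • (1 : smoothFn) := by
  induction P using Polynomial.induction_on with
  | C b => simp [Algebra.smul_def]
  | add p q hp hq => simp [hp, hq, add_smul]
  | monomial j b ih =>
    rw [pow_succ', mul_left_comm, aeval_X_mul, ih, map_smul, D_one, smul_zero]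
    simp

lemma D_idFn : D idFn = 1 :=
  Subtype.ext (funext fun t => (Complex.ofRealCLM.hasDerivAt (x := t)).deriv)

lemma D_idFn_pow_succ (j : ℕ) : D (idFn ^ (j + 1)) = (j + 1) • idFn ^ j := by
  induction j with
  | zero => simp [D_idFn]
  | succ j ih =>
    rw [pow_succ, D_mul, ih, D_idFn, mul_one, smul_mul_assoc, ← pow_succ]
    exact (succ_nsmul _ _).symm

lemma aeval_mul_X_pow_idFn_pow (P : Polynomial ℂ) (j : ℕ) :
    aeval D (P * Polynomial.X ^ j) (idFn ^ j) = (j.factorial * P.eval 0) • (1 : smoothFn) := by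
  induction j with
  | zero => simp [aeval_D_one]
  | succ j ih =>
    rw [pow_succ Polynomial.X, ← mul_assoc, aeval_mul_apply, Polynomial.aeval_X, D_idFn_pow_succ,
      map_nsmul, ih, Nat.factorial_succ, ← Nat.cast_smul_eq_nsmul ℂ, smul_smul]
    push_cast
    ring_nf

lemma aeval_expFn_mul_idFn_pow_eq_zero
    (hP : P.comp (Polynomial.X + Polynomial.C w) = R * Polynomial.X ^ (j + 1)) :
    aeval D P (expFn w * idFn ^ j) = 0 := by
  rw [aeval_expFn_mul, hP, pow_succ', ← mul_assoc, aeval_mul_X_pow_idFn_pow]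
  simp

lemma isBigO_norm_expFn_mul_cut_mul_pow (hz : 0 < z.re) (a : ℝ) (j : ℕ) :
    (fun t => ‖(expFn z * (cut a * idFn ^ j) : smoothFn) t‖ ^ 2) =O[atBot]
      fun t => Real.exp (z.re * t) := by
  have hpow := ((isLittleO_pow_exp_pos_mul_atTop (2 * j) hz).comp_tendsto
    tendsto_neg_atBot_atTop).isBigO
  have h := (Asymptotics.isBigO_refl (fun t : ℝ => Real.exp (2 * z.re * t)) atBot).mul hpow
  refine h.congr' ?_ (.of_forall fun t => ?_)
  · filter_upwards [eventually_le_atBot (a - 1)] with t ht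
    have habs : ((-t) ^ j) ^ 2 = (|t| ^ j) ^ 2 := by rw [← sq_abs, abs_pow, abs_neg]
    simp [cut_eq_one ht, norm_expFn, idFn, mul_pow, ← Real.exp_nat_mul, pow_mul', mul_assoc, habs]
  · simp only [Function.comp_apply, ← Real.exp_add]
    ring_nf

lemma memLp_expFn_mul_cut_mul_pow (hz : 0 < z.re) (a : ℝ) (j : ℕ) :
    MemLp (expFn z * (cut a * idFn ^ j) : smoothFn) 2 := by
  have hc := continuous (expFn z * (cut a * idFn ^ j))
  have htop : (fun t => ‖(expFn z * (cut a * idFn ^ j) : smoothFn) t‖ ^ 2) =O[atTop]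
      (0 : ℝ → ℝ) := by
    refine Asymptotics.isBigO_zero_right_iff.2 ?_
    filter_upwards [eventually_ge_atTop a] with t ht
    simp [cut_eq_zero ht]
  rw [memLp_two_iff_integrable_sq_norm hc.aestronglyMeasurable]
  exact (hc.norm.pow 2).locallyIntegrable.integrable_of_isBigO_atBot_atTop
    (isBigO_norm_expFn_mul_cut_mul_pow hz a j)
    ⟨Set.Iic 0, Iic_mem_atBot 0, integrableOn_exp_mul_Iic hz 0⟩ htop
    ((integrable_zero ℝ ℝ volume).integrableAtFilter _)

lemma integral_D_aeval_cut_mul (R : Polynomial ℂ) (a : ℝ) (j : ℕ) :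
    ∫ t, D (aeval D (R * Polynomial.X ^ j) (cut a * idFn ^ j)) t = -(j.factorial * R.eval 0) := by
  have hlt {t : ℝ} (ht : t < a - 1) :
      aeval D (R * Polynomial.X ^ j) (cut a * idFn ^ j) t = j.factorial * R.eval 0 := by
    rw [aeval_cut_mul_of_lt _ ht, aeval_mul_X_pow_idFn_pow]
    simp
  have hD : HasCompactSupport (D (aeval D (R * Polynomial.X ^ j) (cut a * idFn ^ j))) := by
    rw [← aeval_X_mul]
    refine hasCompactSupport_aeval_cut_mul ?_ a
    rw [aeval_X_mul, aeval_mul_X_pow_idFn_pow, map_smul, D_one, smul_zero]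
  refine integral_D_eq_neg hD (tendsto_const_nhds.congr' ?_) (tendsto_const_nhds.congr' ?_)
  · filter_upwards [eventually_lt_atBot (a - 1)] with t ht using (hlt ht).symm
  · filter_upwards [eventually_gt_atTop a] with t ht using (aeval_cut_mul_of_gt _ ht _).symm

end smoothFn

lemma EssentiallySelfAdjoint.integral_aeval_cut_mul_eq_zero [NeZero n]
    (h : EssentiallySelfAdjoint (rellichOp n m c))
    (hf : aeval D (symbol n m 0 c) f = 0) (hg : aeval D (symbol n m 0 c) g = 0)
    (hf2 : MemLp (expFn m * (cut 0 * f) : smoothFn) 2)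
    (hg2 : MemLp (expFn m * (cut 2 * g) : smoothFn) 2) :
    ∫ t, aeval D (symbol n m 0 c) (cut 0 * f) t * conj (g t) = 0 := by
  have hmem {f : smoothFn} (hf : aeval D (symbol n m 0 c) f = 0) (a : ℝ) :
      MemLp (expFn (-m) * aeval D (symbol n m 0 c) (cut a * f) : smoothFn) 2 :=
    (continuous _).memLp_of_hasCompactSupport
      (hasCompactSupport_mul (hasCompactSupport_aeval_cut_mul hf a) (expFn (-m)))
  have key := h.integral_symbol_mul_conj hf2 (hmem hf 0) hg2 (hmem hg 2)
  trans ∫ t, aeval D (symbol n m 0 c) (cut 0 * f) t * conj ((cut 2 * g : smoothFn) t)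
  · refine integral_congr_ae (.of_forall fun t => ?_)
    rcases le_or_gt t 1 with ht | ht
    · simp [cut_eq_one (show t ≤ 2 - 1 by linarith)]
    · simp only [aeval_cut_mul_of_gt _ (show 0 < t by linarith), zero_mul]
  · rw [key]
    refine integral_eq_zero_of_ae (.of_forall fun t => ?_)
    rcases lt_or_ge t 1 with ht | ht
    · simp [aeval_cut_mul_of_lt (symbol n m 0 c) (show t < 2 - 1 by linarith), hg]
    · simp [cut_eq_zero (show 0 ≤ t by linarith)]

lemma eval_symbol_neg_conj (n m k : ℕ) (c : ℝ) (w : ℂ) :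
    (symbol n m k c).eval (-conj w) = conj ((symbol n m k c).eval w) := by
  simp [symbol, symbolProd, Polynomial.eval_prod, map_prod, Complex.conj_ofNat]

lemma natDegree_symbolProd (n m k : ℕ) : (symbolProd n m k).natDegree = 2 * m := by
  have hdeg (b : ℂ) : (Polynomial.C b - Polynomial.X ^ 2).natDegree = 2 := by compute_degree!
  have hne (b : ℂ) : Polynomial.C b - Polynomial.X ^ 2 ≠ 0 :=
    Polynomial.ne_zero_of_natDegree_gt (n := 0) (by rw [hdeg]; exact two_pos)
  simp [symbolProd, Polynomial.natDegree_prod _ _ fun _ _ => hne _, hdeg, mul_comm,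
    -map_pow]

lemma symbol_ne_zero (hm : 0 < m) (n k : ℕ) (c : ℝ) : symbol n m k c ≠ 0 :=
  Polynomial.ne_zero_of_natDegree_gt (n := 0) (by
    rw [symbol, Polynomial.natDegree_add_C, natDegree_symbolProd]
    exact Nat.mul_pos two_pos hm)

lemma exists_comp_X_add_C_eq_mul_X_pow (hP : P ≠ 0) (hw : P.IsRoot w) : ∃ (j : ℕ)
    (R : Polynomial ℂ),
    P.comp (Polynomial.X + Polynomial.C w) = R * Polynomial.X ^ (j + 1) ∧ R.eval 0 ≠ 0 := by
  obtain ⟨q, hq, hdvd⟩ := Polynomial.exists_eq_pow_rootMultiplicity_mul_and_not_dvd P hP w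
  obtain ⟨j, hj⟩ := Nat.exists_eq_add_one.2 ((Polynomial.rootMultiplicity_pos hP).2 hw)
  refine ⟨j, q.comp (Polynomial.X + Polynomial.C w), ?_, ?_⟩
  · rw [hq, hj]
    simp [mul_comm]
  · rw [Polynomial.dvd_iff_isRoot] at hdvd
    simpa using hdvd

lemma memLp_expFn_mul_cut_mul_expFn_mul_pow (hz : 0 < (m + z).re) (a : ℝ) (j : ℕ) :
    MemLp (expFn m * (cut a * (expFn z * idFn ^ j)) : smoothFn) 2 := by
  rw [mul_left_comm (cut a), expFn_mul_expFn_mul]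
  exact memLp_expFn_mul_cut_mul_pow hz a j

-- The two exponentials `e ^ {wt}` and `conj e ^ {-conj w t}` cancel in the pairing.
lemma aeval_cut_mul_expFn_mul_conj
    (hP : P.comp (Polynomial.X + Polynomial.C w) = R * Polynomial.X ^ (j + 1)) (a t : ℝ) :
    aeval D P (cut a * (expFn w * idFn ^ j)) t * conj (expFn (-conj w) t) =
      D (aeval D (R * Polynomial.X ^ j) (cut a * idFn ^ j)) t := by
  have hD : aeval D P (cut a * (expFn w * idFn ^ j)) =
      expFn w * D (aeval D (R * Polynomial.X ^ j) (cut a * idFn ^ j)) := by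
    rw [mul_left_comm, aeval_expFn_mul, hP, ← aeval_X_mul, pow_succ', mul_left_comm]
  have hexp : expFn w t * conj (expFn (-conj w) t) = 1 := by
    rw [expFn_apply, expFn_apply, ← Complex.exp_conj, ← Complex.exp_add, map_mul, map_neg,
      Complex.conj_conj, Complex.conj_ofReal, neg_mul, add_neg_cancel, Complex.exp_zero]
  rw [hD]
  change expFn w t * D (aeval D (R * Polynomial.X ^ j) (cut a * idFn ^ j)) t * _ = _
  rw [mul_right_comm, hexp, one_mul]

theorem not_essentiallySelfAdjoint_rellichOp_of_isRoot [NeZero n] (hw : |w.re| < m)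
    (hr : (symbol n m 0 c).IsRoot w) : ¬EssentiallySelfAdjoint (rellichOp n m c) := by
  intro h
  obtain ⟨hneg, hpos⟩ := abs_lt.1 hw
  have hm : 0 < m := Nat.cast_pos.1 ((abs_nonneg w.re).trans_lt hw)
  obtain ⟨j, R, hR, hR0⟩ := exists_comp_X_add_C_eq_mul_X_pow (symbol_ne_zero hm n 0 c) hr
  have hg : aeval D (symbol n m 0 c) (expFn (-conj w)) = 0 := by
    rw [← mul_one (expFn _), aeval_expFn_mul, aeval_D_one]
    simp [eval_symbol_neg_conj, hr.eq_zero]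
  have hf2 : MemLp (expFn m * (cut 0 * (expFn w * idFn ^ j)) : smoothFn) 2 :=
    memLp_expFn_mul_cut_mul_expFn_mul_pow (by simpa [neg_lt_iff_pos_add'] using hneg) 0 j
  have hg2 : MemLp (expFn m * (cut 2 * expFn (-conj w)) : smoothFn) 2 := by
    simpa using memLp_expFn_mul_cut_mul_expFn_mul_pow (z := -conj w) (by simpa using hpos) 2 0
  have key := h.integral_aeval_cut_mul_eq_zero (aeval_expFn_mul_idFn_pow_eq_zero hR) hg hf2 hg2
  simp only [aeval_cut_mul_expFn_mul_conj hR, integral_D_aeval_cut_mul] at key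
  exact mul_ne_zero (Nat.cast_ne_zero.2 j.factorial_ne_zero) hR0 (neg_eq_zero.1 key)

end Defect

section StripSet

variable {n m k : ℕ} {c : ℝ} {w : ℂ} {I : Set ℝ}

/-- The set of all `c` for which the symbol of `(-Δ)ᵐ + c|x|⁻²ᵐ` on homogeneous polynomials of
degree `k` has a root in the open strip `|Re w| < m`. -/
def stripSet (n m k : ℕ) : Set ℝ := {c | ∃ w : ℂ, |w.re| < m ∧ (symbol n m k c).IsRoot w}

lemma essentiallySelfAdjoint_rellichOp_iff_notMem_stripSet [NeZero n] (hm : 0 < m)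
    (h : ∀ k, stripSet n m k ⊆ stripSet n m 0) :
    EssentiallySelfAdjoint (rellichOp n m c) ↔ c ∉ stripSet n m 0 := by
  refine ⟨fun hc ⟨w, hw, hr⟩ => not_essentiallySelfAdjoint_rellichOp_of_isRoot hw hr hc,
    fun hc => essentiallySelfAdjoint_rellichOp_of_forall_isRoot hm fun k w hr => ?_⟩
  by_contra! hw
  exact hc (h k ⟨w, hw, hr⟩)

lemma isRoot_symbol_iff_eval_symbolProd :
    (symbol n m k c).IsRoot w ↔ (symbolProd n m k).eval w = ((-c : ℝ) : ℂ) := by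
  rw [symbol, Polynomial.IsRoot.def, Polynomial.eval_add, Polynomial.eval_C,
    ← eq_neg_iff_add_eq_zero, Complex.ofReal_neg]

lemma setOf_exists_isRoot_symbol (n m k : ℕ) (p : ℂ → Prop) :
    {c : ℝ | ∃ w, p w ∧ (symbol n m k c).IsRoot w} =
      (fun c : ℝ => ((-c : ℝ) : ℂ)) ⁻¹' ((symbolProd n m k).eval '' {w | p w}) := by
  simp only [isRoot_symbol_iff_eval_symbolProd]
  rfl

lemma isOpen_stripSet (hm : 0 < m) (n k : ℕ) : IsOpen (stripSet n m k) := by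
  have hdeg : (symbolProd n m k).natDegree ≠ 0 := by
    rw [natDegree_symbolProd]
    exact mul_ne_zero two_ne_zero hm.ne'
  rw [stripSet, setOf_exists_isRoot_symbol]
  exact ((Polynomial.isOpenQuotientMap_eval _ hdeg).isOpenMap _
    (isOpen_lt (by fun_prop) continuous_const)).preimage
    (Complex.continuous_ofReal.comp continuous_neg)

lemma isClosed_setOf_exists_isRoot_symbol (n m k : ℕ) :
    IsClosed {c : ℝ | ∃ w : ℂ, |w.re| ≤ m ∧ (symbol n m k c).IsRoot w} := by
  rw [setOf_exists_isRoot_symbol]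
  exact ((symbolProd n m k).isClosedMap_eval _
    (isClosed_le (by fun_prop) continuous_const)).preimage
    (Complex.continuous_ofReal.comp continuous_neg)

lemma subset_stripSet_or_subset_compl (hm : 0 < m) (hI : IsPreconnected I)
    (h : ∀ c ∈ I, ∀ w : ℂ, (symbol n m k c).IsRoot w → |w.re| ≠ m) :
    I ⊆ stripSet n m k ∨ I ⊆ (stripSet n m k)ᶜ := by
  set K := {c : ℝ | ∃ w : ℂ, |w.re| ≤ m ∧ (symbol n m k c).IsRoot w}
  have hsub : stripSet n m k ⊆ K := fun c ⟨w, hw, hr⟩ => ⟨w, hw.le, hr⟩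
  refine (IsPreconnected.subset_or_subset (isOpen_stripSet hm n k)
    (isClosed_setOf_exists_isRoot_symbol n m k).isOpen_compl
    (Set.disjoint_compl_right_iff_subset.2 hsub) (fun c hc => ?_) hI).imp_right
    (·.trans (Set.compl_subset_compl.2 hsub))
  by_cases hcK : c ∈ K
  · obtain ⟨w, hw, hr⟩ := hcK
    exact Or.inl ⟨w, hw.lt_of_ne (h c hc w hr), hr⟩
  · exact Or.inr hcK

lemma im_sq_pow_le_norm_eval_symbolProd (n m k : ℕ) (w : ℂ) :
    (w.im ^ 2) ^ m ≤ ‖(symbolProd n m k).eval w‖ := by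
  have hfactor (a : ℝ) : w.im ^ 2 ≤ ‖(a : ℂ) ^ 2 - w ^ 2‖ := by
    rw [sq_sub_sq, norm_mul, ← sq_abs, sq]
    refine mul_le_mul ?_ ?_ (abs_nonneg _) (norm_nonneg _)
    · simpa using Complex.abs_im_le_norm (a + w)
    · simpa using Complex.abs_im_le_norm (a - w)
  calc (w.im ^ 2) ^ m = ∏ _j ∈ Finset.range m, w.im ^ 2 := by simp
    _ ≤ ∏ j ∈ Finset.range m, ‖((k + n / 2 - m + 2 * j : ℝ) : ℂ) ^ 2 - w ^ 2‖ :=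
      Finset.prod_le_prod (fun _ _ => sq_nonneg _) fun j _ => hfactor _
    _ = ‖(symbolProd n m k).eval w‖ := by simp [symbolProd, Polynomial.eval_prod, norm_prod]

lemma im_sq_pow_le_abs_of_isRoot (h : (symbol n m k c).IsRoot w) : (w.im ^ 2) ^ m ≤ |c| := by
  have := im_sq_pow_le_norm_eval_symbolProd n m k w
  rwa [isRoot_symbol_iff_eval_symbolProd.1 h, Complex.norm_real, Real.norm_eq_abs,
    abs_neg] at this

end StripSet

section Quartic

variable {β γ x : ℝ}

lemma exists_quartic_eq_mul (hne : β ≠ γ) (hβ : quartic β = 0) (hγ : quartic γ = 0) :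
    ∃ d, d * (β * γ) = 629847004905001626921946285352115240960000 ∧ ∀ x, quartic x =
      (x - β) * (x - γ) * (3125 * x ^ 2 + (3125 * (β + γ) - 83914629120000) * x + d) := by
  refine ⟨429438995162964368031744 - 83914629120000 * (β + γ) +
    3125 * (β ^ 2 + β * γ + γ ^ 2), mul_left_cancel₀ (sub_ne_zero.2 hne) ?_,
    fun x => mul_left_cancel₀ (sub_ne_zero.2 hne) ?_⟩
  · unfold quartic at hβ hγ
    linear_combination γ * hβ - β * hγ
  · unfold quartic at hβ hγ ⊢
    linear_combination (x - γ) * hβ - (x - β) * hγ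

lemma exists_quartic_eq_zero : ∃ β ∈ Set.Icc (10436000000 : ℝ) 10437000000,
    ∃ γ ∈ Set.Icc (18324000000 : ℝ) 18325000000, quartic β = 0 ∧ quartic γ = 0 := by
  have hc : Continuous quartic := by
    unfold quartic
    fun_prop
  obtain ⟨β, hβ, hβ0⟩ := intermediate_value_Icc' (by norm_num) hc.continuousOn
    (show (0 : ℝ) ∈ Set.Icc (quartic 10437000000) (quartic 10436000000) by norm_num [quartic])
  obtain ⟨γ, hγ, hγ0⟩ := intermediate_value_Icc (by norm_num) hc.continuousOn
    (show (0 : ℝ) ∈ Set.Icc (quartic 18324000000) (quartic 18325000000) by norm_num [quartic])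
  exact ⟨β, hβ, γ, hγ, hβ0, hγ0⟩

lemma eq_or_eq_of_quartic_eq_zero (hβ : β ∈ Set.Icc 10436000000 10437000000)
    (hγ : γ ∈ Set.Icc 18324000000 18325000000) (hβ0 : quartic β = 0) (hγ0 : quartic γ = 0)
    (hx : quartic x = 0) : x = β ∨ x = γ := by
  obtain ⟨hβ₁, hβ₂⟩ := hβ
  obtain ⟨hγ₁, hγ₂⟩ := hγ
  obtain ⟨d, hd, hfactor⟩ := exists_quartic_eq_mul (by linarith) hβ0 hγ0
  set b := 3125 * (β + γ) - 83914629120000 with hb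
  have hb2 : b ^ 2 ≤ 5966620880000 ^ 2 := pow_le_pow_left₀ (by linarith) (by linarith) 2
  have hβγ : β * γ ≤ 10437000000 * 18325000000 :=
    mul_le_mul hβ₂ hγ₂ (by linarith) (by norm_num)
  have hβγ0 : 0 < β * γ := mul_pos (by linarith) (by linarith)
  have hd3 : 3293000000000000000000 < d := by
    by_contra! h
    nlinarith
  have hquad : 3125 * x ^ 2 + b * x + d ≠ 0 := by nlinarith [sq_nonneg (6250 * x + b)]
  rw [hfactor, mul_eq_zero, or_iff_left hquad, mul_eq_zero, sub_eq_zero, sub_eq_zero] at hx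
  exact hx

end Quartic

section Strip

variable {k p q c : ℝ} {w : ℂ}

/-- The real part of `∏ (aᵢ - √v * I)`. -/
def reProd (a₁ a₂ a₃ a₄ a₅ v : ℝ) : ℝ :=
  a₁ * a₂ * a₃ * a₄ * a₅ - v * (a₁ * a₂ * a₃ + a₁ * a₂ * a₄ + a₁ * a₂ * a₅ + a₁ * a₃ * a₄ +
    a₁ * a₃ * a₅ + a₁ * a₄ * a₅ + a₂ * a₃ * a₄ + a₂ * a₃ * a₅ + a₂ * a₄ * a₅ + a₃ * a₄ * a₅) +
    v ^ 2 * (a₁ + a₂ + a₃ + a₄ + a₅)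

/-- The imaginary part of `∏ (aᵢ - √v * I)` divided by `-√v`. -/
def imProd (a₁ a₂ a₃ a₄ a₅ v : ℝ) : ℝ :=
  a₂ * a₃ * a₄ * a₅ + a₁ * a₃ * a₄ * a₅ + a₁ * a₂ * a₄ * a₅ + a₁ * a₂ * a₃ * a₅ +
    a₁ * a₂ * a₃ * a₄ - v * (a₁ * a₂ + a₁ * a₃ + a₁ * a₄ + a₁ * a₅ + a₂ * a₃ + a₂ * a₄ +
    a₂ * a₅ + a₃ * a₄ + a₃ * a₅ + a₄ * a₅) + v ^ 2

/-- The real part of `symbolProd 20 5 k` at `x + iy`, in terms of `p = x²` and `q = y²`. -/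
def stripRe (k p q : ℝ) : ℝ :=
  reProd ((k + 5) ^ 2 - p + q) ((k + 7) ^ 2 - p + q) ((k + 9) ^ 2 - p + q)
    ((k + 11) ^ 2 - p + q) ((k + 13) ^ 2 - p + q) (4 * p * q)

/-- The factor of `-2xy` in the imaginary part of `symbolProd 20 5 k` at `x + iy`, in terms of
`p = x²` and `q = y²`. -/
def stripIm (k p q : ℝ) : ℝ :=
  imProd ((k + 5) ^ 2 - p + q) ((k + 7) ^ 2 - p + q) ((k + 9) ^ 2 - p + q)
    ((k + 11) ^ 2 - p + q) ((k + 13) ^ 2 - p + q) (4 * p * q)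

lemma prod_sub_mul_I (a₁ a₂ a₃ a₄ a₅ v : ℝ) :
    ((a₁ - v * Complex.I) * (a₂ - v * Complex.I) * (a₃ - v * Complex.I) * (a₄ - v * Complex.I) *
      (a₅ - v * Complex.I) : ℂ) =
    reProd a₁ a₂ a₃ a₄ a₅ (v ^ 2) - (v * imProd a₁ a₂ a₃ a₄ a₅ (v ^ 2) : ℝ) * Complex.I := by
  apply Complex.ext <;>
  · simp only [Complex.mul_re, Complex.mul_im, Complex.sub_re, Complex.sub_im, Complex.ofReal_re,
      Complex.ofReal_im, Complex.I_re, Complex.I_im, reProd, imProd]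
    ring

lemma eval_symbolProd_twenty_five (k : ℕ) (w : ℂ) :
    (symbolProd 20 5 k).eval w = ((k + 5) ^ 2 - w ^ 2) * ((k + 7) ^ 2 - w ^ 2) *
      ((k + 9) ^ 2 - w ^ 2) * ((k + 11) ^ 2 - w ^ 2) * ((k + 13) ^ 2 - w ^ 2) := by
  simp only [symbolProd, Finset.prod_range_succ, Finset.prod_range_zero, Polynomial.eval_mul,
    Polynomial.eval_one, Polynomial.eval_sub, Polynomial.eval_pow, Polynomial.eval_X,
    Polynomial.eval_C]
  push_cast
  ring

lemma eval_symbolProd_eq_stripRe_sub_stripIm (k : ℕ) (w : ℂ) :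
    (symbolProd 20 5 k).eval w = stripRe k (w.re ^ 2) (w.im ^ 2) -
      (2 * w.re * w.im * stripIm k (w.re ^ 2) (w.im ^ 2) : ℝ) * Complex.I := by
  have hw : w ^ 2 = ((w.re ^ 2 - w.im ^ 2 : ℝ) : ℂ) + (2 * w.re * w.im : ℝ) * Complex.I := by
    conv_lhs => rw [← Complex.re_add_im w]
    push_cast
    linear_combination (w.im : ℂ) ^ 2 * Complex.I_sq
  have h := prod_sub_mul_I ((k + 5) ^ 2 - w.re ^ 2 + w.im ^ 2) ((k + 7) ^ 2 - w.re ^ 2 + w.im ^ 2)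
    ((k + 9) ^ 2 - w.re ^ 2 + w.im ^ 2) ((k + 11) ^ 2 - w.re ^ 2 + w.im ^ 2)
    ((k + 13) ^ 2 - w.re ^ 2 + w.im ^ 2) (2 * w.re * w.im)
  rw [show (2 * w.re * w.im) ^ 2 = 4 * w.re ^ 2 * w.im ^ 2 by ring] at h
  rw [stripRe, stripIm, ← h, eval_symbolProd_twenty_five, hw]
  push_cast
  ring

lemma isRoot_symbol_iff {k : ℕ} : (symbol 20 5 k c).IsRoot w ↔
    stripRe k (w.re ^ 2) (w.im ^ 2) = -c ∧
      w.re * w.im * stripIm k (w.re ^ 2) (w.im ^ 2) = 0 := by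
  rw [isRoot_symbol_iff_eval_symbolProd, eval_symbolProd_eq_stripRe_sub_stripIm, Complex.ext_iff]
  simp [mul_assoc]

lemma stripRe_pos (hk : 0 ≤ k) (hp : p < 25) (hq : 0 ≤ q) (h : p * q = 0) :
    0 < stripRe k p q := by
  have hpos {a : ℝ} (ha : 5 ≤ a) : 0 < (k + a) ^ 2 - p + q := by nlinarith
  have h5 := hpos (a := 5) (by norm_num)
  have h7 := hpos (a := 7) (by norm_num)
  have h9 := hpos (a := 9) (by norm_num)
  have h11 := hpos (a := 11) (by norm_num)
  have h13 := hpos (a := 13) (by norm_num)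
  rw [stripRe, mul_assoc 4, h, reProd]
  simp only [mul_zero, zero_mul, sub_zero, add_zero, zero_pow two_ne_zero]
  positivity

lemma re_sq_lt_of_abs_re_lt (hw : |w.re| < (5 : ℕ)) : w.re ^ 2 < 25 := by
  have h := sq_lt_sq' (abs_lt.1 hw).1 (abs_lt.1 hw).2
  norm_num at h
  exact h

lemma stripIm_eq_zero_of_isRoot {k : ℕ} (hc : 0 ≤ c) (hw : |w.re| < (5 : ℕ))
    (hr : (symbol 20 5 k c).IsRoot w) : stripIm k (w.re ^ 2) (w.im ^ 2) = 0 := by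
  obtain ⟨hRe, hIm⟩ := isRoot_symbol_iff.1 hr
  refine (mul_eq_zero.1 hIm).resolve_left fun h0 => ?_
  have := stripRe_pos k.cast_nonneg (re_sq_lt_of_abs_re_lt hw) (sq_nonneg w.im)
    (by rw [← mul_pow, h0, zero_pow two_ne_zero])
  linarith

lemma stripIm_pos_of_one_le (hk : 1 ≤ k) (hp : p ≤ 25) (hq : 0 ≤ q) : 0 < stripIm k p q := by
  -- As a polynomial in `l`, `d` and `q`, all coefficients are positive.
  obtain ⟨l, hl, rfl⟩ : ∃ l, 0 ≤ l ∧ k = l + 1 := ⟨k - 1, by linarith, by ring⟩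
  obtain ⟨d, hd, rfl⟩ : ∃ d, 0 ≤ d ∧ p = 25 - d := ⟨25 - p, by linarith, by ring⟩
  simp only [stripIm, imProd]
  ring_nf
  positivity

lemma stripSet_succ_subset_Iio (k : ℕ) : stripSet 20 5 (k + 1) ⊆ Set.Iio 0 := by
  rintro c ⟨w, hw, hr⟩
  by_contra! hc
  have h := stripIm_eq_zero_of_isRoot (Set.notMem_Iio.1 hc) hw hr
  have hk : (1 : ℝ) ≤ (k + 1 : ℕ) := by simp
  exact (stripIm_pos_of_one_le hk (re_sq_lt_of_abs_re_lt hw).le (sq_nonneg _)).ne' h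

end Strip

section QuarticThreshold

variable {p q c β γ : ℝ} {w : ℂ} {I : Set ℝ}

-- `quartic` is, up to a constant, the resultant of `stripIm 0 25 q` and `stripRe 0 25 q + z` with
-- respect to `q`.
lemma quartic_neg_stripRe_eq_zero (h : stripIm 0 25 q = 0) : quartic (-stripRe 0 25 q) = 0 := by
  simp only [stripIm, imProd] at h
  simp only [quartic, stripRe, reProd]
  linear_combination
    (33900185500856517377147440988160000 + 8050607559918003492542707295846400 * q +
      955087823899862412593616874635264 * q ^ 2 + 65780110822750865402694834585600 * q ^ 3 +
      2942186332165169755864650743808 * q ^ 4 + 90576275829158083010054062080 * q ^ 5 +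
      1989770001475948577787215872 * q ^ 6 + 31681003260673163672944640 * q ^ 7 +
      362777352532320322584576 * q ^ 8 + 2852066640290270740480 * q ^ 9 +
      13457871575589294080 * q ^ 10 + 18273792135628800 * q ^ 11 - 143802686521600 * q ^ 12 -
      344038784000 * q ^ 13 + 1563942000 * q ^ 14 - 1735000 * q ^ 15 + 625 * q ^ 16) * h

lemma quartic_eq_zero_of_isRoot (hc : 0 < c) (hw : |w.re| = 5)
    (hr : (symbol 20 5 0 c).IsRoot w) : quartic c = 0 := by
  obtain ⟨hRe, hIm⟩ := isRoot_symbol_iff.1 hr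
  have hp : w.re ^ 2 = 25 := by
    rw [← sq_abs, hw]
    norm_num
  have hre : w.re ≠ 0 := fun h => by norm_num [h] at hp
  rw [hp, Nat.cast_zero] at hRe hIm
  have him : w.im ≠ 0 := fun h => by
    have : stripRe 0 25 (w.im ^ 2) = 0 := by norm_num [h, stripRe, reProd]
    linarith
  rw [← neg_neg c, ← hRe]
  exact quartic_neg_stripRe_eq_zero ((mul_eq_zero.1 hIm).resolve_left (mul_ne_zero hre him))

lemma stripIm_zero_pos (hp : p ≤ 25) (hq : 0 ≤ q) (h : q ≤ 1 ∨ 1000 ≤ q) :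
    0 < stripIm 0 p q := by
  obtain ⟨t, ht⟩ : ∃ t, t = 25 - p + q := ⟨_, rfl⟩
  have htq : q ≤ t := by linarith
  have ht0 : 0 ≤ t := hq.trans htq
  have hexpand : stripIm 0 p q =
      (18579456 + 2856960 * t + 103104 * t ^ 2 + 1280 * t ^ 3 + 5 * t ^ 4) -
        4 * p * q * (34368 + 1280 * t + 10 * t ^ 2) + (4 * p * q) ^ 2 := by
    simp only [stripIm, imProd, ht]
    ring
  have hpq : 4 * p * q * (34368 + 1280 * t + 10 * t ^ 2) ≤
      100 * q * (34368 + 1280 * t + 10 * t ^ 2) := by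
    gcongr
    linarith
  have hqt : 100 * q ≤ 100 + t ^ 2 / 10 := by
    rcases h with h | h <;> nlinarith
  have hbound : 100 * q * (34368 + 1280 * t + 10 * t ^ 2) ≤
      (100 + t ^ 2 / 10) * (34368 + 1280 * t + 10 * t ^ 2) := by gcongr
  have hpos : 0 < 15142656 + 2728960 * t + 98667.2 * t ^ 2 + 1152 * t ^ 3 + 4 * t ^ 4 +
    (4 * p * q) ^ 2 := by positivity
  linarith

lemma im_sq_mem_Ioo (hc : 0 ≤ c) (hw : |w.re| < (5 : ℕ)) (hr : (symbol 20 5 0 c).IsRoot w) :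
    w.im ^ 2 ∈ Set.Ioo 1 1000 := by
  have h0 := stripIm_eq_zero_of_isRoot hc hw hr
  rw [Nat.cast_zero] at h0
  by_contra h
  rw [Set.mem_Ioo, not_and_or, not_lt, not_lt] at h
  exact (stripIm_zero_pos (re_sq_lt_of_abs_re_lt hw).le (sq_nonneg _) h).ne' h0

lemma one_lt_of_mem_stripSet (hc : 0 ≤ c) (h : c ∈ stripSet 20 5 0) : 1 < c := by
  obtain ⟨w, hw, hr⟩ := h
  calc 1 < (w.im ^ 2) ^ 5 := one_lt_pow₀ (im_sq_mem_Ioo hc hw hr).1 (by norm_num)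
    _ ≤ |c| := im_sq_pow_le_abs_of_isRoot hr
    _ = c := abs_of_nonneg hc

lemma bddAbove_stripSet : BddAbove (stripSet 20 5 0) := by
  obtain ⟨M, hM⟩ := (isCompact_closedBall (0 : ℂ) 1000).exists_bound_of_continuousOn
    (symbolProd 20 5 0).continuous.continuousOn
  refine ⟨max 0 M, fun c ⟨w, hw, hr⟩ => (le_total c 0).elim le_max_of_le_left fun hc => ?_⟩
  have him : |w.im| < 100 := by
    rw [← sq_lt_sq₀ (abs_nonneg _) (by norm_num), sq_abs]
    linarith [(im_sq_mem_Ioo hc hw hr).2]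
  have hball : w ∈ Metric.closedBall 0 1000 := by
    rw [mem_closedBall_zero_iff]
    norm_num at hw
    linarith [Complex.norm_le_abs_re_add_abs_im w]
  have hcM := hM w hball
  rw [isRoot_symbol_iff_eval_symbolProd.1 hr, Complex.norm_real, norm_neg] at hcM
  exact le_max_of_le_right ((le_abs_self c).trans hcM)

lemma exists_stripIm_eq_zero : ∃ p ∈ Set.Ico (24 : ℝ) 25, stripIm 0 p 28 = 0 := by
  have hc : ContinuousOn (fun p => stripIm 0 p 28) (Set.Icc 24 25) := by
    unfold stripIm imProd
    fun_prop
  exact intermediate_value_Ico' (by norm_num) hc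
    (show (0 : ℝ) ∈ Set.Ioc (stripIm 0 25 28) (stripIm 0 24 28) by norm_num [stripIm, imProd])

lemma stripRe_neg (hp : p ∈ Set.Icc 24 25) : stripRe 0 p 28 < 0 := by
  obtain ⟨d, rfl⟩ : ∃ d, p = 25 - d := ⟨25 - p, by ring⟩
  have hd0 : 0 ≤ d := by linarith [hp.2]
  have hd1 : d ≤ 1 := by linarith [hp.1]
  have hexpand : stripRe 0 (25 - d) 28 = -10697637888 - 17833984 * d + 27170560 * d ^ 2 +
      421888 * d ^ 3 + 1580 * d ^ 4 + d ^ 5 := by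
    simp only [stripRe, reProd]
    ring
  have hpow (j : ℕ) : d ^ j ≤ 1 := pow_le_one₀ hd0 hd1
  linarith [hpow 2, hpow 3, hpow 4, hpow 5]

lemma exists_pos_mem_stripSet : ∃ c ∈ stripSet 20 5 0, 0 < c := by
  obtain ⟨p, hp, hIm⟩ := exists_stripIm_eq_zero
  have hp0 : 0 ≤ p := by linarith [hp.1]
  refine ⟨-stripRe 0 p 28, ⟨⟨√p, √28⟩, ?_, isRoot_symbol_iff.2 ?_⟩,
    neg_pos.2 (stripRe_neg ⟨hp.1, hp.2.le⟩)⟩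
  · rw [abs_of_nonneg (Real.sqrt_nonneg p), Real.sqrt_lt' (by norm_num)]
    norm_num [hp.2]
  · simp [Real.sq_sqrt hp0, hIm]

lemma exists_lt_prod_sub_eq (hc : c < 0) :
    ∃ s < 25, (25 - s) * (49 - s) * (81 - s) * (121 - s) * (169 - s) = -c := by
  obtain ⟨b, hb, rfl⟩ : ∃ b, 0 < b ∧ c = -b := ⟨-c, by linarith, by ring⟩
  have hcont : ContinuousOn (fun s : ℝ => (25 - s) * (49 - s) * (81 - s) * (121 - s) * (169 - s))
      (Set.Icc (-b) 25) := by fun_prop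
  have hle : b ≤ (25 - -b) * (49 - -b) * (81 - -b) * (121 - -b) * (169 - -b) := by
    rw [← sub_nonneg]
    ring_nf
    positivity
  obtain ⟨s, hs, h⟩ := intermediate_value_Ico' (by linarith) hcont ⟨by simpa using hb, hle⟩
  exact ⟨s, hs.2, by simpa using h⟩

lemma mem_stripSet_of_neg (hc : c < 0) : c ∈ stripSet 20 5 0 := by
  obtain ⟨s, hs, h⟩ := exists_lt_prod_sub_eq hc
  obtain ⟨w, hw⟩ := IsAlgClosed.exists_pow_nat_eq (s : ℂ) (n := 2) two_pos
  refine ⟨w, ?_, isRoot_symbol_iff_eval_symbolProd.2 ?_⟩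
  · have hre : w.re ^ 2 - w.im ^ 2 = s := by simpa [pow_two] using congrArg Complex.re hw
    have him : w.re * w.im = 0 := by
      have := congrArg Complex.im hw
      simp only [pow_two, Complex.mul_im, Complex.ofReal_im] at this
      linarith
    rw [← sq_lt_sq₀ (abs_nonneg _) (by norm_num), sq_abs]
    rcases mul_eq_zero.1 him with hre0 | him0
    · norm_num [hre0]
    · have hre_sq : w.re ^ 2 = s := by rw [← hre, him0, zero_pow two_ne_zero, sub_zero]
      norm_num [hre_sq, hs]
  · rw [eval_symbolProd_twenty_five, hw, ← h]
    push_cast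
    norm_num

lemma stripSet_subset_stripSet_zero (k : ℕ) : stripSet 20 5 k ⊆ stripSet 20 5 0 := by
  rcases k with _ | k
  · rfl
  · exact fun c hc => mem_stripSet_of_neg (stripSet_succ_subset_Iio k hc)

lemma subset_stripSet_or_subset_compl_of_quartic_ne_zero (hI : IsPreconnected I)
    (hpos : ∀ c ∈ I, 0 < c) (hq : ∀ c ∈ I, quartic c ≠ 0) :
    I ⊆ stripSet 20 5 0 ∨ I ⊆ (stripSet 20 5 0)ᶜ :=
  subset_stripSet_or_subset_compl (by norm_num) hI fun c hc w hr hw =>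
    hq c hc (quartic_eq_zero_of_isRoot (hpos c hc) (by simpa using hw) hr)

lemma Icc_subset_compl_stripSet (hβ : 1 < β) (h : ∀ c ∈ Set.Ioo 0 β, quartic c ≠ 0) :
    Set.Icc 0 β ⊆ (stripSet 20 5 0)ᶜ := by
  have hIoo : Set.Ioo 0 β ⊆ (stripSet 20 5 0)ᶜ :=
    (subset_stripSet_or_subset_compl_of_quartic_ne_zero isPreconnected_Ioo (fun c hc => hc.1)
      h).resolve_left fun hsub => by
        have := one_lt_of_mem_stripSet (by norm_num) (hsub (show 1 / 2 ∈ Set.Ioo 0 β from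
          ⟨by norm_num, by linarith⟩))
        norm_num at this
  rw [← closure_Ioo (by linarith : (0 : ℝ) ≠ β)]
  exact closure_minimal hIoo (isOpen_stripSet (by norm_num) 20 0).isClosed_compl

lemma Ici_subset_compl_stripSet (hγ : 0 < γ) (h : ∀ c ∈ Set.Ioi γ, quartic c ≠ 0) :
    Set.Ici γ ⊆ (stripSet 20 5 0)ᶜ := by
  have hIoi : Set.Ioi γ ⊆ (stripSet 20 5 0)ᶜ :=
    (subset_stripSet_or_subset_compl_of_quartic_ne_zero isPreconnected_Ioi
      (fun c hc => hγ.trans hc) h).resolve_left fun hsub =>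
        not_bddAbove_Ioi γ (bddAbove_stripSet.mono hsub)
  rw [← closure_Ioi γ]
  exact closure_minimal hIoi (isOpen_stripSet (by norm_num) 20 0).isClosed_compl

lemma compl_stripSet_eq (hβ : 1 < β) (hβγ : β < γ) (h : ∀ x, quartic x = 0 → x = β ∨ x = γ) :
    (stripSet 20 5 0)ᶜ = Set.Icc 0 β ∪ Set.Ici γ := by
  have hlow : Set.Icc 0 β ⊆ (stripSet 20 5 0)ᶜ := Icc_subset_compl_stripSet hβ fun c hc hq =>
    (h c hq).elim hc.2.ne (hc.2.trans hβγ).ne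
  have hhigh : Set.Ici γ ⊆ (stripSet 20 5 0)ᶜ :=
    Ici_subset_compl_stripSet (by linarith) fun c (hc : γ < c) hq =>
      (h c hq).elim (hβγ.trans hc).ne' hc.ne'
  refine (Set.union_subset hlow hhigh).antisymm' fun c hc => ?_
  by_contra hcon
  rw [Set.mem_union, Set.mem_Icc, Set.mem_Ici, not_or, not_and, not_le, not_le] at hcon
  obtain ⟨d, hd, hd0⟩ := exists_pos_mem_stripSet
  have hdβγ : d ∈ Set.Ioo β γ :=
    ⟨not_le.1 fun hdβ => hlow ⟨hd0.le, hdβ⟩ hd, not_le.1 fun hγd => hhigh hγd hd⟩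
  have hc0 : 0 ≤ c := not_lt.1 fun hneg => hc (mem_stripSet_of_neg hneg)
  refine (subset_stripSet_or_subset_compl_of_quartic_ne_zero isPreconnected_Ioo
    (fun c hc => by linarith [hc.1]) fun c hc hq => ?_).elim
    (fun hsub => hc (hsub ⟨hcon.1 hc0, hcon.2⟩)) fun hsub => hsub hdβγ hd
  exact (h c hq).elim hc.1.ne' hc.2.ne

end QuarticThreshold

theorem stmt12 :
    ∃ β γ : ℝ, β < γ ∧ quartic β = 0 ∧ quartic γ = 0 ∧
      (∀ x : ℝ, quartic x = 0 → x = β ∨ x = γ) ∧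
      ∀ c : ℝ, EssentiallySelfAdjoint (T5op c) ↔ c ∈ Set.Icc 0 β ∪ Set.Ici γ := by
  obtain ⟨β, hβ, γ, hγ, hβ0, hγ0⟩ := exists_quartic_eq_zero
  have hroots (x : ℝ) (hx : quartic x = 0) : x = β ∨ x = γ :=
    eq_or_eq_of_quartic_eq_zero hβ hγ hβ0 hγ0 hx
  have hβγ : β < γ := by linarith [hβ.2, hγ.1]
  refine ⟨β, γ, hβγ, hβ0, hγ0, hroots, fun c => ?_⟩
  rw [← compl_stripSet_eq (by linarith [hβ.1]) hβγ hroots]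
  exact essentiallySelfAdjoint_rellichOp_iff_notMem_stripSet (by norm_num)
    stripSet_subset_stripSet_zero
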